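/- arXiv:2402.07061 — 2 statements merged into one kernel-verified Lean document; each statement's English description precedes it below -/
import Mathlib

section
/- For every integer k ≥ 5, TSP/k-Opt has the all-exp property: there are infinitely many pairs of a TSP instance and an initial tour such that every maximal improving k-swap sequence starting from the initial tour has length exponential in the number of vertices of the instance; equivalently, the k-Opt algorithm started from this tour needs an exponential number of iterations under every pivot rule. -/
/-!
Statement 0: For every integer k ≥ 5, TSP/k-Opt has the all-exp property.

A TSP instance on `Fin n` is given by a nonnegative weight function on `Sym2 (Fin n)`
(the underlying graph being complete). A tour is a Hamiltonian cycle, modelled as a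
permutation which is a single cycle through all vertices.
-/

open Finset

variable {V : Type*} [Fintype V] [DecidableEq V]

/-- A tour: a permutation of the vertices forming one cycle through all of them. -/
def IsTour (σ : Equiv.Perm V) : Prop :=
  σ.IsCycle ∧ σ.support = Finset.univ

/-- The set of edges used by a tour. -/
def tourEdges (σ : Equiv.Perm V) : Finset (Sym2 V) :=
  Finset.univ.image fun v => s(v, σ v)

/-- The total weight of a tour. -/
def tourWeight (w : Sym2 V → ℝ) (σ : Equiv.Perm V) : ℝ :=
  ∑ e ∈ tourEdges σ, w e

/-- A `k`-swap: replace at most `k` edges of the tour (with equally many new edges)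
so that again a tour results. -/
def IsKSwap (k : ℕ) (σ σ' : Equiv.Perm V) : Prop :=
  IsTour σ' ∧ (tourEdges σ \ tourEdges σ').card ≤ k

/-- An improving `k`-swap strictly decreases the total tour weight. -/
def ImprovingKSwap (w : Sym2 V → ℝ) (k : ℕ) (σ σ' : Equiv.Perm V) : Prop :=
  IsKSwap k σ σ' ∧ tourWeight w σ' < tourWeight w σ

/-- A k-Opt locally optimal tour: no improving `k`-swap exists. -/
def IsLocalOpt (w : Sym2 V → ℝ) (k : ℕ) (σ : Equiv.Perm V) : Prop :=
  ∀ σ', ¬ ImprovingKSwap w k σ σ'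

/-- Improving `k`-swap sequences starting from a given tour. -/
def ImprovingSwapSeq (w : Sym2 V → ℝ) (k : ℕ) : Equiv.Perm V → List (Equiv.Perm V) → Prop
  | _, [] => True
  | σ, τ :: l => ImprovingKSwap w k σ τ ∧ ImprovingSwapSeq w k τ l

/-- A maximal improving `k`-swap sequence: an improving sequence ending at a
k-Opt locally optimal tour. -/
def MaximalImprovingSwapSeq (w : Sym2 V → ℝ) (k : ℕ) (σ₀ : Equiv.Perm V)
    (l : List (Equiv.Perm V)) : Prop :=
  ImprovingSwapSeq w k σ₀ l ∧ IsLocalOpt w k ((σ₀ :: l).getLast (List.cons_ne_nil _ _))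

/-- The all-exp property for TSP/k-Opt: there is a constant `c > 1` such that for
infinitely many sizes `n` there are a TSP instance on `n` vertices and an initial tour
from which every maximal improving `k`-swap sequence has length at least `c ^ n`,
i.e. the k-Opt algorithm needs exponentially many iterations under every pivot rule. -/
def TSPKOptAllExp (k : ℕ) : Prop :=
  ∃ c : ℝ, 1 < c ∧
    ∀ N : ℕ, ∃ n : ℕ, N ≤ n ∧
      ∃ (w : Sym2 (Fin n) → ℝ) (τ₀ : Equiv.Perm (Fin n)),
        (∀ e, 0 ≤ w e) ∧ IsTour τ₀ ∧
        ∀ l : List (Equiv.Perm (Fin n)),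
          MaximalImprovingSwapSeq w k τ₀ l → c ^ n ≤ (l.length : ℝ)


namespace GearTSP

section generic

variable {V : Type*} [Fintype V] [DecidableEq V]

lemma IsTour.ne {σ : Equiv.Perm V} (h : IsTour σ) (v : V) : σ v ≠ v := by
  have := Finset.mem_univ v
  rw [← h.2] at this
  exact Equiv.Perm.mem_support.1 this

lemma IsTour.closed {σ : Equiv.Perm V} (h : IsTour σ) (S : V → Prop) {v : V} (hv : S v)
    (hS : ∀ x, S x → S (σ x)) (u : V) : S u := by
  obtain ⟨i, hi⟩ := (h.1.sameCycle (IsTour.ne h v) (IsTour.ne h u)).exists_nat_pow_eq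
  have key : ∀ n : ℕ, S ((σ ^ n) v) := by
    intro n
    induction n with
    | zero => simpa using hv
    | succ n ih =>
      rw [pow_succ', Equiv.Perm.mul_apply]
      exact hS _ ih
  rw [← hi]
  exact key i

lemma isTour_of_sameCycle {σ : Equiv.Perm V} (v : V) (hv : σ v ≠ v)
    (h : ∀ u, σ.SameCycle u v) : IsTour σ := by
  refine ⟨⟨v, hv, fun y _ => (h y).symm⟩, ?_⟩
  ext u
  simp only [Equiv.Perm.mem_support, Finset.mem_univ, iff_true]
  intro hu
  have := (h u).apply_eq_self_iff
  exact hv (this.1 hu)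

lemma IsTour.sq_ne {σ : Equiv.Perm V} (h : IsTour σ) (hc : 3 ≤ Fintype.card V) (v : V) :
    σ (σ v) ≠ v := by
  intro hv
  have := IsTour.closed h (fun x => x = v ∨ x = σ v) (v := v) (Or.inl rfl)
    (by rintro x (rfl | rfl)
        · exact Or.inr rfl
        · exact Or.inl hv)
  have h2 : (Finset.univ : Finset V) ⊆ {v, σ v} := by
    intro x _
    simpa using this x
  have h3 := Finset.card_le_card h2
  have h4 := Finset.card_le_two (a := v) (b := σ v)
  rw [Finset.card_univ] at h3
  omega

lemma mem_tourEdges {σ : Equiv.Perm V} {u v : V} :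
    s(u, v) ∈ tourEdges σ ↔ σ u = v ∨ σ v = u := by
  unfold tourEdges
  simp only [Finset.mem_image, Finset.mem_univ, true_and, Sym2.eq_iff]
  constructor
  · rintro ⟨x, ⟨rfl, rfl⟩ | ⟨rfl, rfl⟩⟩
    · exact Or.inl rfl
    · exact Or.inr rfl
  · rintro (rfl | rfl)
    · exact ⟨u, Or.inl ⟨rfl, rfl⟩⟩
    · exact ⟨v, Or.inr ⟨rfl, rfl⟩⟩

lemma edge_injective {σ : Equiv.Perm V} (h : IsTour σ) (hc : 3 ≤ Fintype.card V) :
    Function.Injective (fun v => s(v, σ v)) := by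
  intro u v huv
  rcases Sym2.eq_iff.1 huv with ⟨h1, _⟩ | ⟨h1, h2⟩
  · exact h1
  · exfalso
    apply IsTour.sq_ne h hc v
    rw [← h1, h2]

lemma card_tourEdges {σ : Equiv.Perm V} (h : IsTour σ) (hc : 3 ≤ Fintype.card V) :
    (tourEdges σ).card = Fintype.card V := by
  unfold tourEdges
  rw [Finset.card_image_of_injective _ (edge_injective h hc), Finset.card_univ]

lemma tourWeight_eq {σ : Equiv.Perm V} (h : IsTour σ) (hc : 3 ≤ Fintype.card V)
    (w : Sym2 V → ℝ) : tourWeight w σ = ∑ v, w s(v, σ v) := by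
  unfold tourWeight tourEdges
  rw [Finset.sum_image]
  intro a _ b _ hab
  exact edge_injective h hc hab

/-- If `p ≠ q` are neighbours of `v` then they are the only ones. -/
lemma nbr_of_two {σ : Equiv.Perm V} {v p q u : V}
    (hpq : p ≠ q) (hp : s(v, p) ∈ tourEdges σ) (hq : s(v, q) ∈ tourEdges σ)
    (hu : s(v, u) ∈ tourEdges σ) : u = p ∨ u = q := by
  rw [mem_tourEdges] at *
  have inj : ∀ x y, σ x = v → σ y = v → x = y := fun x y hx hy => σ.injective (hx.trans hy.symm)
  rcases hp with hp | hp <;> rcases hq with hq | hq <;> rcases hu with hu | hu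
  · exact absurd (hp.symm.trans hq) hpq
  · exact absurd (hp.symm.trans hq) hpq
  · exact Or.inl (hu.symm.trans hp)
  · exact Or.inr (inj _ _ hu hq)
  · exact Or.inr (hu.symm.trans hq)
  · exact Or.inl (inj _ _ hu hp)
  · exact absurd (inj _ _ hp hq) hpq
  · exact absurd (inj _ _ hp hq) hpq

/-- If one of two candidate neighbours is not a neighbour, there is a third one. -/
lemma exists_other_nbr {σ : Equiv.Perm V} (h : IsTour σ) (hc : 3 ≤ Fintype.card V) {v p q : V}
    (hp : s(v, p) ∉ tourEdges σ) : ∃ u, s(v, u) ∈ tourEdges σ ∧ u ≠ p ∧ u ≠ q := by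
  have h1 : s(v, σ v) ∈ tourEdges σ := mem_tourEdges.2 (Or.inl rfl)
  have h2 : s(v, σ.symm v) ∈ tourEdges σ := mem_tourEdges.2 (Or.inr (by simp))
  have h3 : σ v ≠ σ.symm v := by
    intro h3
    apply IsTour.sq_ne h hc v
    rw [h3]; simp
  by_cases hq : σ v = q
  · refine ⟨σ.symm v, h2, ?_, ?_⟩
    · rintro rfl; exact hp h2
    · rw [← hq]; exact h3.symm
  · refine ⟨σ v, h1, ?_, hq⟩
    rintro rfl; exact hp h1

end generic

/-- Vertices: a special vertex and for each gear two classes of vertices. -/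
inductive Vx (m P : ℕ) : Type
  | s : Vx m P
  | lam (i : Fin (m + 1)) (a : ZMod P) : Vx m P
  | mu (i : Fin (m + 1)) (a : ZMod P) : Vx m P
  deriving DecidableEq

def vxEquiv (m P : ℕ) :
    Vx m P ≃ Option ((Fin (m + 1) × ZMod P) ⊕ (Fin (m + 1) × ZMod P)) where
  toFun v := match v with
    | .s => none
    | .lam i a => some (.inl (i, a))
    | .mu i a => some (.inr (i, a))
  invFun v := match v with
    | none => .s
    | some (.inl (i, a)) => .lam i a
    | some (.inr (i, a)) => .mu i a
  left_inv v := by cases v <;> rfl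
  right_inv v := by rcases v with _ | ⟨_, _⟩ | ⟨_, _⟩ <;> rfl

instance (m P : ℕ) [NeZero P] : Fintype (Vx m P) := Fintype.ofEquiv _ (vxEquiv m P).symm

lemma card_vx (m P : ℕ) [NeZero P] : Fintype.card (Vx m P) = (m + 1) * (2 * P) + 1 := by
  rw [Fintype.card_congr (vxEquiv m P)]
  simp [ZMod.card]
  ring

lemma sum_vx (m P : ℕ) [NeZero P] (f : Vx m P → ℝ) :
    ∑ v, f v = f .s + (∑ i, ∑ a, f (.lam i a) + ∑ i, ∑ a, f (.mu i a)) := by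
  rw [← Equiv.sum_comp (vxEquiv m P).symm f, Fintype.sum_option, Fintype.sum_sum_type,
    Fintype.sum_prod_type, Fintype.sum_prod_type]
  rfl

section tourdef

variable {m P : ℕ}

/-- where the lower terminal of gear `i` is linked to -/
def lnk (m P : ℕ) (b : ℕ → ZMod P) (i : Fin (m + 1)) : Vx m P :=
  if h : i.val < m then .mu ⟨i.val + 1, by omega⟩ (b (i.val + 1)) else .s

/-- where the upper terminal of gear `i` is linked to -/
def unk (m P : ℕ) (a : ℕ → ZMod P) (i : Fin (m + 1)) : Vx m P :=
  if i.val = 0 then .s else .lam ⟨i.val - 1, by omega⟩ (a (i.val - 1))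

def nxt (a b : ℕ → ZMod P) : Vx m P → Vx m P
  | .s => .mu 0 (b 0)
  | .mu i x => .lam i (x + 1 - (a i - b i))
  | .lam i x => if x = a i then lnk m P b i else .mu i (x - (a i - b i))

def prv (a b : ℕ → ZMod P) : Vx m P → Vx m P
  | .s => .lam (Fin.last m) (a m)
  | .lam i y => .mu i (y - 1 + (a i - b i))
  | .mu i y => if y = b i then unk m P a i else .lam i (y + (a i - b i))

def tour (m : ℕ) (a b : ℕ → ZMod P) : Equiv.Perm (Vx m P) where
  toFun := nxt a b
  invFun := prv a b
  left_inv v := by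
    rcases v with _ | ⟨i, x⟩ | ⟨i, x⟩
    · simp [nxt, prv, unk]
    · by_cases hx : x = a i
      · subst hx
        by_cases h : i.val < m
        · simp [nxt, prv, lnk, unk, h]
        · have : i = Fin.last m := Fin.ext (by simp; omega)
          subst this
          simp [nxt, prv, lnk]
      · have : ¬ (x - (a i - b i) = b i) := by
          intro h; apply hx; linear_combination h
        simp [nxt, prv, hx, this]
    · simp only [nxt, prv]
      congr 1
      ring
  right_inv v := by
    rcases v with _ | ⟨i, x⟩ | ⟨i, x⟩
    · simp [nxt, prv, lnk]
    · simp only [nxt, prv]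
      congr 1
      ring
    · by_cases hx : x = b i
      · subst hx
        by_cases h : i.val = 0
        · have : i = 0 := Fin.ext (by simpa using h)
          subst this
          simp [nxt, prv, unk]
        · have h1 : i.val - 1 < m := by omega
          have h2 : i.val - 1 + 1 = i.val := by omega
          simp [nxt, prv, lnk, unk, h, h1, h2]
      · have : ¬ (x + (a i - b i) = a i) := by
          intro h; apply hx; linear_combination h
        simp only [prv, hx, if_false, nxt, this]
        congr 1
        ring

@[simp] lemma tour_s (a b : ℕ → ZMod P) : tour m a b .s = .mu 0 (b 0) := rfl
@[simp] lemma tour_mu (a b : ℕ → ZMod P) (i : Fin (m + 1)) (x : ZMod P) :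
    tour m a b (.mu i x) = .lam i (x + 1 - (a i - b i)) := rfl
lemma tour_lam (a b : ℕ → ZMod P) (i : Fin (m + 1)) (x : ZMod P) :
    tour m a b (.lam i x) = if x = a i then lnk m P b i else .mu i (x - (a i - b i)) := rfl

lemma isTour_tour [NeZero P] (a b : ℕ → ZMod P)
    (hab : ∀ i : Fin (m + 1), a i - b i = 0 ∨ a i - b i = 1) : IsTour (tour m a b) := by
  apply isTour_of_sameCycle (Vx.s)
  · simp
  have step : ∀ v, (tour m a b).SameCycle v (tour m a b v) := fun v => by
    rw [Equiv.Perm.sameCycle_apply_right]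
  -- lower vertices reach the lower terminal
  have hlam : ∀ (i : Fin (m + 1)) (x : ZMod P),
      (tour m a b).SameCycle (.lam i x) (.lam i (a i)) := by
    intro i x
    have hs : ∀ y, y ≠ a i →
        (tour m a b).SameCycle (.lam i y) (.lam i (y + 1 - 2 * (a i - b i))) := by
      intro y hy
      have h1 := step (.lam i y)
      rw [tour_lam, if_neg hy] at h1
      have h2 := h1.trans (step _)
      rw [tour_mu] at h2
      convert h2 using 2
      ring
    rcases hab i with h | h
    · have : ∀ q : ℕ, (tour m a b).SameCycle (.lam i (a i - q)) (.lam i (a i)) := by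
        intro q
        induction q with
        | zero => simpa using Equiv.Perm.SameCycle.refl _ _
        | succ q ih =>
          by_cases hq : a i - ((q + 1 : ℕ) : ZMod P) = a i
          · rw [hq]
          · have := hs _ hq
            rw [h] at this
            refine this.trans ?_
            convert ih using 2
            push_cast; ring
      have h3 := this (a i - x).val
      rw [ZMod.natCast_val, ZMod.cast_id] at h3
      simpa using h3
    · have : ∀ q : ℕ, (tour m a b).SameCycle (.lam i (a i + q)) (.lam i (a i)) := by
        intro q
        induction q with
        | zero => simpa using Equiv.Perm.SameCycle.refl _ _
        | succ q ih =>
          by_cases hq : a i + ((q + 1 : ℕ) : ZMod P) = a i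
          · rw [hq]
          · have := hs _ hq
            rw [h] at this
            refine this.trans ?_
            convert ih using 2
            push_cast; ring
      have h3 := this (x - a i).val
      rw [ZMod.natCast_val, ZMod.cast_id] at h3
      simpa using h3
  have hmu : ∀ (i : Fin (m + 1)) (x : ZMod P),
      (tour m a b).SameCycle (.mu i x) (.lam i (a i)) := fun i x =>
    (step (.mu i x)).trans (hlam i _)
  have hterm : ∀ (d : ℕ) (i : Fin (m + 1)), i.val + d = m →
      (tour m a b).SameCycle (.lam i (a i)) .s := by
    intro d
    induction d with
    | zero =>
      intro i hi
      have h1 := step (.lam i (a i))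
      rw [tour_lam, if_pos rfl, lnk, dif_neg (by omega)] at h1
      exact h1
    | succ d ih =>
      intro i hi
      have h1 := step (.lam i (a i))
      rw [tour_lam, if_pos rfl, lnk, dif_pos (by omega)] at h1
      exact (h1.trans (hmu _ _)).trans (ih _ (by simp; omega))
  intro u
  rcases u with _ | ⟨i, x⟩ | ⟨i, x⟩
  · exact Equiv.Perm.SameCycle.refl _ _
  · exact (hlam i x).trans (hterm (m - i.val) i (by omega))
  · exact (hmu i x).trans (hterm (m - i.val) i (by omega))

end tourdef

section weights

variable {m P : ℕ}

/-- the penalty for leaving a gear -/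
noncomputable def bigM (m P : ℕ) : ℝ := 1 + ∑ i ∈ Finset.range (m + 1), ((P : ℝ) + 4) * 5 ^ (m - i)

lemma bigM_pos : 0 < bigM m P := by
  unfold bigM
  positivity

/-- weight between an upper vertex `(i, x)` and a lower vertex `(j, y)` -/
noncomputable def wA (i j : Fin (m + 1)) (x y : ZMod P) : ℝ :=
  if i = j ∧ y = x then 0
  else if i = j ∧ y = x + 1 then 5 ^ (m - i.val)
  else if i.val = j.val + 1 ∧ x - 2 * y = 0 then bigM m P + 4 * 5 ^ (m - i.val)
  else if i.val = j.val + 1 ∧ x - 2 * y = 1 then bigM m P + 2 * 5 ^ (m - i.val)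
  else if i.val = j.val + 1 ∧ x - 2 * y = 2 then bigM m P
  else (m + 3) * bigM m P

noncomputable def wB (i : Fin (m + 1)) (x : ZMod P) : ℝ :=
  if i = 0 ∧ x = 0 then bigM m P else (m + 3) * bigM m P

noncomputable def wC (P : ℕ) (i : Fin (m + 1)) : ℝ :=
  if i.val = m then bigM m P else (m + 3) * bigM m P

noncomputable def pw : Vx m P → Vx m P → ℝ
  | .lam j y, .mu i x => wA i j x y
  | .mu i x, .lam j y => wA i j x y
  | .s, .mu i x => wB i x
  | .mu i x, .s => wB i x
  | .s, .lam i _ => wC P i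
  | .lam i _, .s => wC P i
  | .s, .s => (m + 3) * bigM m P
  | .lam _ _, .lam _ _ => (m + 3) * bigM m P
  | .mu _ _, .mu _ _ => (m + 3) * bigM m P

noncomputable def wt (m P : ℕ) : Sym2 (Vx m P) → ℝ :=
  Sym2.lift ⟨pw, by rintro (_ | ⟨_, _⟩ | ⟨_, _⟩) (_ | ⟨_, _⟩ | ⟨_, _⟩) <;> rfl⟩

lemma wt_mk (u v : Vx m P) : wt m P s(u, v) = pw u v := rfl

lemma M_le_big : bigM m P ≤ (m + 3) * bigM m P := by
  have := bigM_pos (m := m) (P := P)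
  nlinarith [(Nat.cast_nonneg m : (0 : ℝ) ≤ m)]

lemma wA_nonneg (i j : Fin (m + 1)) (x y : ZMod P) : 0 ≤ wA i j x y := by
  have := bigM_pos (m := m) (P := P)
  unfold wA
  split_ifs <;> positivity

lemma wt_nonneg (e : Sym2 (Vx m P)) : 0 ≤ wt m P e := by
  have h0 := bigM_pos (m := m) (P := P)
  have h1 := M_le_big (m := m) (P := P)
  induction e with
  | _ u v =>
    rw [wt_mk]
    rcases u with _ | ⟨i, x⟩ | ⟨i, x⟩ <;> rcases v with _ | ⟨j, y⟩ | ⟨j, y⟩ <;>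
      simp only [pw, wB, wC] <;> first | exact wA_nonneg _ _ _ _ | (split_ifs <;> linarith) | linarith

def bz (P : ℕ) (r : Bool) : ZMod P := if r then 1 else 0

/-- gear edges -/
def gam (t : Fin (m + 1) × Bool × ZMod P) : Sym2 (Vx m P) :=
  s(.mu t.1 t.2.2, .lam t.1 (t.2.2 + bz P t.2.1))

lemma gam_injective (h1 : (1 : ZMod P) ≠ 0) : Function.Injective (gam (m := m) (P := P)) := by
  rintro ⟨i, r, x⟩ ⟨j, r', y⟩ h
  simp only [gam, Sym2.eq_iff, Vx.mu.injEq, Vx.lam.injEq, reduceCtorEq, false_and, or_false] at h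
  obtain ⟨⟨rfl, rfl⟩, -, h⟩ := h
  cases r <;> cases r' <;> simp_all [bz]

lemma wA_big {i j : Fin (m + 1)} {x y : ZMod P} (h : ¬ (i = j ∧ (y = x ∨ y = x + 1))) :
    bigM m P ≤ wA i j x y := by
  have h1 := M_le_big (m := m) (P := P)
  unfold wA
  have p : (0 : ℝ) < 5 ^ (m - i.val) := by positivity
  split_ifs with h2 h3
  · exact absurd ⟨h2.1, Or.inl h2.2⟩ h
  · exact absurd ⟨h3.1, Or.inr h3.2⟩ h
  all_goals linarith

lemma wt_big {e : Sym2 (Vx m P)} (he : ∀ t, e ≠ gam t) : bigM m P ≤ wt m P e := by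
  have h0 := bigM_pos (m := m) (P := P)
  have h1 := M_le_big (m := m) (P := P)
  induction e with
  | _ u v =>
    rw [wt_mk]
    have key : ∀ i j (x y : ZMod P), (∀ t, s(Vx.mu i x, Vx.lam j y) ≠ gam (m := m) t) →
        bigM m P ≤ wA i j x y := by
      intro i j x y hh
      apply wA_big
      rintro ⟨rfl, rfl | rfl⟩
      · exact hh (i, false, y) (by simp [gam, bz])
      · exact hh (i, true, x) (by simp [gam, bz])
    rcases u with _ | ⟨i, x⟩ | ⟨i, x⟩ <;> rcases v with _ | ⟨j, y⟩ | ⟨j, y⟩ <;>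
      simp only [pw, wB, wC] <;> try first | (split_ifs <;> linarith) | linarith
    · apply key
      intro t
      rw [Sym2.eq_swap]
      exact he t
    · exact key _ _ _ _ he

lemma wt_lam {i : Fin (m + 1)} {y : ZMod P} {u : Vx m P}
    (h : wt m P s(.lam i y, u) < (m + 3) * bigM m P) (h1 : u ≠ .mu i y) (h2 : u ≠ .mu i (y - 1)) :
    (u = .s ∧ i.val = m) ∨ ∃ j x, u = .mu j x ∧ j.val = i.val + 1 ∧
      (x - 2 * y = 0 ∨ x - 2 * y = 1 ∨ x - 2 * y = 2) := by
  rw [wt_mk] at h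
  rcases u with _ | ⟨j, x⟩ | ⟨j, x⟩
  · left
    simp only [pw, wC] at h
    split_ifs at h with h3
    · exact ⟨rfl, h3⟩
    · exact absurd h (lt_irrefl _)
  · exact absurd h (lt_irrefl _)
  · right
    refine ⟨j, x, rfl, ?_⟩
    simp only [pw, wA] at h
    split_ifs at h with a1 a2 a3 a4 a5
    · exact absurd (by rw [a1.1, a1.2]) h1
    · refine absurd (by rw [a2.1, a2.2]; simp) h2
    · exact ⟨a3.1, Or.inl a3.2⟩
    · exact ⟨a4.1, Or.inr (Or.inl a4.2)⟩
    · exact ⟨a5.1, Or.inr (Or.inr a5.2)⟩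
    · exact absurd h (lt_irrefl _)

lemma wt_mu_zero {y : ZMod P} {u : Vx m P}
    (h : wt m P s(.mu 0 y, u) < (m + 3) * bigM m P) (h1 : u ≠ .lam 0 y) (h2 : u ≠ .lam 0 (y + 1)) :
    u = .s ∧ y = 0 := by
  rw [wt_mk] at h
  rcases u with _ | ⟨j, x⟩ | ⟨j, x⟩
  · simp only [pw, wB] at h
    split_ifs at h with h3
    · exact ⟨rfl, h3.2⟩
    · exact absurd h (lt_irrefl _)
  · exfalso
    simp only [pw, wA] at h
    split_ifs at h with a1 a2 a3 a4 a5
    · exact absurd (by rw [a1.1, a1.2]) h1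
    · exact absurd (by rw [a2.1, a2.2]) h2
    · simpa using a3.1
    · simpa using a4.1
    · simpa using a5.1
    · exact absurd h (lt_irrefl _)
  · exact absurd h (lt_irrefl _)

lemma gam_mem_tour [NeZero P] {a b : ℕ → ZMod P} {i : Fin (m + 1)}
    (hab : a i - b i = 0 ∨ a i - b i = 1) {x : ZMod P} {r : Bool}
    (h : ¬ (x = b i ∧ x + bz P r = a i)) :
    gam (i, r, x) ∈ tourEdges (tour m a b) := by
  unfold gam
  rw [mem_tourEdges]
  simp only
  by_cases hr : bz P r = a i - b i
  · right
    rw [tour_lam, if_neg, hr]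
    · congr 1; ring
    · intro h2
      apply h
      refine ⟨?_, h2⟩
      rw [hr] at h2
      linear_combination h2
  · left
    rw [tour_mu]
    congr 1
    rcases hab with h3 | h3 <;> rw [h3] at hr ⊢ <;> cases r <;> simp_all [bz]

lemma lnk_ne {b : ℕ → ZMod P} {i : Fin (m + 1)} {x : ZMod P} : lnk m P b i ≠ .mu i x := by
  unfold lnk
  split_ifs with h
  · intro h2
    simp only [Vx.mu.injEq] at h2
    have := congrArg Fin.val h2.1
    simp at this
  · simp

lemma missing_not_mem [NeZero P] {a b : ℕ → ZMod P} (h1 : (1 : ZMod P) ≠ 0) {i : Fin (m + 1)}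
    (hab : a i - b i = 0 ∨ a i - b i = 1) :
    s(Vx.mu i (b i), Vx.lam i (a i)) ∉ tourEdges (tour m a b) := by
  rw [mem_tourEdges, tour_lam, if_pos rfl, tour_mu]
  rintro (h | h)
  · simp only [Vx.lam.injEq, true_and] at h
    apply h1
    rcases hab with h3 | h3 <;> rw [h3] at h
    · linear_combination h + h3
    · linear_combination -h - h3
  · exact lnk_ne h

/-- Every light tour comes from a configuration of the gears. -/
lemma structure_of_light [NeZero P] (hP : 3 ≤ P) {σ : Equiv.Perm (Vx m P)} (hσ : IsTour σ)
    (hw : tourWeight (wt m P) σ < (m + 3) * bigM m P) :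
    ∃ a b : ℕ → ZMod P, (∀ i : Fin (m + 1), a i - b i = 0 ∨ a i - b i = 1) ∧ b 0 = 0 ∧
      (∀ i < m, b (i + 1) - 2 * a i = 0 ∨ b (i + 1) - 2 * a i = 1 ∨ b (i + 1) - 2 * a i = 2) ∧
      tourEdges σ = tourEdges (tour m a b) := by
  classical
  have : Fact (1 < P) := ⟨by omega⟩
  have h10 : (1 : ZMod P) ≠ 0 := one_ne_zero
  have hM := bigM_pos (m := m) (P := P)
  have hcard : 3 ≤ Fintype.card (Vx m P) := by rw [card_vx]; nlinarith
  set T := tourEdges σ with hT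
  -- every edge is light
  have hlight : ∀ e ∈ T, wt m P e < (m + 3) * bigM m P := by
    intro e he
    refine lt_of_le_of_lt ?_ hw
    exact Finset.single_le_sum (f := wt m P) (fun e _ => wt_nonneg e) he
  -- each gear misses an edge
  have hmiss : ∀ i : Fin (m + 1), ∃ t : Bool × ZMod P, gam (i, t) ∉ T := by
    intro i
    by_contra hcon
    push Not at hcon
    have e0 : ∀ x, s(Vx.mu i x, Vx.lam i x) ∈ T := fun x => by
      simpa [gam, bz] using hcon (false, x)
    have e1 : ∀ x, s(Vx.mu i x, Vx.lam i (x + 1)) ∈ T := fun x => by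
      simpa [gam, bz] using hcon (true, x)
    have := IsTour.closed hσ (fun v => ∃ x, v = .lam i x ∨ v = .mu i x) (v := .lam i 0)
      ⟨0, Or.inl rfl⟩ (by
        rintro v ⟨x, rfl | rfl⟩
        · have h1 : s(Vx.lam i x, Vx.mu i x) ∈ T := by rw [Sym2.eq_swap]; exact e0 x
          have h2 : s(Vx.lam i x, Vx.mu i (x - 1)) ∈ T := by
            rw [Sym2.eq_swap]; simpa using e1 (x - 1)
          rcases nbr_of_two (by
              intro h; injection h with _ h; apply h10; linear_combination h) h1 h2
              (u := σ (.lam i x)) (mem_tourEdges.2 (Or.inl rfl))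
            with h | h
          · exact ⟨_, Or.inr h⟩
          · exact ⟨_, Or.inr h⟩
        · rcases nbr_of_two (by simp) (e0 x) (e1 x) (u := σ (.mu i x))
            (mem_tourEdges.2 (Or.inl rfl)) with h | h
          · exact ⟨_, Or.inl h⟩
          · exact ⟨_, Or.inl h⟩) .s
    obtain ⟨x, h | h⟩ := this <;> cases h
  choose t ht using hmiss
  -- counting
  set Γ : Finset (Sym2 (Vx m P)) := Finset.univ.image gam with hΓ
  have cΓ : Γ.card = (m + 1) * (2 * P) := by
    rw [hΓ, Finset.card_image_of_injective _ (gam_injective h10)]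
    simp [ZMod.card]
  have c1 : (T \ Γ).card ≤ m + 2 := by
    have h1 : ((T \ Γ).card : ℝ) * bigM m P ≤ tourWeight (wt m P) σ := by
      unfold tourWeight
      calc ((T \ Γ).card : ℝ) * bigM m P = ∑ e ∈ T \ Γ, bigM m P := by simp
        _ ≤ ∑ e ∈ T \ Γ, wt m P e := by
          apply Finset.sum_le_sum
          intro e he
          apply wt_big
          rintro t rfl
          exact (Finset.mem_sdiff.1 he).2 (Finset.mem_image_of_mem _ (Finset.mem_univ _))
        _ ≤ ∑ e ∈ T, wt m P e :=
          Finset.sum_le_sum_of_subset_of_nonneg Finset.sdiff_subset fun e _ _ => wt_nonneg e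
    have h2 := lt_of_mul_lt_mul_right (lt_of_le_of_lt h1 hw) hM.le
    have h3 : (T \ Γ).card < m + 3 := by exact_mod_cast h2
    omega
  have c2 : (T \ Γ).card + (T ∩ Γ).card = (m + 1) * (2 * P) + 1 := by
    rw [Finset.card_sdiff_add_card_inter, card_tourEdges hσ hcard, card_vx]
  have c3 : (Γ \ T).card + (Γ ∩ T).card = (m + 1) * (2 * P) := by
    rw [Finset.card_sdiff_add_card_inter, cΓ]
  have c4 : (Γ \ T).card ≤ m + 1 := by
    rw [Finset.inter_comm] at c3
    omega
  have honly : ∀ q, gam q ∉ T → q = (q.1, t q.1) := by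
    have h1 : (Finset.univ.image fun i => (gam (i, t i) : Sym2 (Vx m P))) = Γ \ T := by
      apply Finset.eq_of_subset_of_card_le
      · intro e he
        obtain ⟨i, -, rfl⟩ := Finset.mem_image.1 he
        exact Finset.mem_sdiff.2 ⟨Finset.mem_image_of_mem _ (Finset.mem_univ _), ht i⟩
      · rw [Finset.card_image_of_injective]
        · simpa using c4
        · intro i j hij
          exact congrArg Prod.fst (gam_injective h10 hij)
    intro q hq
    have h2 : gam q ∈ Γ \ T :=
      Finset.mem_sdiff.2 ⟨Finset.mem_image_of_mem _ (Finset.mem_univ _), hq⟩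
    rw [← h1] at h2
    obtain ⟨i, -, hi⟩ := Finset.mem_image.1 h2
    have := gam_injective h10 hi
    subst this
    rfl
  -- positions
  set b : ℕ → ZMod P := fun i => (t (Fin.ofNat (m + 1) i)).2 with hb
  set a : ℕ → ZMod P := fun i => b i + bz P (t (Fin.ofNat (m + 1) i)).1 with ha
  have hof : ∀ i : Fin (m + 1), Fin.ofNat (m + 1) i.val = i := fun i => by simp
  have hbi : ∀ i : Fin (m + 1), b i = (t i).2 := fun i => by simp only [hb, hof]
  have hai : ∀ i : Fin (m + 1), a i = b i + bz P (t i).1 := fun i => by simp only [ha, hof]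
  have hab : ∀ i : Fin (m + 1), a i - b i = 0 ∨ a i - b i = 1 := by
    intro i
    rw [hai]
    cases (t i).1 <;> simp [bz]
  have hgam : ∀ i r x, ¬ (x = b (i : Fin (m + 1)) ∧ x + bz P r = a i) → gam (i, r, x) ∈ T := by
    intro i r x h
    by_contra h2
    have h3 := honly _ h2
    simp only [Prod.mk.injEq, true_and] at h3
    apply h
    rw [hai, hbi, ← h3]
    simp
  have e0 : ∀ (i : Fin (m + 1)) x, ¬ (x = b i ∧ x = a i) → s(Vx.mu i x, Vx.lam i x) ∈ T :=
    fun i x h => by simpa [gam, bz] using hgam i false x (by simpa [bz] using h)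
  have e1 : ∀ (i : Fin (m + 1)) x, ¬ (x = b i ∧ x + 1 = a i) →
      s(Vx.mu i x, Vx.lam i (x + 1)) ∈ T :=
    fun i x h => by simpa [gam, bz] using hgam i true x (by simpa [bz] using h)
  have hmissT : ∀ i : Fin (m + 1), s(Vx.mu i (b i), Vx.lam i (a i)) ∉ T := by
    intro i
    have := ht i
    simp only [gam] at this
    rwa [hai, hbi]
  -- the links
  have hmuother : ∀ (i : Fin (m + 1)) x u, s(Vx.mu i x, u) ∈ T → u ≠ .lam i x →
      u ≠ .lam i (x + 1) → x = b i := by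
    intro i x u hu h1 h2
    by_contra hx
    rcases nbr_of_two (by simp) (e0 i x (fun h => hx h.1)) (e1 i x (fun h => hx h.1)) hu
      with h | h
    · exact h1 h
    · exact h2 h
  have hlamterm : ∀ i : Fin (m + 1), ∃ u, s(Vx.lam i (a i), u) ∈ T ∧ u ≠ .mu i (a i) ∧
      u ≠ .mu i (a i - 1) := by
    intro i
    have hm := hmissT i
    rw [Sym2.eq_swap] at hm
    rcases hab i with h | h
    · have hh : b i = a i := by linear_combination -h
      rw [hh] at hm
      exact exists_other_nbr hσ hcard hm
    · have hh : b i = a i - 1 := by linear_combination -h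
      rw [hh] at hm
      obtain ⟨u, h1, h2, h3⟩ := exists_other_nbr hσ hcard hm (q := .mu i (a i))
      exact ⟨u, h1, h3, h2⟩
  have hlink : ∀ i : Fin (m + 1), s(Vx.lam i (a i), lnk m P b i) ∈ T ∧ (i.val < m →
      (b (i + 1) - 2 * a i = 0 ∨ b (i + 1) - 2 * a i = 1 ∨ b (i + 1) - 2 * a i = 2)) := by
    intro i
    obtain ⟨u, h1, h2, h3⟩ := hlamterm i
    rcases wt_lam (hlight _ h1) h2 h3 with ⟨rfl, h4⟩ | ⟨j, x, rfl, h4, h5⟩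
    · refine ⟨?_, fun h => by omega⟩
      rw [lnk, dif_neg (by omega)]
      exact h1
    · have h6 : x = b j := by
        apply hmuother j x (.lam i (a i))
        · rw [Sym2.eq_swap]; exact h1
        · intro h; injection h with h _; rw [h] at h4; omega
        · intro h; injection h with h _; rw [h] at h4; omega
      have hj : j = ⟨i.val + 1, by omega⟩ := Fin.ext h4
      have h7 : x = b (i.val + 1) := by rw [h6, h4]
      have h8 : i.val < m := by have := j.2; omega
      refine ⟨?_, fun _ => h7 ▸ h5⟩
      rw [lnk, dif_pos h8, ← h7]
      simp only [hj] at h1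
      exact h1
  have hstart : s(Vx.s, Vx.mu 0 (b 0)) ∈ T ∧ b 0 = 0 := by
    have hm := hmissT 0
    have hu : ∃ u, s(Vx.mu 0 (b 0), u) ∈ T ∧ u ≠ .lam 0 (b 0) ∧ u ≠ .lam 0 (b 0 + 1) := by
      rcases hab 0 with h | h
      · have hh : a (0 : Fin (m + 1)) = b (0 : Fin (m + 1)) := by linear_combination h
        rw [hh] at hm
        exact exists_other_nbr hσ hcard hm
      · have hh : a (0 : Fin (m + 1)) = b (0 : Fin (m + 1)) + 1 := by linear_combination h
        rw [hh] at hm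
        obtain ⟨u, h1, h2, h3⟩ := exists_other_nbr hσ hcard hm (q := .lam 0 (b 0))
        exact ⟨u, h1, h3, h2⟩
    obtain ⟨u, h1, h2, h3⟩ := hu
    obtain ⟨rfl, h4⟩ := wt_mu_zero (hlight _ h1) h2 h3
    refine ⟨?_, h4⟩
    rw [Sym2.eq_swap]; exact h1
  refine ⟨a, b, hab, hstart.2, fun i hi => (hlink ⟨i, by omega⟩).2 hi, ?_⟩
  symm
  apply Finset.eq_of_subset_of_card_le
  · intro e he
    obtain ⟨v, -, rfl⟩ := Finset.mem_image.1 he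
    rcases v with _ | ⟨i, x⟩ | ⟨i, x⟩
    · exact hstart.1
    · rw [tour_lam]
      split_ifs with h
      · rw [h]; exact (hlink i).1
      · rcases hab i with h2 | h2
        · rw [h2, sub_zero, Sym2.eq_swap]
          exact e0 i x (fun h3 => h h3.2)
        · rw [h2, Sym2.eq_swap]
          have := e1 i (x - 1) (fun h3 => h (by simpa using h3.2))
          simpa using this
    · rw [tour_mu]
      rcases hab i with h2 | h2
      · rw [h2, sub_zero]
        refine e1 i x ?_
        rintro ⟨rfl, h3⟩
        apply h10
        linear_combination h3 + h2
      · rw [h2, add_sub_cancel_right]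
        refine e0 i x ?_
        rintro ⟨h4, h3⟩
        apply h10
        linear_combination h4 - h3 - h2
  · rw [card_tourEdges hσ hcard, card_tourEdges (isTour_tour a b hab) hcard]

end weights

section dynamics

variable {m P : ℕ}

/-- Valid lifted positions of the gears. -/
structure Valid (m : ℕ) (L U : ℕ → ℤ) : Prop where
  zero : U 0 = 0
  gear : ∀ i ≤ m, L i = U i ∨ L i = U i + 1
  link : ∀ i < m, U (i + 1) = 2 * L i ∨ U (i + 1) = 2 * L i + 1 ∨ U (i + 1) = 2 * L i + 2

/-- the reduction of lifted positions -/
def cz (P : ℕ) (L : ℕ → ℤ) (i : ℕ) : ZMod P := (L i : ZMod P)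

lemma Valid.hab {L U : ℕ → ℤ} (h : Valid m L U) (i : Fin (m + 1)) :
    cz P L i - cz P U i = 0 ∨ cz P L i - cz P U i = 1 := by
  rcases h.gear i (by omega) with h | h
  · left; simp [cz, h]
  · right; simp [cz, h]

lemma Valid.isTour [NeZero P] {L U : ℕ → ℤ} (h : Valid m L U) :
    IsTour (tour m (cz P L) (cz P U)) := isTour_tour _ _ h.hab

lemma sum_ite_zmod [NeZero P] (a : ZMod P) (e d : ℝ) :
    ∑ x : ZMod P, (if x = a then e else d) = e + (P - 1) * d := by
  have : ∀ x : ZMod P, (if x = a then e else d) = d + if x = a then e - d else 0 := by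
    intro x; split_ifs <;> ring
  simp only [this, Finset.sum_add_distrib, Finset.sum_ite_eq', Finset.mem_univ, if_true,
    Finset.sum_const, Finset.card_univ, ZMod.card, nsmul_eq_mul]
  ring

lemma weight_formula [NeZero P] (hP : 3 ≤ P) {L U : ℕ → ℤ} (h : Valid m L U) :
    tourWeight (wt m P) (tour m (cz P L) (cz P U)) = (m + 2) * bigM m P +
      ∑ i ∈ Finset.range (m + 1), ((P : ℝ) - (L i - U i)) * 5 ^ (m - i) +
      ∑ i ∈ Finset.range m, (2 - ((U (i + 1) : ℝ) - 2 * L i)) * (2 * 5 ^ (m - (i + 1))) := by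
  have : Fact (1 < P) := ⟨by omega⟩
  have h10 : (1 : ZMod P) ≠ 0 := one_ne_zero
  have h20 : (2 : ZMod P) ≠ 0 := by
    intro h2
    have : ((2 : ℕ) : ZMod P) = 0 := by exact_mod_cast h2
    rw [ZMod.natCast_eq_zero_iff] at this
    have := Nat.le_of_dvd (by norm_num) this
    omega
  have h21 : (2 : ZMod P) ≠ 1 := by
    intro h2; apply h10; linear_combination h2
  have hcard : 3 ≤ Fintype.card (Vx m P) := by rw [card_vx]; nlinarith
  rw [tourWeight_eq h.isTour hcard, sum_vx]
  have hs : wt m P s(Vx.s, tour m (cz P L) (cz P U) Vx.s) = bigM m P := by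
    simp [wt_mk, pw, wB, cz, h.zero]
  have hmu : ∀ i : Fin (m + 1), ∑ x, wt m P s(Vx.mu i x, tour m (cz P L) (cz P U) (.mu i x))
      = (1 - ((L i : ℝ) - U i)) * P * 5 ^ (m - i.val) := by
    intro i
    simp only [tour_mu, wt_mk, pw]
    rcases h.gear i (by omega) with hg | hg
    · have : cz P L i - cz P U i = 0 := by simp [cz, hg]
      simp [this, wA, hg, ZMod.card]
    · have : cz P L i - cz P U i = 1 := by simp [cz, hg]
      simp [this, wA, hg]
  have hlnk : ∀ i : Fin (m + 1), wt m P s(Vx.lam i (cz P L i), lnk m P (cz P U) i) =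
      bigM m P + if i.val < m then
        (2 - ((U (i.val + 1) : ℝ) - 2 * L i.val)) * (2 * 5 ^ (m - (i.val + 1))) else 0 := by
    intro i
    by_cases hi : i.val < m
    · rw [lnk, dif_pos hi, if_pos hi, wt_mk]
      have hne : ¬ ((⟨i.val + 1, by omega⟩ : Fin (m + 1)) = i) := by
        intro h; have := congrArg Fin.val h; simp at this
      rcases h.link i hi with hl | hl | hl
      · simp only [pw, wA, cz, hl, hne]
        simp
        ring
      · simp only [pw, wA, cz, hl, hne]
        simp
        ring
      · simp only [pw, wA, cz, hl, hne]
        simp [h20, h21]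
    · rw [lnk, dif_neg hi, if_neg hi, wt_mk]
      have : i.val = m := by omega
      simp [pw, wC, this]
  have hlam : ∀ i : Fin (m + 1), ∑ x, wt m P s(Vx.lam i x, tour m (cz P L) (cz P U) (.lam i x))
      = (bigM m P + if i.val < m then
        (2 - ((U (i.val + 1) : ℝ) - 2 * L i.val)) * (2 * 5 ^ (m - (i.val + 1))) else 0) +
        (P - 1) * (((L i : ℝ) - U i) * 5 ^ (m - i.val)) := by
    intro i
    rw [← hlnk i, ← sum_ite_zmod (cz P L i)]
    apply Finset.sum_congr rfl
    intro x _
    rw [tour_lam]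
    split_ifs with hx
    · rw [hx]
    · rw [wt_mk]
      rcases h.gear i (by omega) with hg | hg
      · have : cz P L i - cz P U i = 0 := by simp [cz, hg]
        simp [this, pw, wA, hg]
      · have : cz P L i - cz P U i = 1 := by simp [cz, hg]
        simp [this, pw, wA, hg]
        intro hh
        exact absurd (by linear_combination hh) h10
  rw [hs, Finset.sum_congr rfl fun i _ => hlam i, Finset.sum_congr rfl fun i _ => hmu i,
    Fin.sum_univ_eq_sum_range (fun i => (bigM m P + if i < m then
        (2 - ((U (i + 1) : ℝ) - 2 * L i)) * (2 * 5 ^ (m - (i + 1))) else 0) +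
        (P - 1) * (((L i : ℝ) - U i) * 5 ^ (m - i))),
    Fin.sum_univ_eq_sum_range (fun i => (1 - ((L i : ℝ) - U i)) * P * 5 ^ (m - i))]
  have hr : ∑ i ∈ Finset.range m, (2 - ((U (i + 1) : ℝ) - 2 * L i)) * (2 * 5 ^ (m - (i + 1)))
      = ∑ i ∈ Finset.range (m + 1), if i < m then
        (2 - ((U (i + 1) : ℝ) - 2 * L i)) * (2 * 5 ^ (m - (i + 1))) else 0 := by
    rw [Finset.sum_range_succ, if_neg (lt_irrefl _), add_zero]
    apply Finset.sum_congr rfl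
    intro i hi
    rw [if_pos (Finset.mem_range.1 hi)]
  rw [hr]
  have hM : ((m : ℝ) + 2) * bigM m P
      = bigM m P + ∑ i ∈ Finset.range (m + 1), bigM m P := by
    simp; ring
  rw [hM, add_assoc, add_assoc, ← Finset.sum_add_distrib, ← Finset.sum_add_distrib,
    ← Finset.sum_add_distrib]
  congr 1
  apply Finset.sum_congr rfl
  intro i _
  ring

lemma weight_light [NeZero P] (hP : 3 ≤ P) {L U : ℕ → ℤ} (h : Valid m L U) :
    tourWeight (wt m P) (tour m (cz P L) (cz P U)) < (m + 3) * bigM m P := by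
  rw [weight_formula hP h]
  have h1 : ∑ i ∈ Finset.range (m + 1), ((P : ℝ) - (L i - U i)) * 5 ^ (m - i) ≤
      ∑ i ∈ Finset.range (m + 1), (P : ℝ) * 5 ^ (m - i) := by
    apply Finset.sum_le_sum
    intro i hi
    have p : (0 : ℝ) < 5 ^ (m - i) := by positivity
    apply mul_le_mul_of_nonneg_right _ p.le
    rcases h.gear i (by have := Finset.mem_range.1 hi; omega) with hg | hg <;> simp [hg]
  have h2 : ∑ i ∈ Finset.range m, (2 - ((U (i + 1) : ℝ) - 2 * L i)) * (2 * 5 ^ (m - (i + 1)))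
      ≤ ∑ i ∈ Finset.range (m + 1), (4 : ℝ) * 5 ^ (m - i) := by
    rw [Finset.sum_range_succ']
    refine le_trans ?_ (le_add_of_nonneg_right (by positivity))
    apply Finset.sum_le_sum
    intro i hi
    have p : (0 : ℝ) < 5 ^ (m - (i + 1)) := by positivity
    rcases h.link i (Finset.mem_range.1 hi) with hg | hg | hg <;> rw [hg] <;> push_cast <;>
      nlinarith
  have h3 : bigM m P = 1 + (∑ i ∈ Finset.range (m + 1), (P : ℝ) * 5 ^ (m - i) +
      ∑ i ∈ Finset.range (m + 1), (4 : ℝ) * 5 ^ (m - i)) := by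
    rw [bigM, ← Finset.sum_add_distrib]
    congr 1
    apply Finset.sum_congr rfl
    intro i _
    ring
  linarith

/-- Forward moves strictly decrease the weight. -/
lemma weight_mono [NeZero P] (hP : 3 ≤ P) {L U L' U' : ℕ → ℤ} (h : Valid m L U)
    (h' : Valid m L' U') (hL : ∀ i, L i ≤ L' i) (hU : ∀ i, U i ≤ U' i)
    (hlt : ∃ i ≤ m, L i < L' i ∨ U i < U' i) :
    tourWeight (wt m P) (tour m (cz P L') (cz P U')) <
      tourWeight (wt m P) (tour m (cz P L) (cz P U)) := by
  have key : ∀ L U : ℕ → ℤ, Valid m L U →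
      tourWeight (wt m P) (tour m (cz P L) (cz P U)) = (m + 2) * bigM m P +
      ∑ i ∈ Finset.range (m + 1), (P : ℝ) * 5 ^ (m - i) +
      ∑ i ∈ Finset.range m, (2 : ℝ) * (2 * 5 ^ (m - (i + 1))) -
      ∑ i ∈ Finset.range (m + 1), ((U i : ℝ) * 5 ^ (m - i) +
        L i * (if i < m then 5 ^ (m - (i + 1)) else 1)) := by
    intro L U h
    rw [weight_formula hP h]
    have e1 : ∑ i ∈ Finset.range (m + 1), ((P : ℝ) - (L i - U i)) * 5 ^ (m - i) =
        ∑ i ∈ Finset.range (m + 1), (P : ℝ) * 5 ^ (m - i) -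
        ∑ i ∈ Finset.range (m + 1), (L i : ℝ) * 5 ^ (m - i) +
        ∑ i ∈ Finset.range (m + 1), (U i : ℝ) * 5 ^ (m - i) := by
      rw [← Finset.sum_sub_distrib, ← Finset.sum_add_distrib]
      apply Finset.sum_congr rfl
      intro i _
      ring
    have e2 : ∑ i ∈ Finset.range m, (2 - ((U (i + 1) : ℝ) - 2 * L i)) * (2 * 5 ^ (m - (i + 1)))
        = ∑ i ∈ Finset.range m, (2 : ℝ) * (2 * 5 ^ (m - (i + 1)))
        - 2 * ∑ i ∈ Finset.range m, (U (i + 1) : ℝ) * 5 ^ (m - (i + 1))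
        + 4 * ∑ i ∈ Finset.range m, (L i : ℝ) * 5 ^ (m - (i + 1)) := by
      rw [Finset.mul_sum, Finset.mul_sum, ← Finset.sum_sub_distrib, ← Finset.sum_add_distrib]
      apply Finset.sum_congr rfl
      intro i _
      ring
    have e3 : ∑ i ∈ Finset.range (m + 1), (U i : ℝ) * 5 ^ (m - i) =
        ∑ i ∈ Finset.range m, (U (i + 1) : ℝ) * 5 ^ (m - (i + 1)) := by
      rw [Finset.sum_range_succ', h.zero]; simp
    have e4 : ∑ i ∈ Finset.range (m + 1), (L i : ℝ) * 5 ^ (m - i) =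
        5 * ∑ i ∈ Finset.range m, (L i : ℝ) * 5 ^ (m - (i + 1)) + L m := by
      rw [Finset.sum_range_succ, Finset.mul_sum]
      congr 1
      · apply Finset.sum_congr rfl
        intro i hi
        have : m - i = m - (i + 1) + 1 := by have := Finset.mem_range.1 hi; omega
        rw [this, pow_succ]; ring
      · simp
    have e5 : ∑ i ∈ Finset.range (m + 1), (L i : ℝ) * (if i < m then 5 ^ (m - (i + 1)) else 1) =
        ∑ i ∈ Finset.range m, (L i : ℝ) * 5 ^ (m - (i + 1)) + L m := by
      rw [Finset.sum_range_succ, if_neg (lt_irrefl _), mul_one]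
      congr 1
      apply Finset.sum_congr rfl
      intro i hi
      rw [if_pos (Finset.mem_range.1 hi)]
    rw [Finset.sum_add_distrib, e5, e1, e2, e4, e3]
    ring
  rw [key _ _ h, key _ _ h']
  apply sub_lt_sub_left
  have pos : ∀ i, (0 : ℝ) < if i < m then 5 ^ (m - (i + 1)) else 1 := by
    intro i; split_ifs <;> positivity
  have pos' : ∀ i, (0 : ℝ) < 5 ^ (m - i) := by intro i; positivity
  apply Finset.sum_lt_sum
  · intro i _
    exact add_le_add (mul_le_mul_of_nonneg_right (by exact_mod_cast hU i) (pos' i).le)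
      (mul_le_mul_of_nonneg_right (by exact_mod_cast hL i) (pos i).le)
  · obtain ⟨i, hi, hlt⟩ := hlt
    refine ⟨i, Finset.mem_range.2 (by omega), ?_⟩
    rcases hlt with hlt | hlt
    · exact add_lt_add_of_le_of_lt
        (mul_le_mul_of_nonneg_right (by exact_mod_cast hU i) (pos' i).le)
        (mul_lt_mul_of_pos_right (by exact_mod_cast hlt) (pos i))
    · exact add_lt_add_of_lt_of_le
        (mul_lt_mul_of_pos_right (by exact_mod_cast hlt) (pos' i))
        (mul_le_mul_of_nonneg_right (by exact_mod_cast hL i) (pos i).le)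

end dynamics

section main

variable {m P : ℕ}

lemma tour_congr {a b a' b' : ℕ → ZMod P} (ha : ∀ i ≤ m, a i = a' i) (hb : ∀ i ≤ m, b i = b' i) :
    tour m a b = tour m a' b' := by
  ext v
  have ha' : ∀ i : Fin (m + 1), a i = a' i := fun i => ha i (by omega)
  have hb' : ∀ i : Fin (m + 1), b i = b' i := fun i => hb i (by omega)
  rcases v with _ | ⟨i, x⟩ | ⟨i, x⟩
  · simp [hb 0 (by omega)]
  · rw [tour_lam, tour_lam, ha', hb']
    have : lnk m P b i = lnk m P b' i := by
      unfold lnk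
      split_ifs with h
      · rw [hb _ (by omega)]
      · rfl
    rw [this]
  · rw [tour_mu, tour_mu, ha', hb']

lemma exists_lift {a b : ℕ → ZMod P} (hab : ∀ i : Fin (m + 1), a i - b i = 0 ∨ a i - b i = 1)
    (h0 : b 0 = 0)
    (hl : ∀ i < m, b (i + 1) - 2 * a i = 0 ∨ b (i + 1) - 2 * a i = 1 ∨ b (i + 1) - 2 * a i = 2) :
    ∃ L U : ℕ → ℤ, Valid m L U ∧ (∀ i ≤ m, a i = cz P L i) ∧ (∀ i ≤ m, b i = cz P U i) := by
  classical
  let ρ : ℕ → ℤ := fun i => if a i - b i = 0 then 0 else 1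
  let κ : ℕ → ℤ := fun i => if b (i + 1) - 2 * a i = 0 then 0 else
    if b (i + 1) - 2 * a i = 1 then 1 else 2
  let U : ℕ → ℤ := fun n => Nat.rec 0 (fun i u => 2 * (u + ρ i) + κ i) n
  have hU : ∀ i, U (i + 1) = 2 * (U i + ρ i) + κ i := fun i => rfl
  have hρ : ∀ i ≤ m, a i = b i + (ρ i : ZMod P) := by
    intro i hi
    simp only [ρ]
    split_ifs with h
    · push_cast; linear_combination h
    · rcases hab ⟨i, by omega⟩ with h2 | h2
      · exact absurd h2 h
      · push_cast; simp only at h2; linear_combination h2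
  have hκ : ∀ i < m, b (i + 1) = 2 * a i + (κ i : ZMod P) := by
    intro i hi
    simp only [κ]
    split_ifs with h h'
    · push_cast; linear_combination h
    · push_cast; linear_combination h'
    · rcases hl i hi with h2 | h2 | h2
      · exact absurd h2 h
      · exact absurd h2 h'
      · push_cast; linear_combination h2
  have hbU : ∀ i ≤ m, b i = Int.cast (U i) := by
    intro i
    induction i with
    | zero => intro _; rw [h0]; simp [U]
    | succ i ih =>
      intro hi
      rw [hκ i (by omega), hρ i (by omega), ih (by omega), hU]
      push_cast; ring
  refine ⟨fun i => U i + ρ i, U, ⟨rfl, ?_, ?_⟩, ?_, hbU⟩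
  · intro i _
    simp only [ρ]
    split_ifs <;> simp
  · intro i _
    rw [hU]
    simp only [κ]
    split_ifs <;> simp
  · intro i hi
    rw [hρ i hi, hbU i hi]
    simp [cz]

/-- the missing edge in gear `i`, as a gear edge -/
lemma exists_gam {L U : ℕ → ℤ} (h : Valid m L U) (i : Fin (m + 1)) :
    ∃ r, cz P U i + bz P r = cz P L i := by
  rcases h.hab (P := P) i with h | h
  · exact ⟨false, by simp only [bz]; simp; linear_combination -h⟩
  · exact ⟨true, by simp only [bz]; simp; linear_combination -h⟩

lemma changed_le [NeZero P] (hP : 3 ≤ P) {L U L' U' : ℕ → ℤ} (h : Valid m L U)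
    (h' : Valid m L' U') :
    ((Finset.range (m + 1)).filter
      (fun i => ¬ (cz P U' i = cz P U i ∧ cz P L' i = cz P L i))).card ≤
    (tourEdges (tour m (cz P L) (cz P U)) \ tourEdges (tour m (cz P L') (cz P U'))).card := by
  have : Fact (1 < P) := ⟨by omega⟩
  have h10 : (1 : ZMod P) ≠ 0 := one_ne_zero
  apply Finset.card_le_card_of_injOn
    (fun i => s(Vx.mu (Fin.ofNat (m + 1) i) (cz P U' i), Vx.lam (Fin.ofNat (m + 1) i) (cz P L' i)))
  · intro i hi
    simp only [Finset.coe_filter, Finset.mem_range, Set.mem_setOf_eq] at hi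
    obtain ⟨hi, hne⟩ := hi
    have hof : Fin.ofNat (m + 1) i = ⟨i, hi⟩ := by
      apply Fin.ext; simp [Nat.mod_eq_of_lt hi]
    simp only [hof, Finset.coe_sdiff, Set.mem_diff, Finset.mem_coe]
    refine ⟨?_, missing_not_mem (i := ⟨i, hi⟩) h10 (h'.hab _)⟩
    obtain ⟨r, hr⟩ := exists_gam (P := P) h' ⟨i, hi⟩
    simp only at hr
    have := gam_mem_tour (m := m) (a := cz P L) (b := cz P U) (i := ⟨i, hi⟩) (h.hab _)
      (x := cz P U' i) (r := r) (by rw [hr]; exact hne)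
    simpa only [gam, hr] using this
  · intro i hi j hj hij
    simp only [Finset.coe_filter, Finset.mem_range, Set.mem_setOf_eq] at hi hj
    simp only [Sym2.eq_iff, Vx.mu.injEq, reduceCtorEq, false_and, or_false] at hij
    have := congrArg Fin.val hij.1.1
    simpa [Nat.mod_eq_of_lt hi.1, Nat.mod_eq_of_lt hj.1] using this

lemma jump_le {k : ℕ} (hk : 8 * 2 ^ k ≤ P) {L U L' U' : ℕ → ℤ} (h : Valid m L U)
    (h' : Valid m L' U')
    (hc : ((Finset.range (m + 1)).filter
      (fun i => ¬ (cz P U' i = cz P U i ∧ cz P L' i = cz P L i))).card ≤ k) :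
    L' m ≤ L m + 3 * 2 ^ k := by
  set D : ℕ → Prop := fun i => ¬ (cz P U' i = cz P U i ∧ cz P L' i = cz P L i) with hD
  set c : ℕ → ℕ := fun i => ((Finset.range i).filter D).card with hcdef
  have hcmono : ∀ i ≤ m + 1, c i ≤ k := by
    intro i hi
    refine le_trans (Finset.card_le_card ?_) hc
    apply Finset.filter_subset_filter
    exact Finset.range_subset_range.2 hi
  have hcs : ∀ i, D i → c (i + 1) = c i + 1 := by
    intro i hi
    simp only [hcdef]
    rw [Finset.range_add_one, Finset.filter_insert, if_pos hi, Finset.card_insert_of_notMem]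
    simp
  have hcs' : ∀ i, ¬ D i → c (i + 1) = c i := by
    intro i hi
    simp only [hcdef]
    rw [Finset.range_add_one, Finset.filter_insert, if_neg hi]
  have hpow : ∀ i ≤ m + 1, (2 : ℤ) ^ c i ≤ 2 ^ k := fun i hi =>
    pow_le_pow_right₀ (by norm_num) (hcmono i hi)
  have hpow1 : ∀ i, (1 : ℤ) ≤ 2 ^ c i := fun i => one_le_pow₀ (by norm_num)
  have hPz : (8 : ℤ) * 2 ^ k ≤ P := by exact_mod_cast hk
  have stepL : ∀ i ≤ m, |U' i - U i| ≤ 6 * (2 ^ c i - 1) + 2 →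
      |L' i - L i| ≤ 3 * (2 ^ c (i + 1) - 1) := by
    intro i hi hU
    have hp := hpow i (by omega)
    have hp1 := hpow1 i
    have hL : |L' i - L i| ≤ 6 * 2 ^ c i - 3 := by
      rw [abs_le] at hU ⊢
      rcases h.gear i hi with g | g <;> rcases h'.gear i hi with g' | g' <;> rw [g, g'] <;>
        constructor <;> linarith [hU.1, hU.2]
    by_cases hd : D i
    · rw [hcs i hd, pow_succ]
      linarith
    · rw [hcs' i hd]
      have hz : L' i - L i = 0 := by
        have h2 : cz P L' i = cz P L i := by
          simp only [hD, not_not] at hd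
          exact hd.2
        have h3 : ((L' i - L i : ℤ) : ZMod P) = 0 := by
          push_cast
          exact sub_eq_zero.2 h2
        rw [ZMod.intCast_zmod_eq_zero_iff_dvd] at h3
        apply Int.eq_zero_of_abs_lt_dvd h3
        linarith
      rw [hz, abs_zero]
      linarith
  have hU : ∀ i ≤ m, |U' i - U i| ≤ 6 * (2 ^ c i - 1) + 2 := by
    intro i
    induction i with
    | zero =>
      intro _
      rw [h.zero, h'.zero]
      have := hpow1 0
      simp; linarith
    | succ i ih =>
      intro hi
      have hL := stepL i (by omega) (ih (by omega))
      rw [abs_le] at hL ⊢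
      rcases h.link i (by omega) with g | g | g <;> rcases h'.link i (by omega) with g' | g' | g' <;>
        rw [g, g'] <;> constructor <;> linarith [hL.1, hL.2]
  have hfin := (abs_le.1 (stepL m le_rfl (hU m le_rfl))).2
  have := hpow (m + 1) le_rfl
  linarith

/-- `σ` is represented by lifted positions. -/
def Rep (P m : ℕ) [NeZero P] (σ : Equiv.Perm (Vx m P)) (L U : ℕ → ℤ) : Prop :=
  Valid m L U ∧ tourEdges σ = tourEdges (tour m (cz P L) (cz P U))

lemma Rep.weight [NeZero P] {σ : Equiv.Perm (Vx m P)} {L U : ℕ → ℤ} (h : Rep P m σ L U)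
    (w : Sym2 (Vx m P) → ℝ) :
    tourWeight w σ = tourWeight w (tour m (cz P L) (cz P U)) := by
  unfold tourWeight
  rw [h.2]

lemma Rep.step [NeZero P] {k : ℕ} (hP : 3 ≤ P) (hk : 8 * 2 ^ k ≤ P) {σ σ' : Equiv.Perm (Vx m P)}
    {L U : ℕ → ℤ} (h : Rep P m σ L U) (hs : ImprovingKSwap (wt m P) k σ σ') :
    ∃ L' U', Rep P m σ' L' U' ∧ L' m ≤ L m + 3 * 2 ^ k := by
  have hlt := hs.2
  rw [h.weight] at hlt
  obtain ⟨a, b, hab, h0, hl, hE⟩ := structure_of_light hP hs.1.1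
    (hlt.trans (weight_light hP h.1))
  obtain ⟨L', U', hv, ha, hb⟩ := exists_lift hab h0 hl
  rw [tour_congr ha hb] at hE
  refine ⟨L', U', ⟨hv, hE⟩, ?_⟩
  apply jump_le hk h.1 hv
  refine (changed_le hP h.1 hv).trans ?_
  have := hs.1.2
  rwa [h.2, hE] at this

lemma Rep.seq [NeZero P] {k : ℕ} (hP : 3 ≤ P) (hk : 8 * 2 ^ k ≤ P) (l : List (Equiv.Perm (Vx m P))) :
    ∀ (σ : Equiv.Perm (Vx m P)) (L U : ℕ → ℤ), Rep P m σ L U →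
      ImprovingSwapSeq (wt m P) k σ l →
      ∃ L' U', Rep P m ((σ :: l).getLast (List.cons_ne_nil _ _)) L' U' ∧
        L' m ≤ L m + 3 * 2 ^ k * l.length := by
  induction l with
  | nil =>
    intro σ L U h _
    exact ⟨L, U, h, by simp⟩
  | cons τ l ih =>
    intro σ L U h hs
    obtain ⟨L₁, U₁, h₁, hle⟩ := h.step hP hk hs.1
    obtain ⟨L₂, U₂, h₂, hle₂⟩ := ih τ L₁ U₁ h₁ hs.2
    refine ⟨L₂, U₂, ?_, ?_⟩
    · rw [List.getLast_cons (List.cons_ne_nil _ _)]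
      exact h₂
    · push_cast [List.length_cons]
      linarith

lemma tour_edge_cases {L U : ℕ → ℤ} (h : Valid m L U) (v : Vx m P) :
    s(v, tour m (cz P L) (cz P U) v) = s(Vx.s, Vx.mu 0 (cz P U 0)) ∨
    (∃ q, s(v, tour m (cz P L) (cz P U) v) = gam q) ∨
    ∃ i : Fin (m + 1), s(v, tour m (cz P L) (cz P U) v) =
      s(Vx.lam i (cz P L i), lnk m P (cz P U) i) := by
  rcases v with _ | ⟨i, x⟩ | ⟨i, x⟩
  · left; rfl
  · right
    rw [tour_lam]
    split_ifs with hx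
    · right; exact ⟨i, by rw [hx]⟩
    · left
      rcases h.hab (P := P) i with hh | hh
      · exact ⟨(i, false, x), by rw [hh, Sym2.eq_swap]; simp [gam, bz]⟩
      · exact ⟨(i, true, x - 1), by rw [hh, Sym2.eq_swap]; simp [gam, bz]⟩
  · right; left
    rw [tour_mu]
    rcases h.hab (P := P) i with hh | hh
    · exact ⟨(i, true, x), by rw [hh]; simp [gam, bz]⟩
    · exact ⟨(i, false, x), by rw [hh]; simp [gam, bz]⟩

lemma swap_card [NeZero P] (hP : 3 ≤ P) {L U L' U' : ℕ → ℤ} (h : Valid m L U)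
    (h' : Valid m L' U') (j : Fin (m + 1)) (hL : ∀ i, i ≠ j.val → L' i = L i)
    (hU : ∀ i, i ≠ j.val → U' i = U i) :
    (tourEdges (tour m (cz P L) (cz P U)) \ tourEdges (tour m (cz P L') (cz P U'))).card ≤ 3 := by
  have : Fact (1 < P) := ⟨by omega⟩
  have h10 : (1 : ZMod P) ≠ 0 := one_ne_zero
  refine le_trans (Finset.card_le_card (t := {s(Vx.mu j (cz P U' j), Vx.lam j (cz P L' j)),
    s(Vx.lam j (cz P L j), lnk m P (cz P U) j),
    s(Vx.mu j (cz P U j), unk m P (cz P L) j)}) ?_) Finset.card_le_three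
  intro e he
  obtain ⟨he, he'⟩ := Finset.mem_sdiff.1 he
  have heT := he
  obtain ⟨v, -, rfl⟩ := Finset.mem_image.1 he
  simp only [Finset.mem_insert, Finset.mem_singleton]
  rcases tour_edge_cases (P := P) h v with hv | ⟨⟨i, r, x⟩, hv⟩ | ⟨i, hv⟩ <;>
    rw [hv] at he' heT ⊢
  · exfalso
    apply he'
    rw [mem_tourEdges]
    left
    simp [cz, h.zero, h'.zero]
  · left
    have hx : x = cz P U' i ∧ x + bz P r = cz P L' i := by
      by_contra hcon
      exact he' (gam_mem_tour (h'.hab _) hcon)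
    by_cases hij : i = j
    · subst hij
      simp only [gam, hx.2]
      rw [hx.1]
    · exfalso
      have hne : i.val ≠ j.val := fun hh => hij (Fin.ext hh)
      have e1 : cz P U' i = cz P U i := by simp only [cz, hU _ hne]
      have e2 : cz P L' i = cz P L i := by simp only [cz, hL _ hne]
      simp only [gam] at heT
      rw [hx.2, hx.1, e1, e2] at heT
      exact missing_not_mem h10 (h.hab i) heT
  · right
    by_cases hij : i = j
    · left; rw [hij]
    · right
      have hne : i.val ≠ j.val := fun hh => hij (Fin.ext hh)
      by_cases hij' : i.val + 1 = j.val
      · have h1 : i.val < m := by omega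
        have h2 : (⟨i.val + 1, by omega⟩ : Fin (m + 1)) = j := Fin.ext hij'
        have h3 : (⟨j.val - 1, by omega⟩ : Fin (m + 1)) = i := Fin.ext (by simp; omega)
        have h4 : j.val - 1 = i.val := by omega
        rw [lnk, dif_pos h1, unk, if_neg (by omega), Sym2.eq_swap, h2, h3, h4, hij']
      · exfalso
        apply he'
        have e2 : cz P L' i = cz P L i := by simp only [cz, hL _ hne]
        rw [mem_tourEdges, tour_lam, if_pos e2.symm]
        left
        unfold lnk
        split_ifs
        · simp only [cz, hU _ hij']
        · rfl

lemma not_localOpt [NeZero P] {k : ℕ} (hP : 3 ≤ P) (hk : 5 ≤ k) {σ : Equiv.Perm (Vx m P)}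
    {L U L' U' : ℕ → ℤ} (h : Rep P m σ L U)
    (h' : Valid m L' U') (j : ℕ) (hj : j ≤ m) (hL : ∀ i, i ≠ j → L' i = L i)
    (hU : ∀ i, i ≠ j → U' i = U i) (hL1 : L j ≤ L' j) (hU1 : U j ≤ U' j)
    (hlt : L j < L' j ∨ U j < U' j) : ¬ IsLocalOpt (wt m P) k σ := by
  intro hopt
  apply hopt (tour m (cz P L') (cz P U'))
  refine ⟨⟨h'.isTour, ?_⟩, ?_⟩
  · rw [h.2]
    exact (swap_card hP h.1 h' ⟨j, by omega⟩ hL hU).trans (by omega)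
  · rw [h.weight]
    apply weight_mono hP h.1 h'
    · intro i
      by_cases hi : i = j
      · rw [hi]; exact hL1
      · rw [hL i hi]
    · intro i
      by_cases hi : i = j
      · rw [hi]; exact hU1
      · rw [hU i hi]
    · exact ⟨j, hj, hlt⟩

lemma localOpt_pos [NeZero P] {k : ℕ} (hP : 3 ≤ P) (hk : 5 ≤ k) {σ : Equiv.Perm (Vx m P)}
    {L U : ℕ → ℤ} (h : Rep P m σ L U) (hopt : IsLocalOpt (wt m P) k σ) : 2 ^ m ≤ L m := by
  have hv := h.1
  have moveL : ∀ i ≤ m, (i < m → U (i + 1) = 2 * L i + 2) → L i = U i + 1 := by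
    intro i hi hnext
    by_contra hne
    have heq : L i = U i := (hv.gear i hi).resolve_right hne
    refine not_localOpt hP hk h (L' := Function.update L i (L i + 1)) (U' := U) ?_ i hi
      (fun j hj => Function.update_of_ne hj _ _) (fun _ _ => rfl) (by simp) le_rfl
      (Or.inl (by simp)) hopt
    refine ⟨hv.zero, ?_, ?_⟩
    · intro j hj
      by_cases hji : j = i
      · subst hji; right; simp [heq]
      · rw [Function.update_of_ne hji]; exact hv.gear j hj
    · intro j hj
      by_cases hji : j = i
      · subst hji; left; rw [hnext hj]; simp; ring
      · rw [Function.update_of_ne hji]; exact hv.link j hj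
  have moveU : ∀ i < m, L (i + 1) = U (i + 1) + 1 → U (i + 1) = 2 * L i + 2 := by
    intro i hi hg
    by_contra hne
    refine not_localOpt hP hk h (L' := L) (U' := Function.update U (i + 1) (U (i + 1) + 1)) ?_
      (i + 1) hi (fun _ _ => rfl) (fun j hj => Function.update_of_ne hj _ _) le_rfl (by simp)
      (Or.inr (by simp)) hopt
    refine ⟨?_, ?_, ?_⟩
    · rw [Function.update_of_ne (by omega)]; exact hv.zero
    · intro j hj
      by_cases hji : j = i + 1
      · subst hji; left; simp [hg]
      · rw [Function.update_of_ne hji]; exact hv.gear j hj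
    · intro j hj
      by_cases hji : j = i
      · subst hji
        rw [Function.update_self]
        rcases hv.link j hj with g | g | g
        · right; left; rw [g]
        · right; right; rw [g]; ring
        · exact absurd g hne
      · rw [Function.update_of_ne (by omega)]; exact hv.link j hj
  have hall : ∀ d i, i + d = m → L i = U i + 1 := by
    intro d
    induction d with
    | zero => intro i hi; exact moveL i (by omega) (fun h => by omega)
    | succ d ih =>
      intro i hi
      exact moveL i (by omega) fun h => moveU i h (ih (i + 1) (by omega))
  have hgrow : ∀ i ≤ m, 2 ^ i ≤ L i := by
    intro i
    induction i with
    | zero => intro _; rw [hall m 0 (by omega), hv.zero]; norm_num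
    | succ i ih =>
      intro hi
      have h1 := hall (m - (i + 1)) (i + 1) (by omega)
      have h2 := moveU i (by omega) h1
      have h3 := ih (by omega)
      rw [h1, h2, pow_succ]
      linarith
  exact hgrow m le_rfl

lemma main_vx [NeZero P] {k : ℕ} (hk5 : 5 ≤ k) (hk : 8 * 2 ^ k ≤ P)
    (l : List (Equiv.Perm (Vx m P)))
    (hl : MaximalImprovingSwapSeq (wt m P) k (tour m (cz P 0) (cz P 0)) l) :
    (2 : ℤ) ^ m ≤ 3 * 2 ^ k * l.length := by
  have hP : 3 ≤ P := by
    have := Nat.one_le_two_pow (n := k)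
    omega
  have h0 : Rep P m (tour m (cz P 0) (cz P 0)) 0 0 := ⟨⟨rfl, by simp, by simp⟩, rfl⟩
  obtain ⟨L, U, h, hle⟩ := Rep.seq hP hk l _ 0 0 h0 hl.1
  have := localOpt_pos hP hk5 h hl.2
  simp only [Pi.zero_apply, zero_add] at hle
  linarith

end main

section transfer

variable {V W : Type*} [Fintype V] [DecidableEq V] [Fintype W] [DecidableEq W]

lemma tourEdges_permCongr (e : V ≃ W) (σ : Equiv.Perm V) :
    tourEdges (e.permCongr σ) = (tourEdges σ).image (Sym2.map e) := by
  unfold tourEdges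
  rw [Finset.image_image]
  ext x
  simp only [Finset.mem_image, Finset.mem_univ, true_and, Function.comp]
  constructor
  · rintro ⟨v, rfl⟩
    exact ⟨e.symm v, by simp [Equiv.permCongr_apply]⟩
  · rintro ⟨v, rfl⟩
    exact ⟨e v, by simp [Equiv.permCongr_apply]⟩

lemma isTour_permCongr (e : V ≃ W) (σ : Equiv.Perm V) (h : IsTour σ) :
    IsTour (e.permCongr σ) := by
  obtain ⟨v, hv, hs⟩ := h.1
  refine ⟨⟨e v, ?_, ?_⟩, ?_⟩
  · simpa [Equiv.permCongr_apply] using hv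
  · intro y _
    obtain ⟨i, hi⟩ := (hs (IsTour.ne h (e.symm y))).exists_nat_pow_eq
    refine ⟨i, ?_⟩
    have key : ∀ n : ℕ, ((e.permCongr σ) ^ n) (e v) = e ((σ ^ n) v) := by
      intro n
      induction n with
      | zero => simp
      | succ n ih =>
        rw [pow_succ', pow_succ', Equiv.Perm.mul_apply, Equiv.Perm.mul_apply, ih]
        simp [Equiv.permCongr_apply]
    rw [zpow_natCast, key, hi]
    simp
  · ext u
    simp only [Equiv.Perm.mem_support, Finset.mem_univ, iff_true]
    intro hu
    apply IsTour.ne h (e.symm u)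
    apply e.injective
    simpa [Equiv.permCongr_apply] using hu

lemma tourWeight_permCongr (e : V ≃ W) (w : Sym2 W → ℝ) (σ : Equiv.Perm V) :
    tourWeight w (e.permCongr σ) = tourWeight (fun x => w (Sym2.map e x)) σ := by
  unfold tourWeight
  rw [tourEdges_permCongr, Finset.sum_image]
  intro x _ y _ h
  exact Sym2.map.injective e.injective h

lemma improving_permCongr (e : V ≃ W) (w : Sym2 W → ℝ) (k : ℕ) (σ τ : Equiv.Perm V)
    (h : ImprovingKSwap (fun x => w (Sym2.map e x)) k σ τ) :
    ImprovingKSwap w k (e.permCongr σ) (e.permCongr τ) := by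
  refine ⟨⟨isTour_permCongr e τ h.1.1, ?_⟩, ?_⟩
  · rw [tourEdges_permCongr, tourEdges_permCongr,
      ← Finset.image_sdiff _ _ (Sym2.map.injective e.injective),
      Finset.card_image_of_injective _ (Sym2.map.injective e.injective)]
    exact h.1.2
  · rw [tourWeight_permCongr, tourWeight_permCongr]
    exact h.2

lemma seq_permCongr (e : V ≃ W) (w : Sym2 W → ℝ) (k : ℕ) (l : List (Equiv.Perm V)) :
    ∀ σ : Equiv.Perm V, ImprovingSwapSeq (fun x => w (Sym2.map e x)) k σ l →
      ImprovingSwapSeq w k (e.permCongr σ) (l.map e.permCongr) := by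
  induction l with
  | nil => intro _ _; trivial
  | cons τ l ih =>
    intro σ h
    exact ⟨improving_permCongr e w k σ τ h.1, ih τ h.2⟩

lemma maximal_permCongr (e : V ≃ W) (w : Sym2 W → ℝ) (k : ℕ) (l : List (Equiv.Perm V))
    (σ : Equiv.Perm V) (h : MaximalImprovingSwapSeq (fun x => w (Sym2.map e x)) k σ l) :
    MaximalImprovingSwapSeq w k (e.permCongr σ) (l.map e.permCongr) := by
  refine ⟨seq_permCongr e w k l σ h.1, ?_⟩
  have hl : ((e.permCongr σ) :: l.map e.permCongr).getLast (List.cons_ne_nil _ _) =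
      e.permCongr ((σ :: l).getLast (List.cons_ne_nil _ _)) := by
    rw [← List.getLast_map (f := e.permCongr) (by simp)]
    rfl
  rw [hl]
  intro τ hτ
  apply h.2 (e.symm.permCongr τ)
  have h1 : ∀ ρ : Equiv.Perm V, e.symm.permCongr (e.permCongr ρ) = ρ := by
    intro ρ; ext x; simp [Equiv.permCongr_apply]
  have h2 := improving_permCongr e.symm (fun x => w (Sym2.map e x)) k
    (e.permCongr ((σ :: l).getLast (List.cons_ne_nil _ _))) τ (by
      convert hτ using 2
      rw [Sym2.map_map]
      simp)
  rwa [h1] at h2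

end transfer

end GearTSP

/-- TSP/k-Opt has the all-exp property for every k ≥ 5. -/
theorem tsp_kopt_all_exp_of_five_le (k : ℕ) (hk : 5 ≤ k) : TSPKOptAllExp k := by
  set P : ℕ := 8 * 2 ^ k with hP
  have hP0 : 0 < P := by positivity
  have : NeZero P := ⟨hP0.ne'⟩
  have h6 : 6 * P ≠ 0 := by omega
  set c : ℝ := (2 : ℝ) ^ (((6 * P : ℕ) : ℝ)⁻¹) with hc
  have hcpow : c ^ (6 * P) = 2 := Real.rpow_inv_natCast_pow (by norm_num) h6
  have hc1 : 1 < c := by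
    apply Real.one_lt_rpow (by norm_num)
    positivity
  refine ⟨c, hc1, fun N => ?_⟩
  set q : ℕ := N + k + 3 with hq
  set m : ℕ := 2 * q - 1 with hm
  have hm1 : m + 1 = 2 * q := by omega
  have hcard : Fintype.card (GearTSP.Vx m P) = (m + 1) * (2 * P) + 1 := GearTSP.card_vx m P
  let e : Fin (Fintype.card (GearTSP.Vx m P)) ≃ GearTSP.Vx m P := (Fintype.equivFin _).symm
  refine ⟨Fintype.card (GearTSP.Vx m P), ?_, fun x => GearTSP.wt m P (Sym2.map e x),
    e.symm.permCongr (GearTSP.tour m (GearTSP.cz P 0) (GearTSP.cz P 0)),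
    fun x => GearTSP.wt_nonneg _, ?_, ?_⟩
  · rw [hcard]
    nlinarith
  · apply GearTSP.isTour_permCongr
    apply GearTSP.isTour_tour
    simp
  · intro l hl
    have h1 := GearTSP.maximal_permCongr e (GearTSP.wt m P) k l _ hl
    have h2 : e.permCongr (e.symm.permCongr (GearTSP.tour m (GearTSP.cz P 0) (GearTSP.cz P 0)))
        = GearTSP.tour m (GearTSP.cz P 0) (GearTSP.cz P 0) := by
      ext x; simp [Equiv.permCongr_apply]
    rw [h2] at h1
    have h3 := GearTSP.main_vx hk (le_of_eq hP.symm) _ h1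
    rw [List.length_map] at h3
    have h4 : (2 : ℝ) ^ m ≤ 3 * 2 ^ k * l.length := by exact_mod_cast h3
    have h5 : c ^ Fintype.card (GearTSP.Vx m P) ≤ 2 ^ q := by
      calc c ^ Fintype.card (GearTSP.Vx m P) ≤ c ^ (6 * P * q) := by
            apply pow_le_pow_right₀ hc1.le
            rw [hcard, hm1]
            nlinarith
        _ = 2 ^ q := by rw [pow_mul, hcpow]
    refine h5.trans ?_
    have h7 : (2 : ℝ) ^ q * (3 * 2 ^ k) ≤ 2 ^ m := by
      have e1 : m = q + (k + 2 + N) := by omega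
      rw [e1, pow_add (2 : ℝ) q (k + 2 + N)]
      apply mul_le_mul_of_nonneg_left _ (by positivity)
      have : (1 : ℝ) ≤ 2 ^ N := one_le_pow₀ (by norm_num)
      have h8 : (0 : ℝ) < 2 ^ k := by positivity
      rw [pow_add, pow_add]
      nlinarith
    have h9 : (0 : ℝ) < 3 * 2 ^ k := by positivity
    have h10 := h7.trans h4
    rw [mul_comm] at h10
    exact le_of_mul_le_mul_left h10 h9
end

section
/- For every integer k ≥ 13, TSP/k-Opt has the all-exp property: there are infinitely many pairs of a TSP instance and an initial tour such that every maximal improving k-swap sequence starting from the initial tour has length exponential in the number of vertices of the instance; equivalently, the k-Opt algorithm started from this tour needs an exponential number of iterations under every pivot rule. -/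
/-!
Statement 1: For every integer k ≥ 13, TSP/k-Opt has the all-exp property.

A TSP instance on `Fin n` is given by a nonnegative weight function on `Sym2 (Fin n)`
(the underlying graph being complete). A tour is a Hamiltonian cycle, modelled as a
permutation which is a single cycle through all vertices.
-/

open Finset

variable {V : Type*} [Fintype V] [DecidableEq V]

/-! ### General facts on tours -/

theorem isTour_reach {Z : Type*} [Fintype Z] [DecidableEq Z] {σ : Equiv.Perm Z} (h : IsTour σ)
    (x y : Z) : ∃ n : ℕ, (σ ^ n) x = y := by
  have hx : σ x ≠ x := Equiv.Perm.mem_support.1 (by rw [h.2]; exact mem_univ x)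
  have hy : σ y ≠ y := Equiv.Perm.mem_support.1 (by rw [h.2]; exact mem_univ y)
  obtain ⟨n, hn⟩ := h.1.exists_pow_eq hx hy
  exact ⟨n, hn⟩

theorem isTour_of_reach {Z : Type*} [Fintype Z] [DecidableEq Z] {σ : Equiv.Perm Z}
    (hne : ∀ x, σ x ≠ x) (x₀ : Z) (h : ∀ x y : Z, ∃ n : ℕ, (σ ^ n) x = y) : IsTour σ := by
  refine ⟨⟨x₀, hne x₀, fun y _ => ?_⟩, ?_⟩
  · obtain ⟨n, hn⟩ := h x₀ y
    exact ⟨n, by simpa using hn⟩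
  · ext x
    simp [hne x]

theorem isTour_closed {Z : Type*} [Fintype Z] [DecidableEq Z] {σ : Equiv.Perm Z} (h : IsTour σ)
    (S : Set Z) (x : Z) (hx : x ∈ S) (hS : ∀ z ∈ S, σ z ∈ S) (y : Z) : y ∈ S := by
  obtain ⟨n, rfl⟩ := isTour_reach h x y
  clear h
  induction n with
  | zero => simpa using hx
  | succ n ih => rw [pow_succ']; exact hS _ ih

theorem mem_tourEdges {Z : Type*} [Fintype Z] [DecidableEq Z] {σ : Equiv.Perm Z} {x y : Z} :
    s(x, y) ∈ tourEdges σ ↔ σ x = y ∨ σ y = x := by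
  simp only [tourEdges, mem_image, mem_univ, true_and, Sym2.eq_iff]
  constructor
  · rintro ⟨v, ⟨rfl, rfl⟩ | ⟨rfl, rfl⟩⟩ <;> simp
  · rintro (h | h)
    · exact ⟨x, Or.inl ⟨rfl, h⟩⟩
    · exact ⟨y, Or.inr ⟨rfl, h⟩⟩

theorem isTour_sq_ne {Z : Type*} [Fintype Z] [DecidableEq Z] {σ : Equiv.Perm Z} (h : IsTour σ)
    (hc : 3 ≤ Fintype.card Z) (x : Z) : σ (σ x) ≠ x := by
  intro hx
  have hall : ∀ y, y ∈ ({x, σ x} : Set Z) := by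
    apply isTour_closed h _ x (by simp)
    rintro z (rfl | rfl)
    · simp
    · simp [hx]
  have : (Finset.univ : Finset Z) ⊆ {x, σ x} := by
    intro y _
    simpa using hall y
  have h1 := Finset.card_le_card this
  have h2 : ({x, σ x} : Finset Z).card ≤ 2 := Finset.card_le_two
  rw [Finset.card_univ] at h1
  omega

theorem isTour_edge_inj {Z : Type*} [Fintype Z] [DecidableEq Z] {σ : Equiv.Perm Z} (h : IsTour σ)
    (hc : 3 ≤ Fintype.card Z) : Function.Injective (fun v => s(v, σ v)) := by
  intro v w hvw
  simp only [Sym2.eq_iff] at hvw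
  rcases hvw with h1 | h1
  · exact h1.1
  · exfalso
    apply isTour_sq_ne h hc w
    rw [← h1.1, h1.2]

theorem card_tourEdges {Z : Type*} [Fintype Z] [DecidableEq Z] {σ : Equiv.Perm Z} (h : IsTour σ)
    (hc : 3 ≤ Fintype.card Z) : (tourEdges σ).card = Fintype.card Z := by
  rw [tourEdges, Finset.card_image_of_injective _ (isTour_edge_inj h hc), Finset.card_univ]

theorem tourWeight_eq_sum {Z : Type*} [Fintype Z] [DecidableEq Z] {σ : Equiv.Perm Z}
    (h : IsTour σ) (hc : 3 ≤ Fintype.card Z) (w : Sym2 Z → ℝ) :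
    tourWeight w σ = ∑ v, w s(v, σ v) := by
  rw [tourWeight, tourEdges, Finset.sum_image]
  intro a _ b _ hab
  exact isTour_edge_inj h hc hab

/-- If a tour contains the matching `f`, every vertex has exactly one further neighbour. -/
theorem isTour_other {Z : Type*} [Fintype Z] [DecidableEq Z] {σ : Equiv.Perm Z} (h : IsTour σ)
    (hc : 3 ≤ Fintype.card Z) (f : Z → Z) (hf : ∀ v, s(v, f v) ∈ tourEdges σ) (v : Z) :
    ∃ g, g ≠ f v ∧ ∀ y, s(v, y) ∈ tourEdges σ ↔ y = f v ∨ y = g := by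
  have hv := mem_tourEdges.1 (hf v)
  have h2 : σ v ≠ σ.symm v := by
    intro h3
    apply isTour_sq_ne h hc v
    rw [h3]; simp
  rcases hv with h1 | h1
  · refine ⟨σ.symm v, ?_, fun y => ?_⟩
    · rw [← h1]; exact h2.symm
    · rw [mem_tourEdges, ← h1, Equiv.eq_symm_apply]
      constructor
      · rintro (h | h)
        · exact Or.inl h.symm
        · exact Or.inr h
      · rintro (h | h)
        · exact Or.inl h.symm
        · exact Or.inr h
  · have h1' : f v = σ.symm v := by rw [Equiv.eq_symm_apply, h1]
    refine ⟨σ v, ?_, fun y => ?_⟩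
    · rw [h1']; exact h2
    · rw [mem_tourEdges, h1', Equiv.eq_symm_apply]
      constructor
      · rintro (h | h)
        · exact Or.inr h.symm
        · exact Or.inl h
      · rintro (h | h)
        · exact Or.inr h
        · exact Or.inl h.symm

/-! ### Transport along a bijection -/

section Transport
variable {Y Z : Type*} [Fintype Y] [DecidableEq Y] [Fintype Z] [DecidableEq Z]

/-- The bijection on unordered pairs induced by a bijection. -/
def symEquiv {Y Z : Type*} (e : Y ≃ Z) : Sym2 Y ≃ Sym2 Z where
  toFun := Sym2.map e
  invFun := Sym2.map e.symm
  left_inv x := by simp [Sym2.map_map]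
  right_inv x := by simp [Sym2.map_map]

theorem tourEdges_permCongr (e : Y ≃ Z) (σ : Equiv.Perm Y) :
    tourEdges (e.permCongr σ) = (tourEdges σ).map (symEquiv e).toEmbedding := by
  ext x
  induction x using Sym2.ind with
  | _ x y =>
    rw [Finset.mem_map_equiv]
    have : (symEquiv e).symm s(x, y) = s(e.symm x, e.symm y) := rfl
    rw [this, mem_tourEdges, mem_tourEdges]
    simp [Equiv.permCongr_apply, Equiv.eq_symm_apply]

theorem isTour_permCongr (e : Y ≃ Z) {σ : Equiv.Perm Y} (h : IsTour σ) :
    IsTour (e.permCongr σ) := by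
  obtain ⟨x₀, hx₀, -⟩ := h.1
  refine isTour_of_reach (fun x hx => ?_) (e x₀) (fun x y => ?_)
  · have h1 : σ (e.symm x) ≠ e.symm x :=
      Equiv.Perm.mem_support.1 (by rw [h.2]; exact mem_univ _)
    apply h1
    rw [Equiv.permCongr_apply] at hx
    rw [Equiv.eq_symm_apply, hx]
  · obtain ⟨n, hn⟩ := isTour_reach h (e.symm x) (e.symm y)
    refine ⟨n, ?_⟩
    have hp : ∀ n : ℕ, ∀ x, ((e.permCongr σ) ^ n) x = e ((σ ^ n) (e.symm x)) := by
      intro n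
      induction n with
      | zero => intro x; simp
      | succ n ih => intro x; rw [pow_succ', pow_succ']; simp [ih]
    rw [hp, hn]; simp

theorem tourWeight_permCongr (e : Y ≃ Z) (w : Sym2 Y → ℝ) (σ : Equiv.Perm Y) :
    tourWeight (fun x => w ((symEquiv e).symm x)) (e.permCongr σ) = tourWeight w σ := by
  simp [tourWeight, tourEdges_permCongr, Finset.sum_map]

theorem improving_permCongr (e : Y ≃ Z) (w : Sym2 Y → ℝ) (k : ℕ) {σ σ' : Equiv.Perm Y} :
    ImprovingKSwap (fun x => w ((symEquiv e).symm x)) k (e.permCongr σ) (e.permCongr σ') ↔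
      ImprovingKSwap w k σ σ' := by
  have ht : IsTour (e.permCongr σ') ↔ IsTour σ' := by
    refine ⟨fun h => ?_, isTour_permCongr e⟩
    have := isTour_permCongr e.symm h
    have h2 : e.symm.permCongr (e.permCongr σ') = σ' := by ext; simp
    rwa [h2] at this
  unfold ImprovingKSwap IsKSwap
  rw [tourWeight_permCongr, tourWeight_permCongr, tourEdges_permCongr, tourEdges_permCongr,
    ← Finset.map_sdiff, Finset.card_map, ht]

end Transport

set_option linter.unusedSectionVars false

/-- Counting argument: if the rank drops by at most one per improving swap and every tour of
positive rank has an improving swap, then maximal sequences are at least as long as the rank. -/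
theorem length_ge_rank {Z : Type*} [Fintype Z] [DecidableEq Z] (w : Sym2 Z → ℝ) (k : ℕ)
    {S : Type*} (R : Equiv.Perm Z → S → Prop) (rank : S → ℕ)
    (h1 : ∀ σ x, R σ x → ∀ σ', ImprovingKSwap w k σ σ' → ∃ x', R σ' x' ∧ rank x ≤ rank x' + 1)
    (h2 : ∀ σ x, R σ x → 0 < rank x → ∃ σ', ImprovingKSwap w k σ σ') :
    ∀ (l : List (Equiv.Perm Z)) (σ : Equiv.Perm Z) (x : S), R σ x →
      MaximalImprovingSwapSeq w k σ l → rank x ≤ l.length := by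
  intro l
  induction l with
  | nil =>
    intro σ x hR hl
    by_contra hlt
    obtain ⟨σ', hσ'⟩ := h2 σ x hR (by simp at hlt; omega)
    exact hl.2 σ' hσ'
  | cons τ l ih =>
    intro σ x hR hl
    obtain ⟨x', hR', hx'⟩ := h1 σ x hR τ hl.1.1
    have hm : MaximalImprovingSwapSeq w k τ l := by
      refine ⟨hl.1.2, ?_⟩
      have := hl.2
      rwa [List.getLast_cons (List.cons_ne_nil _ _)] at this
    have := ih τ x' hR' hm
    simp only [List.length_cons]
    omega

/-! ### The gadget construction -/

/-- Vertex kinds. -/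
inductive Kd
  | u
  | a
  | b
  deriving DecidableEq

instance : Fintype Kd := ⟨{Kd.u, Kd.a, Kd.b}, fun x => by cases x <;> decide⟩

/-- Places: visits of a variable. -/
abbrev Pl (U : Type) (m : ℕ) := U × Fin (m + 1)

/-- Darts: sides of places. -/
abbrev Dt (U : Type) (m : ℕ) := Pl U m × Bool

/-- Vertices of the TSP instance. -/
abbrev Wv (U : Type) (m : ℕ) := Dt U m × Kd

section Gadget
variable {U : Type} [Fintype U] [DecidableEq U] {m : ℕ}

/-- The rotation of the darts of a variable. -/
def rot (d : Dt U m) : Dt U m :=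
  ((d.1.1, d.1.2 + 1), if d.1.2 = Fin.last m then !d.2 else d.2)

theorem rot_inj : Function.Injective (rot : Dt U m → Dt U m) := by
  rintro ⟨⟨v, l⟩, s⟩ ⟨⟨v', l'⟩, s'⟩ h
  simp only [rot, Prod.mk.injEq, add_left_inj] at h
  obtain ⟨⟨rfl, rfl⟩, h⟩ := h
  split_ifs at h <;> simp_all

/-- The opposite side of a place. -/
def flp (d : Dt U m) : Dt U m := (d.1, !d.2)

theorem rot_flp (d : Dt U m) : rot (flp d) = flp (rot d) := by
  rcases d with ⟨⟨v, l⟩, s⟩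
  by_cases h : l = Fin.last m <;> simp [rot, flp, h]

theorem rot_var (d : Dt U m) : (rot d).1.1 = d.1.1 := rfl

theorem rot_const (x : Dt U m → Bool) (h : ∀ d, x d = true → x (rot d) = true) (d : Dt U m) :
    x d = x ((d.1.1, 0), false) := by
  have key : ∀ (v : U) (s : Bool), x ((v, 0), s) = true →
      ∀ (n : ℕ) (hn : n < m + 1), x ((v, ⟨n, hn⟩), s) = true := by
    intro v s hx n
    induction n with
    | zero => intro _; exact hx
    | succ n ih =>
      intro hn
      have h1 := h _ (ih (by omega))
      have h2 : rot (((v, ⟨n, by omega⟩), s) : Dt U m) = ((v, ⟨n + 1, hn⟩), s) := by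
        have hne : (⟨n, by omega⟩ : Fin (m + 1)) ≠ Fin.last m := by
          intro h3
          have := congrArg Fin.val h3
          simp at this
          omega
        simp only [rot, hne, if_false]
        have : ((⟨n, by omega⟩ : Fin (m + 1)) + 1) = ⟨n + 1, hn⟩ := by
          ext
          rw [Fin.val_add_one_of_lt]
          exact lt_of_le_of_ne (Fin.le_last _) hne
        rw [this]
      rwa [h2] at h1
  have wrap : ∀ (v : U) (s : Bool), x ((v, Fin.last m), s) = true → x ((v, 0), !s) = true := by
    intro v s hx
    have h1 := h _ hx
    have h2 : rot (((v, Fin.last m), s) : Dt U m) = ((v, 0), !s) := by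
      simp [rot]
    rwa [h2] at h1
  have key2 : ∀ (v : U) (s : Bool) (k : ℕ) (n : ℕ) (hn : n < m + 1), m - n = k →
      x ((v, ⟨n, hn⟩), s) = true → x ((v, Fin.last m), s) = true := by
    intro v s k
    induction k with
    | zero =>
      intro n hn hk hx
      have : (⟨n, hn⟩ : Fin (m + 1)) = Fin.last m := by ext; simp; omega
      rwa [this] at hx
    | succ k ih =>
      intro n hn hk hx
      have h1 := h _ hx
      have h2 : rot (((v, ⟨n, by omega⟩), s) : Dt U m) = ((v, ⟨n + 1, by omega⟩), s) := by
        have hne : (⟨n, by omega⟩ : Fin (m + 1)) ≠ Fin.last m := by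
          intro h3
          have := congrArg Fin.val h3
          simp at this
          omega
        simp only [rot, hne, if_false]
        have : ((⟨n, by omega⟩ : Fin (m + 1)) + 1) = ⟨n + 1, by omega⟩ := by
          ext
          rw [Fin.val_add_one_of_lt]
          exact lt_of_le_of_ne (Fin.le_last _) hne
        rw [this]
      rw [h2] at h1
      exact ih _ _ (by omega) h1
  have up : ∀ (v : U) (s s' : Bool) (l l' : Fin (m + 1)), x ((v, l), s) = true →
      x ((v, l'), s') = true := by
    intro v s s' l l' hx
    have h1 := wrap v s (key2 v s _ l.1 l.2 rfl hx)
    have h2 := wrap v (!s) (key v (!s) h1 m (by omega))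
    have h3 : ∀ s'', x ((v, 0), s'') = true := by
      intro s''
      cases s <;> cases s'' <;> simp_all
    exact key v s' (h3 s') l'.1 l'.2
  rcases d with ⟨⟨v, l⟩, s⟩
  rw [Bool.eq_iff_iff]
  exact ⟨up _ _ _ _ _, up _ _ _ _ _⟩

variable (nx : Equiv.Perm (Pl U m))

/-- The template tour. -/
def tmpl : Equiv.Perm (Wv U m) where
  toFun
    | ((τ, false), Kd.b) => ((τ, false), Kd.a)
    | ((τ, false), Kd.a) => ((τ, false), Kd.u)
    | ((τ, false), Kd.u) => ((τ, true), Kd.u)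
    | ((τ, true), Kd.u) => ((τ, true), Kd.a)
    | ((τ, true), Kd.a) => ((τ, true), Kd.b)
    | ((τ, true), Kd.b) => ((nx τ, false), Kd.b)
  invFun
    | ((τ, false), Kd.a) => ((τ, false), Kd.b)
    | ((τ, false), Kd.u) => ((τ, false), Kd.a)
    | ((τ, true), Kd.u) => ((τ, false), Kd.u)
    | ((τ, true), Kd.a) => ((τ, true), Kd.u)
    | ((τ, true), Kd.b) => ((τ, true), Kd.a)
    | ((τ, false), Kd.b) => ((nx.symm τ, true), Kd.b)
  left_inv := by
    rintro ⟨⟨τ, s⟩, k⟩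
    cases s <;> cases k <;> simp
  right_inv := by
    rintro ⟨⟨τ, s⟩, k⟩
    cases s <;> cases k <;> simp

/-- The relabelling belonging to an assignment. -/
def relFun (X : U → Bool) (y : Wv U m) : Wv U m :=
  if X y.1.1.1 then
    match y.2 with
    | Kd.u => (rot y.1, Kd.u)
    | Kd.a => (y.1, Kd.b)
    | Kd.b => (y.1, Kd.a)
  else y

theorem relFun_inj (X : U → Bool) : Function.Injective (relFun X : Wv U m → Wv U m) := by
  rintro ⟨d, k⟩ ⟨d', k'⟩ h
  by_cases h1 : X d.1.1 <;> by_cases h2 : X d'.1.1 <;> cases k <;> cases k' <;>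
    simp only [relFun, h1, h2, if_true, if_false, Prod.mk.injEq, reduceCtorEq, and_false,
      and_true, Bool.false_eq_true] at h ⊢
  all_goals first
    | exact h
    | exact rot_inj h
    | (exfalso; subst h; simp_all [rot_var])

/-- The relabelling as a permutation. -/
noncomputable def rel (X : U → Bool) : Equiv.Perm (Wv U m) :=
  Equiv.ofBijective (relFun X) (Finite.injective_iff_bijective.1 (relFun_inj X))

/-- The tour of an assignment. -/
noncomputable def tourOf (X : U → Bool) : Equiv.Perm (Wv U m) :=
  (rel X).permCongr (tmpl nx)

theorem tourOf_rel (X : U → Bool) (y : Wv U m) :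
    tourOf nx X (rel X y) = rel X (tmpl nx y) := by
  simp [tourOf]

theorem tmpl_isTour (hnx : ∀ x y : Pl U m, ∃ n : ℕ, (nx ^ n) x = y) (τ₀ : Pl U m) :
    IsTour (tmpl nx) := by
  refine isTour_of_reach ?_ ((τ₀, false), Kd.b) ?_
  · rintro ⟨⟨τ, s⟩, k⟩
    cases s <;> cases k <;> simp [tmpl]
  · have trans : ∀ x y z : Wv U m, (∃ n : ℕ, (tmpl nx ^ n) x = y) → (∃ n : ℕ, (tmpl nx ^ n) y = z) →
        ∃ n : ℕ, (tmpl nx ^ n) x = z := by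
      rintro x y z ⟨n, rfl⟩ ⟨n', rfl⟩
      exact ⟨n' + n, by rw [pow_add]; rfl⟩
    have one : ∀ x y : Wv U m, tmpl nx x = y → ∃ n : ℕ, (tmpl nx ^ n) x = y :=
      fun x y h => ⟨1, by simpa using h⟩
    have toB : ∀ x : Wv U m, ∃ n : ℕ, (tmpl nx ^ n) x = ((nx x.1.1, false), Kd.b) := by
      have h5 : ∀ τ, ∃ n : ℕ, (tmpl nx ^ n) ((τ, true), Kd.b) = ((nx τ, false), Kd.b) :=
        fun τ => one _ _ rfl
      have h4 : ∀ τ, ∃ n : ℕ, (tmpl nx ^ n) ((τ, true), Kd.a) = ((nx τ, false), Kd.b) :=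
        fun τ => trans _ _ _ (one _ _ rfl) (h5 τ)
      have h3 : ∀ τ, ∃ n : ℕ, (tmpl nx ^ n) ((τ, true), Kd.u) = ((nx τ, false), Kd.b) :=
        fun τ => trans _ _ _ (one _ _ rfl) (h4 τ)
      have h2 : ∀ τ, ∃ n : ℕ, (tmpl nx ^ n) ((τ, false), Kd.u) = ((nx τ, false), Kd.b) :=
        fun τ => trans _ _ _ (one _ _ rfl) (h3 τ)
      have h1 : ∀ τ, ∃ n : ℕ, (tmpl nx ^ n) ((τ, false), Kd.a) = ((nx τ, false), Kd.b) :=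
        fun τ => trans _ _ _ (one _ _ rfl) (h2 τ)
      have h0 : ∀ τ, ∃ n : ℕ, (tmpl nx ^ n) ((τ, false), Kd.b) = ((nx τ, false), Kd.b) :=
        fun τ => trans _ _ _ (one _ _ rfl) (h1 τ)
      rintro ⟨⟨τ, s⟩, k⟩
      cases s <;> cases k <;> first | exact h0 τ | exact h1 τ | exact h2 τ | exact h3 τ | exact h4 τ | exact h5 τ
    have fromB : ∀ x : Wv U m, ∃ n : ℕ, (tmpl nx ^ n) ((x.1.1, false), Kd.b) = x := by
      have h0 : ∀ τ, ∃ n : ℕ, (tmpl nx ^ n) ((τ, false), Kd.b) = ((τ, false), Kd.b) :=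
        fun τ => ⟨0, rfl⟩
      have h1 : ∀ τ, ∃ n : ℕ, (tmpl nx ^ n) ((τ, false), Kd.b) = ((τ, false), Kd.a) :=
        fun τ => one _ _ rfl
      have h2 : ∀ τ, ∃ n : ℕ, (tmpl nx ^ n) ((τ, false), Kd.b) = ((τ, false), Kd.u) :=
        fun τ => trans _ _ _ (h1 τ) (one _ _ rfl)
      have h3 : ∀ τ, ∃ n : ℕ, (tmpl nx ^ n) ((τ, false), Kd.b) = ((τ, true), Kd.u) :=
        fun τ => trans _ _ _ (h2 τ) (one _ _ rfl)
      have h4 : ∀ τ, ∃ n : ℕ, (tmpl nx ^ n) ((τ, false), Kd.b) = ((τ, true), Kd.a) :=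
        fun τ => trans _ _ _ (h3 τ) (one _ _ rfl)
      have h5 : ∀ τ, ∃ n : ℕ, (tmpl nx ^ n) ((τ, false), Kd.b) = ((τ, true), Kd.b) :=
        fun τ => trans _ _ _ (h4 τ) (one _ _ rfl)
      rintro ⟨⟨τ, s⟩, k⟩
      cases s <;> cases k <;> first | exact h0 τ | exact h1 τ | exact h2 τ | exact h3 τ | exact h4 τ | exact h5 τ
    have BB : ∀ (n : ℕ) (τ : Pl U m),
        ∃ n' : ℕ, (tmpl nx ^ n') ((τ, false), Kd.b) = (((nx ^ n) τ, false), Kd.b) := by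
      intro n
      induction n with
      | zero => intro τ; exact ⟨0, rfl⟩
      | succ n ih =>
        intro τ
        rw [pow_succ']
        exact trans _ _ _ (ih τ) (toB (((nx ^ n) τ, false), Kd.b))
    intro x y
    obtain ⟨n, hn⟩ := hnx (nx x.1.1) y.1.1
    have := BB n (nx x.1.1)
    rw [hn] at this
    exact trans _ _ _ (toB x) (trans _ _ _ this (fromB y))

theorem tourOf_isTour (hnx : ∀ x y : Pl U m, ∃ n : ℕ, (nx ^ n) x = y) (τ₀ : Pl U m)
    (X : U → Bool) : IsTour (tourOf nx X) :=
  isTour_permCongr _ (tmpl_isTour nx hnx τ₀)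

theorem mem_tourOf (X : U → Bool) (e : Sym2 (Wv U m)) :
    e ∈ tourEdges (tourOf nx X) ↔ ∃ y, e = s(rel X y, rel X (tmpl nx y)) := by
  simp only [tourEdges, mem_image, mem_univ, true_and]
  constructor
  · rintro ⟨v, rfl⟩
    refine ⟨(rel X).symm v, ?_⟩
    rw [← tourOf_rel]; simp
  · rintro ⟨y, rfl⟩
    exact ⟨rel X y, by rw [tourOf_rel]⟩

theorem rel_apply (X : U → Bool) (y : Wv U m) : rel X y = relFun X y := rfl

theorem rel_false_of {X : U → Bool} {y : Wv U m} (h : X y.1.1.1 = false) : rel X y = y := by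
  simp [rel_apply, relFun, h]

end Gadget

set_option linter.unusedSectionVars false

section Gadget2
variable {U : Type} [Fintype U] [DecidableEq U] {m : ℕ}

/-- The matching of the weight-zero edges. -/
def fm (x : Wv U m) : Wv U m :=
  match x with
  | (d, Kd.u) => (flp d, Kd.u)
  | (d, Kd.a) => (d, Kd.b)
  | (d, Kd.b) => (d, Kd.a)

theorem flp_flp (d : Dt U m) : flp (flp d) = d := by simp [flp]

theorem fm_fm (x : Wv U m) : fm (fm x) = x := by
  rcases x with ⟨d, k⟩
  cases k <;> simp [fm, flp_flp]

/-- The medium edges, oriented. -/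
def Mrel (nx : Equiv.Perm (Pl U m)) (x y : Wv U m) : Prop :=
  (x.2 = Kd.u ∧ y = (x.1, Kd.a)) ∨ (x.2 = Kd.u ∧ y.2 = Kd.b ∧ x.1 = rot y.1) ∨
    (x.2 ≠ Kd.u ∧ y.2 ≠ Kd.u ∧ x.1.2 = true ∧ y.1 = (nx x.1.1, false))

variable (nx : Equiv.Perm (Pl U m))

/-- The other side of a cell. -/
def opp (d : Dt U m) : Dt U m := if d.2 then (nx d.1, false) else (nx.symm d.1, true)

theorem opp_opp (d : Dt U m) : opp nx (opp nx d) = d := by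
  rcases d with ⟨τ, s⟩
  cases s <;> simp [opp]

set_option maxHeartbeats 1000000 in
theorem normal_form {σ : Equiv.Perm (Wv U m)} (hσ : IsTour σ)
    (hc : 3 ≤ Fintype.card (Wv U m))
    (hF : ∀ x, s(x, fm x) ∈ tourEdges σ)
    (hM : ∀ x y, s(x, y) ∈ tourEdges σ → y = fm x ∨ Mrel nx x y ∨ Mrel nx y x) :
    ∃ X : U → Bool, tourEdges (tourOf nx X) ⊆ tourEdges σ := by
  choose g hg1 hg2 using isTour_other hσ hc fm hF
  have hE : ∀ x, s(x, g x) ∈ tourEdges σ := fun x => (hg2 x _).2 (Or.inr rfl)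
  have hgg : ∀ x, g (g x) = x := by
    intro x
    have h1 : s(g x, x) ∈ tourEdges σ := by rw [Sym2.eq_swap]; exact hE x
    rcases (hg2 _ _).1 h1 with h | h
    · exfalso
      apply hg1 x
      rw [h, fm_fm, ← h]
    · exact h.symm
  have hMg : ∀ x, Mrel nx x (g x) ∨ Mrel nx (g x) x := fun x =>
    (hM x _ (hE x)).resolve_left (hg1 x)
  have hu : ∀ d, g (d, Kd.u) = (d, Kd.a) ∨ ∃ d', d = rot d' ∧ g (d, Kd.u) = (d', Kd.b) := by
    intro d
    rcases hMg (d, Kd.u) with (h | h | h) | (h | h | h)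
    · exact Or.inl h.2
    · exact Or.inr ⟨(g (d, Kd.u)).1, h.2.2, Prod.ext rfl h.2.1⟩
    · exact absurd rfl h.1
    · exact absurd (congrArg Prod.snd h.2) (by simp)
    · exact absurd h.2.1 (by simp)
    · exact absurd rfl h.2.1
  have hcell : ∀ x y : Wv U m,
      (x.2 ≠ Kd.u ∧ y.2 ≠ Kd.u ∧ x.1.2 = true ∧ y.1 = (nx x.1.1, false)) →
        y.1 = opp nx x.1 ∧ x.1 = opp nx y.1 := by
    intro x y h
    have h1 : y.1 = opp nx x.1 := by rw [h.2.2.2]; simp [opp, h.2.2.1]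
    exact ⟨h1, by rw [h1, opp_opp]⟩
  have ha : ∀ d, g (d, Kd.a) = (d, Kd.u) ∨
      ((g (d, Kd.a)).1 = opp nx d ∧ (g (d, Kd.a)).2 ≠ Kd.u) := by
    intro d
    rcases hMg (d, Kd.a) with (h | h | h) | (h | h | h)
    · exact absurd h.1 (by simp)
    · exact absurd h.1 (by simp)
    · exact Or.inr ⟨(hcell _ _ h).1, h.2.1⟩
    · left
      exact Prod.ext (congrArg Prod.fst h.2).symm h.1
    · exact absurd h.2.1 (by simp)
    · exact Or.inr ⟨(hcell _ _ h).2, h.1⟩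
  have hb : ∀ d, g (d, Kd.b) = (rot d, Kd.u) ∨
      ((g (d, Kd.b)).1 = opp nx d ∧ (g (d, Kd.b)).2 ≠ Kd.u) := by
    intro d
    rcases hMg (d, Kd.b) with (h | h | h) | (h | h | h)
    · exact absurd h.1 (by simp)
    · exact absurd h.1 (by simp)
    · exact Or.inr ⟨(hcell _ _ h).1, h.2.1⟩
    · exact absurd (congrArg Prod.snd h.2) (by simp)
    · left
      exact Prod.ext h.2.2 h.1
    · exact Or.inr ⟨(hcell _ _ h).2, h.1⟩
  let x : Dt U m → Bool := fun d => decide (g (d, Kd.u) ≠ (d, Kd.a))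
  have xa : ∀ d, x d = true → g (d, Kd.a) ≠ (d, Kd.u) := by
    intro d hd h
    have : g (d, Kd.u) = (d, Kd.a) := by rw [← h, hgg]
    simp [x, this] at hd
  have xb : ∀ d, x (rot d) = false → g (d, Kd.b) ≠ (rot d, Kd.u) := by
    intro d hd h
    have : g (rot d, Kd.u) = (d, Kd.b) := by rw [← h, hgg]
    simp [x, this] at hd
  have hstep : ∀ d, x d = true → x (rot d) = true := by
    intro d hd
    by_contra hr
    have hr : x (rot d) = false := by simpa using hr
    have h1 := (ha d).resolve_left (xa d hd)
    have h2 := (hb d).resolve_left (xb d hr)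
    have hne : g (d, Kd.a) ≠ g (d, Kd.b) := by
      intro h
      have := congrArg g h
      rw [hgg, hgg] at this
      simp at this
    have hS := isTour_closed hσ {y | (y.1 = d ∨ y.1 = opp nx d) ∧ y.2 ≠ Kd.u} (d, Kd.a)
      (by simp) ?_ (d, Kd.u)
    · simp at hS
    · rintro z ⟨hz1, hz2⟩
      have hz : σ z = fm z ∨ σ z = g z := (hg2 z _).1 (mem_tourEdges.2 (Or.inl rfl))
      rcases z with ⟨e, k⟩
      simp only at hz1 hz2
      rcases hz with hz | hz
      · rw [hz]
        cases k
        · exact absurd rfl hz2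
        · exact ⟨hz1, by simp [fm]⟩
        · exact ⟨hz1, by simp [fm]⟩
      · rw [hz]
        rcases hz1 with rfl | rfl
        · cases k
          · exact absurd rfl hz2
          · exact ⟨Or.inr h1.1, h1.2⟩
          · exact ⟨Or.inr h2.1, h2.2⟩
        · have : (opp nx d, k) = g (d, Kd.a) ∨ (opp nx d, k) = g (d, Kd.b) := by
            rcases h3 : g (d, Kd.a) with ⟨e1, k1⟩
            rcases h4 : g (d, Kd.b) with ⟨e2, k2⟩
            rw [h3] at h1 hne
            rw [h4] at h2 hne
            obtain ⟨h5, h6⟩ := h1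
            obtain ⟨h7, h8⟩ := h2
            simp only at h5 h6 h7 h8
            rw [h5, h7] at hne
            rw [h5, h7]
            have hk : k1 ≠ k2 := fun h => hne (by rw [h])
            clear * - hk h6 h8 hz2
            cases k <;> cases k1 <;> cases k2 <;> simp at hk h6 h8 hz2 ⊢
          rcases this with h | h
          · rw [h, hgg]; exact ⟨Or.inl rfl, by simp⟩
          · rw [h, hgg]; exact ⟨Or.inl rfl, by simp⟩
  have hconst := rot_const x hstep
  let X : U → Bool := fun v => x ((v, 0), false)
  have hX : ∀ d, X d.1.1 = x d := fun d => (hconst d).symm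
  have gua : ∀ d, X d.1.1 = false → g (d, Kd.u) = (d, Kd.a) := by
    intro d hd
    rw [hX] at hd
    simpa [x] using hd
  have gub : ∀ d, X d.1.1 = true → g (rot d, Kd.u) = (d, Kd.b) := by
    intro d hd
    have h1 : x (rot d) = true := by rw [← hX, rot_var]; exact hd
    rcases hu (rot d) with h | ⟨d', h, h'⟩
    · simp [x, h] at h1
    · rw [h', rot_inj h]
  let fr : Dt U m → Kd := fun d => if X d.1.1 then Kd.a else Kd.b
  have hfr : ∀ d, g (d, fr d) = (opp nx d, fr (opp nx d)) := by
    intro d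
    have h1 : (g (d, fr d)).1 = opp nx d ∧ (g (d, fr d)).2 ≠ Kd.u := by
      by_cases h : X d.1.1 = true
      · simp only [fr, h, if_true]
        exact (ha d).resolve_left (xa d (by rw [← hX, h]))
      · have h : X d.1.1 = false := by simpa using h
        simp only [fr, h]
        exact (hb d).resolve_left (xb d (by rw [← hX, rot_var, h]))
    refine Prod.ext h1.1 ?_
    have h2 : g (opp nx d, (g (d, fr d)).2) = (d, fr d) := by
      have : (opp nx d, (g (d, fr d)).2) = g (d, fr d) := Prod.ext h1.1.symm rfl
      rw [this, hgg]
    have hfu : ∀ d, fr d ≠ Kd.u := by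
      intro d
      simp only [fr]
      split_ifs <;> simp
    show (g (d, fr d)).2 = fr (opp nx d)
    generalize (g (d, fr d)).2 = k at h1 h2
    by_cases h : X (opp nx d).1.1 = true
    · simp only [fr, h, if_true]
      cases k
      · exact absurd rfl h1.2
      · rfl
      · have h3 : g (opp nx d, Kd.b) = (rot (opp nx d), Kd.u) := by rw [← gub _ h, hgg]
        rw [h3] at h2
        exact absurd (congrArg Prod.snd h2).symm (hfu d)
    · have h : X (opp nx d).1.1 = false := by simpa using h
      simp only [fr, h]
      cases k
      · exact absurd rfl h1.2
      · have h3 : g (opp nx d, Kd.a) = (opp nx d, Kd.u) := by rw [← gua _ h, hgg]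
        rw [h3] at h2
        exact absurd (congrArg Prod.snd h2).symm (hfu d)
      · rfl
  refine ⟨X, fun e he => ?_⟩
  have relz : ∀ d : Dt U m, rel X (d, Kd.b) = (d, fr d) := by
    intro d
    by_cases h : X d.1.1 = true <;> simp [rel_apply, relFun, h, fr]
  have relu : ∀ d : Dt U m, s(rel X (d, Kd.a), rel X (d, Kd.u)) ∈ tourEdges σ := by
    intro d
    by_cases h : X d.1.1 = true
    · simp only [rel_apply, relFun, h, if_true]
      rw [Sym2.eq_swap, ← gub d h]
      exact hE _
    · have h : X d.1.1 = false := by simpa using h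
      simp only [rel_apply, relFun, h]
      rw [Sym2.eq_swap]
      simp only [Bool.false_eq_true, if_false]
      rw [← gua d h]
      exact hE _
  have relbl : ∀ d : Dt U m, rel X (d, Kd.a) = fm (rel X (d, Kd.b)) := by
    intro d
    by_cases h : X d.1.1 = true <;> simp [rel_apply, relFun, h, fm]
  have reluu : ∀ d : Dt U m, rel X (flp d, Kd.u) = fm (rel X (d, Kd.u)) := by
    intro d
    have : (flp d).1.1 = d.1.1 := rfl
    by_cases h : X d.1.1 = true <;> simp [rel_apply, relFun, h, fm, this, rot_flp]
  obtain ⟨⟨⟨τ, s⟩, k⟩, rfl⟩ := (mem_tourOf nx X e).1 he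
  cases s <;> cases k
  · show s(rel X ((τ, false), Kd.u), rel X (flp (τ, false), Kd.u)) ∈ _
    rw [reluu]; exact hF _
  · exact relu _
  · show s(rel X ((τ, false), Kd.b), rel X ((τ, false), Kd.a)) ∈ _
    rw [relbl]; exact hF _
  · show s(rel X ((τ, true), Kd.u), rel X ((τ, true), Kd.a)) ∈ _
    rw [Sym2.eq_swap]; exact relu _
  · show s(rel X ((τ, true), Kd.a), rel X ((τ, true), Kd.b)) ∈ _
    rw [relbl, Sym2.eq_swap]; exact hF _
  · show s(rel X ((τ, true), Kd.b), rel X ((nx τ, false), Kd.b)) ∈ _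
    have h1 : ((nx τ, false) : Dt U m) = opp nx (τ, true) := by simp [opp]
    rw [relz, relz, h1, ← hfr]
    exact hE _

end Gadget2

set_option linter.unusedSectionVars false

section Gadget3
variable {U : Type} [Fintype U] [DecidableEq U] {m : ℕ}
variable (nx : Equiv.Perm (Pl U m)) (cost : Pl U m → Bool → Bool → ℝ) (K Bg : ℝ)

/-- Is the kind `a`? -/
def isA (k : Kd) : Bool := decide (k = Kd.a)

open Classical in
/-- The oriented weight. -/
noncomputable def wt (x y : Wv U m) : ℝ :=
  if y = fm x then 0
  else if Mrel nx x y then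
    (if x.2 = Kd.u then K else K + cost x.1.1 (isA x.2) (isA y.2))
  else Bg

/-- The weight function. -/
noncomputable def wgt : Sym2 (Wv U m) → ℝ :=
  Sym2.lift ⟨fun x y => min (wt nx cost K Bg x y) (wt nx cost K Bg y x), fun _ _ => min_comm _ _⟩

theorem wgt_mk (x y : Wv U m) :
    wgt nx cost K Bg s(x, y) = min (wt nx cost K Bg x y) (wt nx cost K Bg y x) := rfl

variable {nx cost K Bg}

theorem wt_nonneg (hcost : ∀ τ x y, 0 ≤ cost τ x y) (hK : 0 ≤ K) (hB : K ≤ Bg) (x y : Wv U m) :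
    0 ≤ wt nx cost K Bg x y := by
  unfold wt
  split_ifs
  · exact le_rfl
  · exact hK
  · exact add_nonneg hK (hcost _ _ _)
  · exact hK.trans hB

theorem wt_ge (hcost : ∀ τ x y, 0 ≤ cost τ x y) (hB : K ≤ Bg) {x y : Wv U m}
    (h : y ≠ fm x) : K ≤ wt nx cost K Bg x y := by
  unfold wt
  rw [if_neg h]
  split_ifs
  · exact le_rfl
  · have := hcost x.1.1 (isA x.2) (isA y.2)
    linarith
  · exact hB

theorem wgt_nonneg (hcost : ∀ τ x y, 0 ≤ cost τ x y) (hK : 0 ≤ K) (hB : K ≤ Bg)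
    (e : Sym2 (Wv U m)) : 0 ≤ wgt nx cost K Bg e := by
  induction e using Sym2.ind with
  | _ x y =>
    rw [wgt_mk]
    exact le_min (wt_nonneg hcost hK hB _ _) (wt_nonneg hcost hK hB _ _)

theorem wgt_fm (hcost : ∀ τ x y, 0 ≤ cost τ x y) (hK : 0 ≤ K) (hB : K ≤ Bg) (x : Wv U m) :
    wgt nx cost K Bg s(x, fm x) = 0 := by
  have h1 : wt nx cost K Bg x (fm x) = 0 := by simp [wt]
  rw [wgt_mk, h1, min_eq_left (wt_nonneg hcost hK hB _ _)]

theorem wgt_ge (hcost : ∀ τ x y, 0 ≤ cost τ x y) (hB : K ≤ Bg) {x y : Wv U m}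
    (h : y ≠ fm x) : K ≤ wgt nx cost K Bg s(x, y) := by
  have h' : x ≠ fm y := fun h1 => h (by rw [h1, fm_fm])
  rw [wgt_mk]
  exact le_min (wt_ge hcost hB h) (wt_ge hcost hB h')

theorem wgt_lt {x y : Wv U m} (h : wgt nx cost K Bg s(x, y) < Bg) :
    y = fm x ∨ Mrel nx x y ∨ Mrel nx y x := by
  by_contra hn
  push Not at hn
  have h' : x ≠ fm y := fun h1 => hn.1 (by rw [h1, fm_fm])
  rw [wgt_mk, wt, wt, if_neg hn.1, if_neg h', if_neg hn.2.1, if_neg hn.2.2] at h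
  simp at h

theorem wgt_M (hcost : ∀ τ x y, cost τ x y + K ≤ Bg) (hB : K ≤ Bg) {x y : Wv U m}
    (h : y ≠ fm x) (h1 : Mrel nx x y) (h2 : ¬ Mrel nx y x) :
    wgt nx cost K Bg s(x, y) = if x.2 = Kd.u then K else K + cost x.1.1 (isA x.2) (isA y.2) := by
  have h' : x ≠ fm y := fun h1 => h (by rw [h1, fm_fm])
  rw [wgt_mk, wt, wt, if_neg h, if_neg h', if_pos h1, if_neg h2, min_eq_left]
  split_ifs
  · exact hB
  · have := hcost x.1.1 (isA x.2) (isA y.2)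
    linarith

/-- The set of weight-zero edges. -/
def Fset (U : Type) [Fintype U] [DecidableEq U] (m : ℕ) : Finset (Sym2 (Wv U m)) :=
  (Finset.univ.image fun τ : Pl U m => s(((τ, false), Kd.u), ((τ, true), Kd.u))) ∪
    (Finset.univ.image fun d : Dt U m => s((d, Kd.a), (d, Kd.b)))

theorem card_Fset : (Fset U m).card ≤ 3 * Fintype.card (Pl U m) := by
  refine (card_union_le _ _).trans ?_
  have h1 := Finset.card_image_le (s := Finset.univ)
    (f := fun τ : Pl U m => s((((τ, false), Kd.u) : Wv U m), ((τ, true), Kd.u)))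
  have h2 := Finset.card_image_le (s := Finset.univ)
    (f := fun d : Dt U m => s(((d, Kd.a) : Wv U m), (d, Kd.b)))
  have h3 : Fintype.card (Dt U m) = 2 * Fintype.card (Pl U m) := by
    rw [Fintype.card_prod (Pl U m) Bool, Fintype.card_bool]; ring
  rw [Finset.card_univ] at h1 h2
  rw [h3] at h2
  omega

theorem mem_Fset (x y : Wv U m) : s(x, y) ∈ Fset U m ↔ y = fm x := by
  rcases x with ⟨⟨τ, s⟩, k⟩
  rcases y with ⟨⟨τ', s'⟩, k'⟩
  simp only [Fset, mem_union, mem_image, mem_univ, true_and, Sym2.eq_iff]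
  constructor
  · rintro (⟨t, ⟨h1, h2⟩ | ⟨h1, h2⟩⟩ | ⟨t, ⟨h1, h2⟩ | ⟨h1, h2⟩⟩)
    · simp only [Prod.mk.injEq] at h1 h2
      obtain ⟨⟨rfl, rfl⟩, rfl⟩ := h1
      obtain ⟨⟨rfl, rfl⟩, rfl⟩ := h2
      rfl
    · simp only [Prod.mk.injEq] at h1 h2
      obtain ⟨⟨rfl, rfl⟩, rfl⟩ := h1
      obtain ⟨⟨rfl, rfl⟩, rfl⟩ := h2
      rfl
    · rw [← h1, ← h2]; rfl
    · rw [← h1, ← h2]; rfl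
  · intro h
    rw [h]
    cases k
    · cases s
      · exact Or.inl ⟨τ, Or.inl ⟨rfl, rfl⟩⟩
      · exact Or.inl ⟨τ, Or.inr ⟨rfl, rfl⟩⟩
    · exact Or.inr ⟨_, Or.inl ⟨rfl, rfl⟩⟩
    · exact Or.inr ⟨_, Or.inr ⟨rfl, rfl⟩⟩

theorem card_Wv : Fintype.card (Wv U m) = 6 * Fintype.card (Pl U m) := by
  rw [Fintype.card_prod (Dt U m) Kd, Fintype.card_prod (Pl U m) Bool, Fintype.card_bool]
  have : Fintype.card Kd = 3 := rfl
  rw [this]; ring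

/-- Every cheap tour is the tour of an assignment. -/
theorem cheap_tour (hcost : ∀ τ x y, 0 ≤ cost τ x y) (hK : 0 < K)
    (hB : (3 * Fintype.card (Pl U m) + 1) * K ≤ Bg)
    (hp : 0 < Fintype.card (Pl U m)) (hnx : ∀ x y : Pl U m, ∃ n : ℕ, (nx ^ n) x = y)
    {σ : Equiv.Perm (Wv U m)} (hσ : IsTour σ)
    (hw : tourWeight (wgt nx cost K Bg) σ < (3 * Fintype.card (Pl U m) + 1) * K) :
    ∃ X : U → Bool, tourEdges σ = tourEdges (tourOf nx X) := by
  set p := Fintype.card (Pl U m) with hpdef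
  have hc : 3 ≤ Fintype.card (Wv U m) := by rw [card_Wv]; omega
  have hKB : K ≤ Bg := by
    refine le_trans ?_ hB
    have : (0:ℝ) ≤ p := Nat.cast_nonneg p
    nlinarith
  have hnn := wgt_nonneg (nx := nx) hcost hK.le hKB
  have hT : (tourEdges σ).card = 6 * p := by rw [card_tourEdges hσ hc, card_Wv]
  have hFT : Fset U m ⊆ tourEdges σ := by
    have h1 : ((tourEdges σ \ Fset U m).card : ℝ) * K ≤ tourWeight (wgt nx cost K Bg) σ := by
      have h2 : ∑ e ∈ tourEdges σ \ Fset U m, wgt nx cost K Bg e ≤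
          tourWeight (wgt nx cost K Bg) σ :=
        Finset.sum_le_sum_of_subset_of_nonneg Finset.sdiff_subset (fun e _ _ => hnn e)
      refine le_trans ?_ h2
      rw [← nsmul_eq_mul]
      apply Finset.card_nsmul_le_sum
      intro e he
      induction e using Sym2.ind with
      | _ x y =>
        apply wgt_ge hcost hKB
        intro h
        exact (Finset.mem_sdiff.1 he).2 ((mem_Fset x y).2 h)
    have h2 : ((tourEdges σ \ Fset U m).card : ℝ) < 3 * p + 1 := by
      have := h1.trans_lt hw
      exact lt_of_mul_lt_mul_right this hK.le
    have h3 : (tourEdges σ \ Fset U m).card < 3 * p + 1 := by exact_mod_cast h2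
    have h4 := Finset.card_sdiff_add_card_inter (tourEdges σ) (Fset U m)
    have h5 : (Fset U m).card ≤ (tourEdges σ ∩ Fset U m).card := by
      have := card_Fset (U := U) (m := m)
      omega
    have h6 := Finset.eq_of_subset_of_card_le (Finset.inter_subset_right) h5
    rw [← h6]
    exact Finset.inter_subset_left
  obtain ⟨X, hX⟩ := normal_form nx hσ hc (fun x => hFT ((mem_Fset _ _).2 rfl)) (by
    intro x y hxy
    apply wgt_lt (cost := cost) (K := K) (Bg := Bg)
    refine lt_of_le_of_lt ?_ (hw.trans_le hB)
    exact Finset.single_le_sum (f := wgt nx cost K Bg) (fun e _ => hnn e) hxy)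
  refine ⟨X, (Finset.eq_of_subset_of_card_le hX ?_).symm⟩
  obtain ⟨τ₀⟩ : Nonempty (Pl U m) := Fintype.card_pos_iff.1 hp
  rw [card_tourEdges hσ hc, card_tourEdges (tourOf_isTour nx hnx τ₀ X) hc]

variable (nx cost) in
/-- The energy of an assignment. -/
noncomputable def energy (X : U → Bool) : ℝ :=
  ∑ τ : Pl U m, cost τ (X τ.1) (X (nx τ).1)

theorem weight_tourOf (hcost : ∀ τ x y, 0 ≤ cost τ x y) (hcost2 : ∀ τ x y, cost τ x y + K ≤ Bg)
    (hK : 0 < K) (hB : K ≤ Bg)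
    (hp : 0 < Fintype.card (Pl U m)) (hnx : ∀ x y : Pl U m, ∃ n : ℕ, (nx ^ n) x = y)
    (X : U → Bool) :
    tourWeight (wgt nx cost K Bg) (tourOf nx X) =
      3 * Fintype.card (Pl U m) * K + energy nx cost X := by
  obtain ⟨τ₀⟩ : Nonempty (Pl U m) := Fintype.card_pos_iff.1 hp
  have hc : 3 ≤ Fintype.card (Wv U m) := by rw [card_Wv]; omega
  rw [tourWeight_eq_sum (tourOf_isTour nx hnx τ₀ X) hc]
  rw [← Equiv.sum_comp (rel X)]
  simp only [tourOf_rel]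
  have relbl : ∀ d : Dt U m, rel X (d, Kd.a) = fm (rel X (d, Kd.b)) := by
    intro d
    by_cases h : X d.1.1 = true <;> simp [rel_apply, relFun, h, fm]
  have reluu : ∀ d : Dt U m, rel X (flp d, Kd.u) = fm (rel X (d, Kd.u)) := by
    intro d
    have : (flp d).1.1 = d.1.1 := rfl
    by_cases h : X d.1.1 = true <;> simp [rel_apply, relFun, h, fm, this, rot_flp]
  have hab : ∀ d : Dt U m, wgt nx cost K Bg s(rel X (d, Kd.b), rel X (d, Kd.a)) = 0 := by
    intro d
    rw [relbl, wgt_fm hcost hK.le hB]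
  have hua : ∀ d : Dt U m, wgt nx cost K Bg s(rel X (d, Kd.u), rel X (d, Kd.a)) = K := by
    intro d
    by_cases h : X d.1.1 = true
    · simp only [rel_apply, relFun, h, if_true]
      rw [wgt_M hcost2 hB (by simp [fm]) (by simp [Mrel]) (by simp [Mrel])]
      simp
    · simp only [rel_apply, relFun, h, if_false, Bool.false_eq_true]
      rw [wgt_M hcost2 hB (by simp [fm]) (by simp [Mrel]) (by simp [Mrel])]
      simp
  have hcell : ∀ τ : Pl U m,
      wgt nx cost K Bg s(rel X ((τ, true), Kd.b), rel X ((nx τ, false), Kd.b)) =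
        K + cost τ (X τ.1) (X (nx τ).1) := by
    intro τ
    by_cases h : X τ.1 = true <;> by_cases h' : X (nx τ).1 = true <;>
      simp only [rel_apply, relFun, h, h', if_true, if_false, Bool.false_eq_true] <;>
      rw [wgt_M hcost2 hB (by simp [fm]) (by simp [Mrel]) (by simp [Mrel])] <;>
      simp [isA]
  have hτ : ∀ τ : Pl U m, ∑ s : Bool, ∑ k : Kd,
      wgt nx cost K Bg s(rel X ((τ, s), k), rel X (tmpl nx ((τ, s), k))) =
        3 * K + cost τ (X τ.1) (X (nx τ).1) := by
    intro τ
    have hk : ∀ f : Kd → ℝ, ∑ k : Kd, f k = f Kd.u + f Kd.a + f Kd.b := by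
      intro f
      show ∑ k ∈ {Kd.u, Kd.a, Kd.b}, f k = _
      rw [Finset.sum_insert (by decide), Finset.sum_insert (by decide), Finset.sum_singleton]
      ring
    simp only [hk, Fintype.sum_bool]
    have e1 : tmpl nx ((τ, true), Kd.u) = ((τ, true), Kd.a) := rfl
    have e2 : tmpl nx ((τ, true), Kd.a) = ((τ, true), Kd.b) := rfl
    have e3 : tmpl nx ((τ, true), Kd.b) = ((nx τ, false), Kd.b) := rfl
    have e4 : tmpl nx ((τ, false), Kd.u) = (flp (τ, false), Kd.u) := rfl
    have e5 : tmpl nx ((τ, false), Kd.a) = ((τ, false), Kd.u) := rfl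
    have e6 : tmpl nx ((τ, false), Kd.b) = ((τ, false), Kd.a) := rfl
    rw [e1, e2, e3, e4, e5, e6, hua, hcell, hab, reluu, wgt_fm hcost hK.le hB]
    rw [Sym2.eq_swap, hab, Sym2.eq_swap, hua]
    ring
  rw [Fintype.sum_prod_type, Fintype.sum_prod_type]
  simp only [hτ]
  rw [Finset.sum_add_distrib, energy]
  simp
  ring

end Gadget3

set_option linter.unusedSectionVars false

section Gadget4
variable {U : Type} [Fintype U] [DecidableEq U] {m : ℕ}
variable (nx : Equiv.Perm (Pl U m))

theorem rel_fm (X : U → Bool) (y : Wv U m) : rel X (fm y) = fm (rel X y) := by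
  rcases y with ⟨d, k⟩
  have : (flp d).1.1 = d.1.1 := rfl
  cases k <;> by_cases h : X d.1.1 = true <;> simp [rel_apply, relFun, h, fm, this, rot_flp]

theorem fm_mem_tourOf (X : U → Bool) (z : Wv U m) : s(z, fm z) ∈ tourEdges (tourOf nx X) := by
  obtain ⟨⟨⟨τ, s⟩, k⟩, rfl⟩ := (rel X).surjective z
  rw [← rel_fm, mem_tourOf]
  cases s <;> cases k
  · exact ⟨((τ, false), Kd.u), rfl⟩
  · exact ⟨((τ, false), Kd.b), Sym2.eq_swap⟩
  · exact ⟨((τ, false), Kd.b), rfl⟩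
  · exact ⟨((τ, false), Kd.u), Sym2.eq_swap⟩
  · exact ⟨((τ, true), Kd.a), rfl⟩
  · exact ⟨((τ, true), Kd.a), Sym2.eq_swap⟩

theorem diff_le (X X' : U → Bool) (v : U) (h : ∀ v', v' ≠ v → X v' = X' v') :
    (tourEdges (tourOf nx X) \ tourEdges (tourOf nx X')).card ≤ 4 * (m + 1) := by
  classical
  let F : Wv U m → Sym2 (Wv U m) := fun y => s(rel X y, rel X (tmpl nx y))
  let f1 : Fin (m + 1) → Wv U m := fun l => (((v, l), false), Kd.a)
  let f2 : Fin (m + 1) → Wv U m := fun l => (((v, l), true), Kd.u)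
  let f3 : Fin (m + 1) → Wv U m := fun l => (((v, l), true), Kd.b)
  let f4 : Fin (m + 1) → Wv U m := fun l => ((nx.symm (v, l), true), Kd.b)
  have hsub : tourEdges (tourOf nx X) \ tourEdges (tourOf nx X') ⊆
      (univ.image (F ∘ f1) ∪ univ.image (F ∘ f2)) ∪
        (univ.image (F ∘ f3) ∪ univ.image (F ∘ f4)) := by
    intro e he
    obtain ⟨he1, he2⟩ := Finset.mem_sdiff.1 he
    obtain ⟨y, rfl⟩ := (mem_tourOf nx X e).1 he1
    have hsame : ∀ z : Wv U m, z.1.1.1 ≠ v → rel X z = rel X' z := by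
      intro z hz
      simp only [rel_apply, relFun, h _ hz]
    by_cases hz : y.1.1.1 = v
    · rcases y with ⟨⟨⟨v', l⟩, s⟩, k⟩
      simp only at hz
      subst hz
      cases s <;> cases k
      · exfalso
        apply he2
        have : tmpl nx (((v', l), false), Kd.u) = fm (((v', l), false), Kd.u) := rfl
        rw [this, rel_fm]
        exact fm_mem_tourOf _ _ _
      · simp only [mem_union, mem_image, mem_univ, true_and]
        exact Or.inl (Or.inl ⟨l, rfl⟩)
      · exfalso
        apply he2
        have : tmpl nx (((v', l), false), Kd.b) = fm (((v', l), false), Kd.b) := rfl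
        rw [this, rel_fm]
        exact fm_mem_tourOf _ _ _
      · simp only [mem_union, mem_image, mem_univ, true_and]
        exact Or.inl (Or.inr ⟨l, rfl⟩)
      · exfalso
        apply he2
        have : tmpl nx (((v', l), true), Kd.a) = fm (((v', l), true), Kd.a) := rfl
        rw [this, rel_fm]
        exact fm_mem_tourOf _ _ _
      · simp only [mem_union, mem_image, mem_univ, true_and]
        exact Or.inr (Or.inl ⟨l, rfl⟩)
    · by_cases hz2 : (tmpl nx y).1.1.1 = v
      · rcases y with ⟨⟨τ, s⟩, k⟩
        cases s <;> cases k <;> try exact absurd hz2 hz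
        simp only [mem_union, mem_image, mem_univ, true_and]
        refine Or.inr (Or.inr ⟨(nx τ).2, ?_⟩)
        have h1 : (nx τ).1 = v := hz2
        have h2 : (v, (nx τ).2) = nx τ := by rw [← h1]
        simp only [Function.comp, f4, h2, Equiv.symm_apply_apply, F]
      · exfalso
        apply he2
        rw [hsame _ hz, hsame _ hz2]
        exact (mem_tourOf nx X' _).2 ⟨y, rfl⟩
  refine (card_le_card hsub).trans ?_
  refine (card_union_le _ _).trans ?_
  have c1 := card_union_le (univ.image (F ∘ f1)) (univ.image (F ∘ f2))
  have c2 := card_union_le (univ.image (F ∘ f3)) (univ.image (F ∘ f4))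
  have d : ∀ f : Fin (m + 1) → Sym2 (Wv U m), (univ.image f).card ≤ m + 1 := by
    intro f
    refine card_image_le.trans ?_
    simp
  have d1 := d (F ∘ f1)
  have d2 := d (F ∘ f2)
  have d3 := d (F ∘ f3)
  have d4 := d (F ∘ f4)
  omega

/-- Compatibility of an edge with an assignment. -/
def Qc (X : U → Bool) (x y : Wv U m) : Prop :=
  match x.2, y.2 with
  | Kd.u, _ => True
  | Kd.a, Kd.u => X x.1.1.1 = false
  | Kd.b, Kd.u => X x.1.1.1 = true
  | Kd.a, _ => x.1 ≠ y.1 → X x.1.1.1 = true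
  | Kd.b, _ => x.1 ≠ y.1 → X x.1.1.1 = false

theorem Qc_of_mem (X : U → Bool) (x y : Wv U m) (h : s(x, y) ∈ tourEdges (tourOf nx X)) :
    Qc X x y := by
  have key : ∀ z, Qc X (rel X z) (rel X (tmpl nx z)) ∧ Qc X (rel X (tmpl nx z)) (rel X z) := by
    rintro ⟨⟨τ, s⟩, k⟩
    cases s <;> cases k <;> by_cases h1 : X τ.1 = true <;> by_cases h2 : X (nx τ).1 = true <;>
      simp [rel_apply, relFun, tmpl, h1, h2, Qc]
  obtain ⟨z, hz⟩ := (mem_tourOf nx X _).1 h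
  rcases Sym2.eq_iff.1 hz with ⟨rfl, rfl⟩ | ⟨rfl, rfl⟩
  · exact (key z).1
  · exact (key z).2

theorem diff_ge (hnx : ∀ x y : Pl U m, ∃ n : ℕ, (nx ^ n) x = y)
    (X X' : U → Bool) (v v' : U) (hvv : v ≠ v') (h : X v ≠ X' v)
    (h' : X v' ≠ X' v') :
    6 * (m + 1) ≤ (tourEdges (tourOf nx X) \ tourEdges (tourOf nx X')).card := by
  classical
  let F : Wv U m → Sym2 (Wv U m) := fun y => s(rel X y, rel X (tmpl nx y))
  let G : Pl U m × Kd → Wv U m := fun q => ((q.1, decide (q.2 ≠ Kd.a)), q.2)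
  let S : Finset (Pl U m × Kd) := (({v, v'} : Finset U) ×ˢ univ) ×ˢ univ
  have hS : S.card = 6 * (m + 1) := by
    have h3 : Fintype.card Kd = 3 := rfl
    simp only [S, card_product, card_univ, Fintype.card_fin, h3, card_pair hvv]
    ring
  have hG : Function.Injective G := by
    rintro ⟨τ, k⟩ ⟨τ', k'⟩ hq
    simp only [G, Prod.mk.injEq] at hq
    rw [hq.1.1, hq.2]
  have hc : 3 ≤ Fintype.card (Wv U m) := by
    rw [card_Wv]
    have : 0 < Fintype.card (Pl U m) := Fintype.card_pos_iff.2 ⟨(v, 0)⟩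
    omega
  have hF : Function.Injective F := by
    intro y y' hy
    apply (rel X).injective
    apply isTour_edge_inj (tourOf_isTour nx hnx (v, 0) X) hc
    simpa only [tourOf_rel] using hy
  have hsub : S.image (F ∘ G) ⊆ tourEdges (tourOf nx X) \ tourEdges (tourOf nx X') := by
    intro e he
    obtain ⟨⟨τ, k⟩, hq, rfl⟩ := Finset.mem_image.1 he
    have hτ : X τ.1 ≠ X' τ.1 := by
      simp only [S, mem_product, mem_insert, mem_singleton, mem_univ, and_true] at hq
      rcases hq with hq | hq <;> rw [hq] <;> assumption
    refine Finset.mem_sdiff.2 ⟨(mem_tourOf nx X _).2 ⟨_, rfl⟩, fun hm => ?_⟩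
    have hm2 : s(rel X (tmpl nx (G (τ, k))), rel X (G (τ, k))) ∈ tourEdges (tourOf nx X') := by
      rw [Sym2.eq_swap]; exact hm
    have q1 := Qc_of_mem nx X' _ _ hm
    have q2 := Qc_of_mem nx X' _ _ hm2
    have hh : X' τ.1 = !(X τ.1) := by
      revert hτ
      cases X τ.1 <;> cases X' τ.1 <;> simp
    by_cases h1 : X τ.1 = true <;> by_cases h2 : X (nx τ).1 = true <;> cases k <;>
      simp [G, rel_apply, relFun, tmpl, h1, h2, Qc, hh] at q1 q2
  rw [← hS, ← card_image_of_injective S (hF.comp hG)]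
  exact card_le_card hsub

/-- The reduction: improving swaps correspond to improving flips. -/
theorem reduction (k : ℕ) (hk1 : 4 * (m + 1) ≤ k) (hk2 : k < 6 * (m + 1))
    (hnx : ∀ x y : Pl U m, ∃ n : ℕ, (nx ^ n) x = y) (hp : 0 < Fintype.card (Pl U m))
    (cost : Pl U m → Bool → Bool → ℝ) (hcost : ∀ τ x y, 0 ≤ cost τ x y)
    (Inv : (U → Bool) → Prop) (rank : (U → Bool) → ℕ) (X₀ : U → Bool) (hX₀ : Inv X₀)
    (hstep : ∀ X v, Inv X → energy nx cost (Function.update X v (!X v)) < energy nx cost X →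
      Inv (Function.update X v (!X v)) ∧ rank X ≤ rank (Function.update X v (!X v)) + 1)
    (hpos : ∀ X, Inv X → 0 < rank X →
      ∃ v, energy nx cost (Function.update X v (!X v)) < energy nx cost X) :
    ∃ (w : Sym2 (Fin (6 * Fintype.card (Pl U m))) → ℝ)
      (τ₀ : Equiv.Perm (Fin (6 * Fintype.card (Pl U m)))),
      (∀ e, 0 ≤ w e) ∧ IsTour τ₀ ∧
        ∀ l, MaximalImprovingSwapSeq w k τ₀ l → rank X₀ ≤ l.length := by
  obtain ⟨t₀⟩ : Nonempty (Pl U m) := Fintype.card_pos_iff.1 hp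
  set p := Fintype.card (Pl U m) with hpdef
  let S : ℝ := ∑ τ : Pl U m, (cost τ true true + cost τ true false + cost τ false true +
    cost τ false false)
  have hc1 : ∀ τ x y, cost τ x y ≤ cost τ true true + cost τ true false + cost τ false true +
      cost τ false false := by
    intro τ x y
    have h1 := hcost τ true true
    have h2 := hcost τ true false
    have h3 := hcost τ false true
    have h4 := hcost τ false false
    cases x <;> cases y <;> linarith
  have hc0 : ∀ τ, 0 ≤ cost τ true true + cost τ true false + cost τ false true +
      cost τ false false := fun τ => (hcost τ true true).trans (hc1 τ _ _)
  have hES : ∀ X, energy nx cost X ≤ S := fun X => Finset.sum_le_sum fun τ _ => hc1 τ _ _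
  have hcS : ∀ τ x y, cost τ x y ≤ S := fun τ x y => (hc1 τ x y).trans
    (Finset.single_le_sum (f := fun τ => cost τ true true + cost τ true false + cost τ false true +
      cost τ false false) (fun τ _ => hc0 τ) (mem_univ τ))
  have hS0 : 0 ≤ S := (hcost t₀ true true).trans (hcS t₀ true true)
  let K : ℝ := S + 1
  let Bg : ℝ := (3 * p + 1) * K
  have hK : 0 < K := by positivity
  have hp1 : (1 : ℝ) ≤ p := by exact_mod_cast hp
  have hKB : K ≤ Bg := by
    have : (0:ℝ) ≤ 3 * p * K := by positivity
    simp only [Bg]; linarith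
  have hcost2 : ∀ τ x y, cost τ x y + K ≤ Bg := by
    intro τ x y
    have h1 := hcS τ x y
    have h2 : K ≤ p * K := le_mul_of_one_le_left hK.le hp1
    have h3 : S ≤ K := by simp [K]
    simp only [Bg]; nlinarith
  let w₀ := wgt nx cost K Bg
  have hcard : Fintype.card (Wv U m) = 6 * p := card_Wv
  let e : Wv U m ≃ Fin (6 * p) := Fintype.equivFinOfCardEq hcard
  have hWX : ∀ X, tourWeight w₀ (tourOf nx X) = 3 * p * K + energy nx cost X :=
    fun X => weight_tourOf hcost hcost2 hK hKB hp hnx X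
  have hlt : ∀ X, tourWeight w₀ (tourOf nx X) < (3 * p + 1) * K := by
    intro X
    rw [hWX]
    have := hES X
    have : S < K := by simp [K]
    linarith
  have hTour := tourOf_isTour nx hnx t₀
  have hwe : ∀ σ σ' : Equiv.Perm (Wv U m), tourEdges σ = tourEdges σ' →
      tourWeight w₀ σ = tourWeight w₀ σ' := by
    intro σ σ' h
    rw [tourWeight, tourWeight, h]
  let R : Equiv.Perm (Wv U m) → (U → Bool) → Prop :=
    fun σ X => tourEdges σ = tourEdges (tourOf nx X) ∧ Inv X
  have A1 : ∀ σ X, R σ X → ∀ σ', ImprovingKSwap w₀ k σ σ' →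
      ∃ X', R σ' X' ∧ rank X ≤ rank X' + 1 := by
    intro σ X hR σ' hσ'
    obtain ⟨X', hX'⟩ := cheap_tour hcost hK le_rfl hp hnx hσ'.1.1
      (hσ'.2.trans (by rw [hwe _ _ hR.1]; exact hlt X))
    have hE : energy nx cost X' < energy nx cost X := by
      have h1 := hσ'.2
      rw [hwe _ _ hR.1, hwe _ _ hX', hWX, hWX] at h1
      linarith
    have hne : X ≠ X' := by
      rintro rfl
      exact lt_irrefl _ hE
    obtain ⟨v, hv⟩ := Function.ne_iff.1 hne
    have hone : ∀ v', v' ≠ v → X' v' = X v' := by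
      intro v' hv'
      by_contra hv2
      have h1 := diff_ge nx hnx X X' v v' hv'.symm hv (Ne.symm hv2)
      have h2 := hσ'.1.2
      rw [hR.1, hX'] at h2
      omega
    have hX'2 : X' = Function.update X v (!X v) := by
      funext v'
      by_cases h : v' = v
      · subst h
        rw [Function.update_self]
        revert hv
        cases X v' <;> cases X' v' <;> simp
      · rw [Function.update_of_ne h, hone v' h]
    rw [hX'2] at hE
    obtain ⟨h1, h2⟩ := hstep X v hR.2 hE
    rw [← hX'2] at h1 h2
    exact ⟨X', ⟨hX', h1⟩, h2⟩
  have A2 : ∀ σ X, R σ X → 0 < rank X → ∃ σ', ImprovingKSwap w₀ k σ σ' := by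
    intro σ X hR hr
    obtain ⟨v, hv⟩ := hpos X hR.2 hr
    refine ⟨tourOf nx (Function.update X v (!X v)), ⟨hTour _, ?_⟩, ?_⟩
    · rw [hR.1]
      refine (diff_le nx _ _ v ?_).trans hk1
      intro v' hv'
      rw [Function.update_of_ne hv']
    · rw [hwe _ _ hR.1, hWX, hWX]
      linarith
  refine ⟨fun x => w₀ ((symEquiv e).symm x), e.permCongr (tourOf nx X₀),
    fun x => wgt_nonneg hcost hK.le hKB _, isTour_permCongr e (hTour X₀), fun l hl => ?_⟩
  refine length_ge_rank _ k (fun σ X => R (e.permCongr.symm σ) X) rank ?_ ?_ l _ X₀ ?_ hl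
  · intro σ X hR σ' hσ'
    refine A1 _ X hR _ ((improving_permCongr e w₀ k).1 ?_)
    rw [Equiv.apply_symm_apply, Equiv.apply_symm_apply]
    exact hσ'
  · intro σ X hR hr
    obtain ⟨σ', hσ'⟩ := A2 _ X hR hr
    refine ⟨e.permCongr σ', ?_⟩
    have := (improving_permCongr e w₀ k).2 hσ'
    rwa [Equiv.apply_symm_apply] at this
  · simp only [Equiv.symm_apply_apply]
    exact ⟨rfl, hX₀⟩

end Gadget4

set_option linter.unusedSectionVars false

/-! ### The counter instance -/

/-- The six variables of a level. -/
inductive Vr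
  | r
  | p
  | q
  | s
  | t
  | a
  deriving DecidableEq

instance : Fintype Vr := ⟨{Vr.r, Vr.p, Vr.q, Vr.s, Vr.t, Vr.a}, fun x => by cases x <;> decide⟩

theorem sum_Vr {M : Type*} [AddCommMonoid M] (f : Vr → M) :
    ∑ c : Vr, f c = f Vr.r + (f Vr.p + (f Vr.q + (f Vr.s + (f Vr.t + f Vr.a)))) := by
  show ∑ c ∈ {Vr.r, Vr.p, Vr.q, Vr.s, Vr.t, Vr.a}, f c = _
  rw [Finset.sum_insert (by decide), Finset.sum_insert (by decide), Finset.sum_insert (by decide),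
    Finset.sum_insert (by decide), Finset.sum_insert (by decide), Finset.sum_singleton]

section Walk
variable {N q : ℕ}

/-- The variables. -/
abbrev Ux (N : ℕ) := Fin (N + 2) × Vr

/-- Successor of visit 0. -/
def t0 (i : Fin (N + 2)) (c : Vr) : Pl (Ux N) (q + 2) :=
  match c with
  | Vr.r => ((i, Vr.t), 0)
  | Vr.p => ((i, Vr.r), 1)
  | Vr.q => ((i, Vr.p), 0)
  | Vr.s => ((i, Vr.p), 1)
  | Vr.t => ((i, Vr.q), 0)
  | Vr.a => ((i + 1, Vr.a), 1)

/-- Successor of visit 1. -/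
def t1 (i : Fin (N + 2)) (c : Vr) : Pl (Ux N) (q + 2) :=
  match c with
  | Vr.r => ((i + 1, Vr.r), 2)
  | Vr.p => ((i, Vr.t), 1)
  | Vr.q => ((i, Vr.s), 0)
  | Vr.s => ((i, Vr.s), 2)
  | Vr.t => ((i, Vr.a), 0)
  | Vr.a => ((i - 1, Vr.t), 2)

/-- Successor of the last visit. -/
def t2 (i : Fin (N + 2)) (c : Vr) : Pl (Ux N) (q + 2) :=
  match c with
  | Vr.r => ((i - 1, Vr.q), 1)
  | Vr.p => ((i + 1, Vr.a), 2)
  | Vr.q => ((i, Vr.p), 2)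
  | Vr.s => ((i + 1, Vr.r), 0)
  | Vr.t => ((i, Vr.q), 2)
  | Vr.a => ((i - 1, Vr.s), 1)

/-- The successor function of the closed walk. -/
def nxt (x : Pl (Ux N) (q + 2)) : Pl (Ux N) (q + 2) :=
  if x.2 = 0 then t0 x.1.1 x.1.2
  else if x.2 = 1 then t1 x.1.1 x.1.2
  else if x.2 = Fin.last (q + 2) then t2 x.1.1 x.1.2
  else (x.1, x.2 + 1)

/-- Reachability along the walk. -/
def Rch (x y : Pl (Ux N) (q + 2)) : Prop := ∃ n : ℕ, nxt^[n] x = y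

theorem Rch.rfl' (x : Pl (Ux N) (q + 2)) : Rch x x := ⟨0, rfl⟩

theorem Rch.trans {x y z : Pl (Ux N) (q + 2)} (h : Rch x y) (h' : Rch y z) : Rch x z := by
  obtain ⟨n, rfl⟩ := h
  obtain ⟨n', rfl⟩ := h'
  exact ⟨n' + n, Function.iterate_add_apply _ _ _ _⟩

theorem Rch.one (x : Pl (Ux N) (q + 2)) : Rch x (nxt x) := ⟨1, rfl⟩

theorem fin10 : (1 : Fin (q + 2 + 1)) ≠ 0 := by
  intro h
  have := congrArg Fin.val h
  simp at this

theorem val2 : ((2 : Fin (q + 2 + 1)) : ℕ) = 2 := by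
  show 2 % (q + 2 + 1) = 2
  exact Nat.mod_eq_of_lt (by omega)

theorem val1 : ((1 : Fin (q + 2 + 1)) : ℕ) = 1 := by
  show 1 % (q + 2 + 1) = 1
  exact Nat.mod_eq_of_lt (by omega)

theorem s0 (i : Fin (N + 2)) (c : Vr) :
    Rch (((i, c), 0) : Pl (Ux N) (q + 2)) (t0 i c) := by
  have := Rch.one (((i, c), 0) : Pl (Ux N) (q + 2))
  simpa [nxt] using this

theorem s1 (i : Fin (N + 2)) (c : Vr) :
    Rch (((i, c), 1) : Pl (Ux N) (q + 2)) (t1 i c) := by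
  have h := Rch.one (((i, c), 1) : Pl (Ux N) (q + 2))
  have h2 : nxt (((i, c), 1) : Pl (Ux N) (q + 2)) = t1 i c := by
    unfold nxt
    rw [if_neg (by exact fin10), if_pos rfl]
  rwa [h2] at h

theorem loopStep (v : Ux N) (n : ℕ) (h2 : 2 ≤ n) (hn : n + 1 < q + 2 + 1) :
    Rch ((v, ⟨n, by omega⟩) : Pl (Ux N) (q + 2)) (v, ⟨n + 1, hn⟩) := by
  have h := Rch.one ((v, ⟨n, by omega⟩) : Pl (Ux N) (q + 2))
  have h3 : nxt ((v, ⟨n, by omega⟩) : Pl (Ux N) (q + 2)) = (v, ⟨n + 1, hn⟩) := by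
    have e0 : (⟨n, by omega⟩ : Fin (q + 2 + 1)) ≠ 0 := by
      intro h; have := congrArg Fin.val h; simp at this; omega
    have e1 : (⟨n, by omega⟩ : Fin (q + 2 + 1)) ≠ 1 := by
      intro h; have := congrArg Fin.val h; rw [val1] at this; simp at this; omega
    have e2 : (⟨n, by omega⟩ : Fin (q + 2 + 1)) ≠ Fin.last (q + 2) := by
      intro h; have := congrArg Fin.val h; simp at this; omega
    unfold nxt
    rw [if_neg e0, if_neg e1, if_neg e2]
    refine Prod.ext rfl ?_
    ext
    rw [Fin.val_add_one_of_lt]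
    exact lt_of_le_of_ne (Fin.le_last _) e2
  rwa [h3] at h

theorem loopUp (v : Ux N) (n d : ℕ) (h2 : 2 ≤ n) (hn : n + d < q + 2 + 1) :
    Rch ((v, ⟨n, by omega⟩) : Pl (Ux N) (q + 2)) (v, ⟨n + d, hn⟩) := by
  induction d with
  | zero => exact Rch.rfl' _
  | succ d ih => exact (ih (by omega)).trans (loopStep v (n + d) (by omega) hn)

theorem loopA (v : Ux N) (l : Fin (q + 2 + 1)) (hl : 2 ≤ l.val) :
    Rch ((v, 2) : Pl (Ux N) (q + 2)) (v, l) := by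
  have h := loopUp (q := q) v 2 (l.val - 2) le_rfl (by omega)
  have e1 : (⟨2, by omega⟩ : Fin (q + 2 + 1)) = 2 := by ext; rw [val2]
  have e2 : (⟨2 + (l.val - 2), by omega⟩ : Fin (q + 2 + 1)) = l := by ext; simp; omega
  rwa [e1, e2] at h

theorem loopB (i : Fin (N + 2)) (c : Vr) (l : Fin (q + 2 + 1)) (hl : 2 ≤ l.val) :
    Rch (((i, c), l) : Pl (Ux N) (q + 2)) (t2 i c) := by
  have h := loopUp (q := q) (i, c) l.val (q + 2 - l.val) hl (by omega)
  have e2 : (⟨l.val + (q + 2 - l.val), by omega⟩ : Fin (q + 2 + 1)) = Fin.last (q + 2) := by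
    ext; simp; omega
  rw [e2] at h
  refine Rch.trans h ?_
  have h := Rch.one (((i, c), Fin.last (q + 2)) : Pl (Ux N) (q + 2))
  have h2 : nxt (((i, c), Fin.last (q + 2)) : Pl (Ux N) (q + 2)) = t2 i c := by
    unfold nxt
    have e0 : Fin.last (q + 2) ≠ 0 := by
      intro h; have := congrArg Fin.val h; simp at this
    have e1 : Fin.last (q + 2) ≠ 1 := by
      intro h; have := congrArg Fin.val h; rw [val1] at this; simp at this
    rw [if_neg e0, if_neg e1, if_pos rfl]
  rwa [h2] at h

theorem loopC (i : Fin (N + 2)) (c : Vr) :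
    Rch (((i, c), 2) : Pl (Ux N) (q + 2)) (t2 i c) := loopB i c 2 (by rw [val2])

/-- Start of the block of a level. -/
abbrev st (i : Fin (N + 2)) : Pl (Ux N) (q + 2) := ((i, Vr.r), 0)

/-- Both reachability from the start of the block `i` and to the start of the next block. -/
theorem block (i : Fin (N + 2)) :
    ∀ x ∈ ([((i, Vr.r), 0), ((i, Vr.t), 0), ((i, Vr.q), 0), ((i, Vr.p), 0), ((i, Vr.r), 1),
      ((i + 1, Vr.r), 2), ((i, Vr.q), 1), ((i, Vr.s), 0), ((i, Vr.p), 1), ((i, Vr.t), 1),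
      ((i, Vr.a), 0), ((i + 1, Vr.a), 1), ((i, Vr.t), 2), ((i, Vr.q), 2), ((i, Vr.p), 2),
      ((i + 1, Vr.a), 2), ((i, Vr.s), 1), ((i, Vr.s), 2)] : List (Pl (Ux N) (q + 2))),
      Rch (st i) x ∧ Rch x (st (i + 1)) := by
  have e1 : i + 1 - 1 = i := add_sub_cancel_right _ _
  have a1 : Rch (((i, Vr.r), 0) : Pl (Ux N) (q + 2)) ((i, Vr.t), 0) := s0 i Vr.r
  have a2 : Rch (((i, Vr.t), 0) : Pl (Ux N) (q + 2)) ((i, Vr.q), 0) := s0 i Vr.t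
  have a3 : Rch (((i, Vr.q), 0) : Pl (Ux N) (q + 2)) ((i, Vr.p), 0) := s0 i Vr.q
  have a4 : Rch (((i, Vr.p), 0) : Pl (Ux N) (q + 2)) ((i, Vr.r), 1) := s0 i Vr.p
  have a5 : Rch (((i, Vr.r), 1) : Pl (Ux N) (q + 2)) ((i + 1, Vr.r), 2) := s1 i Vr.r
  have a6 : Rch (((i + 1, Vr.r), 2) : Pl (Ux N) (q + 2)) ((i, Vr.q), 1) := by
    have := loopC (q := q) (i + 1) Vr.r
    simpa only [t2, e1] using this
  have a7 : Rch (((i, Vr.q), 1) : Pl (Ux N) (q + 2)) ((i, Vr.s), 0) := s1 i Vr.q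
  have a8 : Rch (((i, Vr.s), 0) : Pl (Ux N) (q + 2)) ((i, Vr.p), 1) := s0 i Vr.s
  have a9 : Rch (((i, Vr.p), 1) : Pl (Ux N) (q + 2)) ((i, Vr.t), 1) := s1 i Vr.p
  have a10 : Rch (((i, Vr.t), 1) : Pl (Ux N) (q + 2)) ((i, Vr.a), 0) := s1 i Vr.t
  have a11 : Rch (((i, Vr.a), 0) : Pl (Ux N) (q + 2)) ((i + 1, Vr.a), 1) := s0 i Vr.a
  have a12 : Rch (((i + 1, Vr.a), 1) : Pl (Ux N) (q + 2)) ((i, Vr.t), 2) := by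
    have := s1 (q := q) (i + 1) Vr.a
    simpa only [t1, e1] using this
  have a13 : Rch (((i, Vr.t), 2) : Pl (Ux N) (q + 2)) ((i, Vr.q), 2) := loopC i Vr.t
  have a14 : Rch (((i, Vr.q), 2) : Pl (Ux N) (q + 2)) ((i, Vr.p), 2) := loopC i Vr.q
  have a15 : Rch (((i, Vr.p), 2) : Pl (Ux N) (q + 2)) ((i + 1, Vr.a), 2) := loopC i Vr.p
  have a16 : Rch (((i + 1, Vr.a), 2) : Pl (Ux N) (q + 2)) ((i, Vr.s), 1) := by
    have := loopC (q := q) (i + 1) Vr.a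
    simpa only [t2, e1] using this
  have a17 : Rch (((i, Vr.s), 1) : Pl (Ux N) (q + 2)) ((i, Vr.s), 2) := s1 i Vr.s
  have a18 : Rch (((i, Vr.s), 2) : Pl (Ux N) (q + 2)) (st (i + 1)) := loopC i Vr.s
  have b18 := a18
  have b17 := a17.trans b18
  have b16 := a16.trans b17
  have b15 := a15.trans b16
  have b14 := a14.trans b15
  have b13 := a13.trans b14
  have b12 := a12.trans b13
  have b11 := a11.trans b12
  have b10 := a10.trans b11
  have b9 := a9.trans b10
  have b8 := a8.trans b9
  have b7 := a7.trans b8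
  have b6 := a6.trans b7
  have b5 := a5.trans b6
  have b4 := a4.trans b5
  have b3 := a3.trans b4
  have b2 := a2.trans b3
  have b1 := a1.trans b2
  have c2 := a1.trans a2
  have c3 := c2.trans a3
  have c4 := c3.trans a4
  have c5 := c4.trans a5
  have c6 := c5.trans a6
  have c7 := c6.trans a7
  have c8 := c7.trans a8
  have c9 := c8.trans a9
  have c10 := c9.trans a10
  have c11 := c10.trans a11
  have c12 := c11.trans a12
  have c13 := c12.trans a13
  have c14 := c13.trans a14
  have c15 := c14.trans a15
  have c16 := c15.trans a16
  have c17 := c16.trans a17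
  simp only [List.forall_mem_cons, List.not_mem_nil, false_imp_iff, implies_true, and_true]
  exact ⟨⟨Rch.rfl' _, b1⟩, ⟨a1, b2⟩, ⟨c2, b3⟩, ⟨c3, b4⟩, ⟨c4, b5⟩, ⟨c5, b6⟩, ⟨c6, b7⟩, ⟨c7, b8⟩,
    ⟨c8, b9⟩, ⟨c9, b10⟩, ⟨c10, b11⟩, ⟨c11, b12⟩, ⟨c12, b13⟩, ⟨c13, b14⟩, ⟨c14, b15⟩, ⟨c15, b16⟩,
    ⟨c16, b17⟩, ⟨c17, b18⟩⟩

theorem blockMem (x : Pl (Ux N) (q + 2)) : ∃ i, Rch (st i) x ∧ Rch x (st (i + 1)) := by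
  rcases x with ⟨⟨i, c⟩, l⟩
  have e1 : i - 1 + 1 = i := sub_add_cancel _ _
  have B := block (q := q) i
  have B' := block (q := q) (i - 1)
  rw [e1] at B'
  simp only [List.forall_mem_cons, List.not_mem_nil, false_imp_iff, implies_true, and_true] at B B'
  by_cases h0 : l = 0
  · subst h0
    refine ⟨i, ?_⟩
    cases c <;> simp only [B, and_self]
  by_cases h1 : l = 1
  · subst h1
    by_cases hc : c = Vr.a
    · subst hc
      refine ⟨i - 1, ?_⟩
      rw [e1]
      simp only [B', and_self]
    · refine ⟨i, ?_⟩
      cases c <;> first | exact absurd rfl hc | simp only [B, and_self]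
  have hl : 2 ≤ l.val := by
    have e0 : l.val ≠ 0 := fun h => h0 (Fin.ext h)
    have e1 : l.val ≠ 1 := fun h => h1 (Fin.ext (by rw [h, val1]))
    omega
  have L1 := loopA (q := q) (i, c) l hl
  have L2 := loopB (q := q) i c l hl
  by_cases hc : c = Vr.r ∨ c = Vr.a
  · refine ⟨i - 1, ?_⟩
    rw [e1]
    rcases hc with rfl | rfl
    · refine ⟨Rch.trans ?_ L1, Rch.trans L2 ?_⟩
      · simp only [B']
      · simp only [t2, B']
    · refine ⟨Rch.trans ?_ L1, Rch.trans L2 ?_⟩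
      · simp only [B']
      · simp only [t2, B']
  · refine ⟨i, Rch.trans ?_ L1, Rch.trans L2 ?_⟩
    · cases c <;> first
        | exact absurd (Or.inl rfl) hc
        | exact absurd (Or.inr rfl) hc
        | simp only [B]
    · cases c <;> first
        | exact absurd (Or.inl rfl) hc
        | exact absurd (Or.inr rfl) hc
        | exact Rch.rfl' _
        | (simp only [t2, B]; done)

theorem st_next (i : Fin (N + 2)) : Rch (st i : Pl (Ux N) (q + 2)) (st (i + 1)) :=
  (block (q := q) i _ (List.mem_cons_self)).2

theorem st_from0 (i : Fin (N + 2)) : Rch (st 0 : Pl (Ux N) (q + 2)) (st i) := by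
  induction i using Fin.induction with
  | zero => exact Rch.rfl' _
  | succ i ih =>
    refine ih.trans ?_
    have := st_next (q := q) i.castSucc
    rwa [Fin.coeSucc_eq_succ] at this

theorem st_to0 (i : Fin (N + 2)) : Rch (st i : Pl (Ux N) (q + 2)) (st 0) := by
  induction i using Fin.reverseInduction with
  | last =>
    have := st_next (q := q) (Fin.last (N + 1))
    rwa [Fin.last_add_one] at this
  | cast i ih =>
    refine Rch.trans ?_ ih
    have := st_next (q := q) i.castSucc
    rwa [Fin.coeSucc_eq_succ] at this

theorem Rch_all (x y : Pl (Ux N) (q + 2)) : Rch x y := by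
  obtain ⟨i, -, hi⟩ := blockMem x
  obtain ⟨j, hj, -⟩ := blockMem y
  exact hi.trans ((st_to0 _).trans ((st_from0 _).trans hj))

theorem nxt_bij : Function.Bijective (nxt : Pl (Ux N) (q + 2) → Pl (Ux N) (q + 2)) := by
  rw [← Finite.surjective_iff_bijective]
  intro y
  obtain ⟨n, hn⟩ := Rch_all (nxt y) y
  refine ⟨nxt^[n] y, ?_⟩
  rw [← Function.iterate_succ_apply' nxt n y, Function.iterate_succ_apply, hn]

/-- The walk as a permutation. -/
noncomputable def nxE (N q : ℕ) : Equiv.Perm (Pl (Ux N) (q + 2)) := Equiv.ofBijective nxt nxt_bij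

theorem nxE_reach (x y : Pl (Ux N) (q + 2)) : ∃ n : ℕ, (nxE N q ^ n) x = y := by
  obtain ⟨n, hn⟩ := Rch_all x y
  refine ⟨n, ?_⟩
  rw [← hn, ← Equiv.Perm.iterate_eq_pow]
  rfl

end Walk

set_option linter.unusedSectionVars false

/-! ### The energy of the counter instance -/

/-- Coefficients of a level. -/
structure Co where
  rp : ℤ
  rt : ℤ
  pq : ℤ
  ps : ℤ
  pt : ℤ
  qs : ℤ
  qt : ℤ
  ta : ℤ
  rr' : ℤ
  qr' : ℤ
  sr' : ℤ
  pa' : ℤ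
  ta' : ℤ
  aa' : ℤ
  hr : ℤ
  hp : ℤ
  hq : ℤ
  hs : ℤ
  ht : ℤ
  ha : ℤ

/-- Boolean as integer. -/
def bz (x : Bool) : ℤ := cond x 1 0

/-- The value of a level, depending on its own state and the state of the next level. -/
def lev (e : Co) (A B : Vr → Bool) : ℤ :=
  e.rp * bz (A Vr.r) * bz (A Vr.p) + e.rt * bz (A Vr.r) * bz (A Vr.t)
  + e.pq * bz (A Vr.p) * bz (A Vr.q) + e.ps * bz (A Vr.p) * bz (A Vr.s)
  + e.pt * bz (A Vr.p) * bz (A Vr.t) + e.qs * bz (A Vr.q) * bz (A Vr.s)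
  + e.qt * bz (A Vr.q) * bz (A Vr.t) + e.ta * bz (A Vr.t) * bz (A Vr.a)
  + e.rr' * bz (A Vr.r) * bz (B Vr.r) + e.qr' * bz (A Vr.q) * bz (B Vr.r)
  + e.sr' * bz (A Vr.s) * bz (B Vr.r) + e.pa' * bz (A Vr.p) * bz (B Vr.a)
  + e.ta' * bz (A Vr.t) * bz (B Vr.a) + e.aa' * bz (A Vr.a) * bz (B Vr.a)
  + e.hr * bz (A Vr.r) + e.hp * bz (A Vr.p) + e.hq * bz (A Vr.q) + e.hs * bz (A Vr.s)
  + e.ht * bz (A Vr.t) + e.ha * bz (A Vr.a)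

/-- Field of a variable within its own level. -/
def fo (e : Co) (A : Vr → Bool) (r' a' : Bool) (c : Vr) : ℤ :=
  match c with
  | Vr.r => e.hr + e.rp * bz (A Vr.p) + e.rt * bz (A Vr.t) + e.rr' * bz r'
  | Vr.p => e.hp + e.rp * bz (A Vr.r) + e.pq * bz (A Vr.q) + e.ps * bz (A Vr.s)
      + e.pt * bz (A Vr.t) + e.pa' * bz a'
  | Vr.q => e.hq + e.pq * bz (A Vr.p) + e.qs * bz (A Vr.s) + e.qt * bz (A Vr.t) + e.qr' * bz r'
  | Vr.s => e.hs + e.ps * bz (A Vr.p) + e.qs * bz (A Vr.q) + e.sr' * bz r'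
  | Vr.t => e.ht + e.rt * bz (A Vr.r) + e.pt * bz (A Vr.p) + e.qt * bz (A Vr.q)
      + e.ta * bz (A Vr.a) + e.ta' * bz a'
  | Vr.a => e.ha + e.ta * bz (A Vr.t) + e.aa' * bz a'

/-- Field of a variable coming from the parent level. -/
def fc (e : Co) (P : Vr → Bool) (c : Vr) : ℤ :=
  match c with
  | Vr.r => e.rr' * bz (P Vr.r) + e.qr' * bz (P Vr.q) + e.sr' * bz (P Vr.s)
  | Vr.a => e.pa' * bz (P Vr.p) + e.ta' * bz (P Vr.t) + e.aa' * bz (P Vr.a)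
  | _ => 0

/-- Sign of a flip. -/
def sg (x : Bool) : ℤ := cond x (-1) 1

theorem bz_not (x : Bool) : bz (!x) = bz x + sg x := by cases x <;> rfl

theorem lev_own (e : Co) (A B : Vr → Bool) (c : Vr) :
    lev e (Function.update A c (!A c)) B - lev e A B
      = sg (A c) * fo e A (B Vr.r) (B Vr.a) c := by
  cases c <;> simp [lev, fo, Function.update, bz_not] <;> ring

theorem lev_child (e : Co) (P A : Vr → Bool) (c : Vr) :
    lev e P (Function.update A c (!A c)) - lev e P A = sg (A c) * fc e P c := by
  cases c <;> simp [lev, fc, Function.update, bz_not] <;> ring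

section Flip
variable {N : ℕ}

/-- The state of a level. -/
def lv (X : Ux N → Bool) (i : Fin (N + 2)) : Vr → Bool := fun c => X (i, c)

theorem lv_upd (X : Ux N → Bool) (i : Fin (N + 2)) (c : Vr) (b : Bool) :
    lv (Function.update X (i, c) b) i = Function.update (lv X i) c b := by
  funext d
  by_cases h : d = c
  · subst h; simp [lv]
  · simp [lv, Function.update, h]

theorem lv_upd_ne (X : Ux N → Bool) (i j : Fin (N + 2)) (c : Vr) (b : Bool) (h : j ≠ i) :
    lv (Function.update X (i, c) b) j = lv X j := by
  funext d
  simp [lv, Function.update, h]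

theorem fin_sub_ne (i : Fin (N + 2)) : i - 1 ≠ i := by
  intro h
  have : i = i + 1 := by rw [sub_eq_iff_eq_add] at h; exact h
  simp at this

theorem fin_add_ne (i : Fin (N + 2)) : i + 1 ≠ i := by
  intro h
  simp at h

theorem flip_sum (T : Fin (N + 2) → (Vr → Bool) → (Vr → Bool) → ℤ) (X : Ux N → Bool)
    (i : Fin (N + 2)) (c : Vr) (b : Bool) :
    ∑ j, T j (lv (Function.update X (i, c) b) j) (lv (Function.update X (i, c) b) (j + 1))
      - ∑ j, T j (lv X j) (lv X (j + 1))
    = (T i (Function.update (lv X i) c b) (lv X (i + 1)) - T i (lv X i) (lv X (i + 1)))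
      + (T (i - 1) (lv X (i - 1)) (Function.update (lv X i) c b)
        - T (i - 1) (lv X (i - 1)) (lv X i)) := by
  rw [← Finset.sum_sub_distrib]
  rw [Fintype.sum_eq_add i (i - 1) (fin_sub_ne i).symm]
  · rw [lv_upd, lv_upd_ne _ _ _ _ _ (fin_add_ne i), lv_upd_ne _ _ _ _ _ (fin_sub_ne i),
      sub_add_cancel, lv_upd]
  · rintro j ⟨h1, h2⟩
    have h3 : j + 1 ≠ i := fun h => h2 (by rw [← h, add_sub_cancel_right])
    rw [lv_upd_ne _ _ _ _ _ h1, lv_upd_ne _ _ _ _ _ h3, sub_self]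

/-- Total value. -/
def tot (co : Fin (N + 2) → Co) (X : Ux N → Bool) : ℤ :=
  ∑ j, lev (co j) (lv X j) (lv X (j + 1))

/-- Total field. -/
def fld (co : Fin (N + 2) → Co) (X : Ux N → Bool) (i : Fin (N + 2)) (c : Vr) : ℤ :=
  fo (co i) (lv X i) (X (i + 1, Vr.r)) (X (i + 1, Vr.a)) c + fc (co (i - 1)) (lv X (i - 1)) c

theorem tot_flip (co : Fin (N + 2) → Co) (X : Ux N → Bool) (i : Fin (N + 2)) (c : Vr) :
    tot co (Function.update X (i, c) (!X (i, c))) - tot co X = sg (X (i, c)) * fld co X i c := by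
  unfold tot
  rw [flip_sum (fun j => lev (co j))]
  have h : X (i, c) = lv X i c := rfl
  rw [h, lev_own, lev_child, fld]
  simp only [lv]
  ring

end Flip

section Cost
variable {N q : ℕ}

/-- Integer cost of a cell of the walk. -/
def cst (co : Fin (N + 2) → Co) (τ : Pl (Ux N) (q + 2)) (x y : Bool) : ℤ :=
  if τ.2 = 0 then
    match τ.1.2 with
    | Vr.r => -((co τ.1.1).hr * bz x + (co τ.1.1).rt * bz x * bz y)
    | Vr.p => -((co τ.1.1).hp * bz x + (co τ.1.1).rp * bz x * bz y)
    | Vr.q => -((co τ.1.1).hq * bz x + (co τ.1.1).pq * bz x * bz y)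
    | Vr.s => -((co τ.1.1).hs * bz x + (co τ.1.1).ps * bz x * bz y)
    | Vr.t => -((co τ.1.1).ht * bz x + (co τ.1.1).qt * bz x * bz y)
    | Vr.a => -((co τ.1.1).ha * bz x + (co τ.1.1).aa' * bz x * bz y)
  else if τ.2 = 1 then
    match τ.1.2 with
    | Vr.r => -((co τ.1.1).rr' * bz x * bz y)
    | Vr.p => -((co τ.1.1).pt * bz x * bz y)
    | Vr.q => -((co τ.1.1).qs * bz x * bz y)
    | Vr.s => 0
    | Vr.t => -((co τ.1.1).ta * bz x * bz y)
    | Vr.a => -((co (τ.1.1 - 1)).ta' * bz x * bz y)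
  else if τ.2 = Fin.last (q + 2) then
    match τ.1.2 with
    | Vr.r => -((co (τ.1.1 - 1)).qr' * bz x * bz y)
    | Vr.p => -((co τ.1.1).pa' * bz x * bz y)
    | Vr.q => 0
    | Vr.s => -((co τ.1.1).sr' * bz x * bz y)
    | Vr.t => 0
    | Vr.a => 0
  else 0

theorem sum3 (f : Fin (q + 2 + 1) → ℤ)
    (h : ∀ l, l ≠ 0 → l ≠ 1 → l ≠ Fin.last (q + 2) → f l = 0) :
    ∑ l, f l = f 0 + (f 1 + f (Fin.last (q + 2))) := by
  have e1 : Fin.last (q + 2) ≠ 1 := by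
    intro h; have := congrArg Fin.val h; rw [val1] at this; simp at this
  have e0 : Fin.last (q + 2) ≠ 0 := by
    intro h; have := congrArg Fin.val h; simp at this
  have e : ∑ l, f l = ∑ l ∈ {0, 1, Fin.last (q + 2)}, f l := by
    symm
    apply Finset.sum_subset (Finset.subset_univ _)
    intro l _ hl
    simp only [mem_insert, mem_singleton, not_or] at hl
    exact h l hl.1 hl.2.1 hl.2.2
  rw [e, Finset.sum_insert, Finset.sum_insert, Finset.sum_singleton]
  · simp only [mem_singleton]; exact e1.symm
  · simp only [mem_insert, mem_singleton, not_or]; exact ⟨fin10.symm, e0.symm⟩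

theorem nxE_apply (x : Pl (Ux N) (q + 2)) : nxE N q x = nxt x := rfl

theorem cst_sum (co : Fin (N + 2) → Co) (X : Ux N → Bool) :
    ∑ τ : Pl (Ux N) (q + 2), cst co τ (X τ.1) (X (nxE N q τ).1) = - tot co X := by
  have e1 : Fin.last (q + 2) ≠ 1 := by
    intro h; have := congrArg Fin.val h; rw [val1] at this; simp at this
  have e0 : Fin.last (q + 2) ≠ 0 := by
    intro h; have := congrArg Fin.val h; simp at this
  have key : ∀ i c, ∑ l, cst co (((i, c), l) : Pl (Ux N) (q + 2)) (X (i, c))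
      (X (nxE N q ((i, c), l)).1)
      = cst co (((i, c), 0) : Pl (Ux N) (q + 2)) (X (i, c)) (X (t0 (q := q) i c).1)
      + (cst co (((i, c), 1) : Pl (Ux N) (q + 2)) (X (i, c)) (X (t1 (q := q) i c).1)
      + cst co (((i, c), Fin.last _) : Pl (Ux N) (q + 2)) (X (i, c)) (X (t2 (q := q) i c).1)) := by
    intro i c
    rw [sum3]
    · have h0 : nxE N q ((i, c), 0) = t0 i c := by
        rw [nxE_apply]
        unfold nxt; rw [if_pos rfl]
      have h1 : nxE N q ((i, c), 1) = t1 i c := by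
        rw [nxE_apply]
        unfold nxt; rw [if_neg (by exact fin10), if_pos rfl]
      have h2 : nxE N q ((i, c), Fin.last _) = t2 i c := by
        rw [nxE_apply]
        unfold nxt; rw [if_neg e0, if_neg e1, if_pos rfl]
      rw [h0, h1, h2]
    · intro l h0 h1 h2
      unfold cst
      rw [if_neg h0, if_neg h1, if_neg h2]
  rw [Fintype.sum_prod_type, Fintype.sum_prod_type]
  simp only [key]
  let G : Fin (N + 2) → ℤ := fun j =>
    -((co j).ta' * bz (X (j + 1, Vr.a)) * bz (X (j, Vr.t)))
    - ((co j).qr' * bz (X (j + 1, Vr.r)) * bz (X (j, Vr.q)))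
  have hG : ∑ i, G (i - 1) = ∑ i, G i := Equiv.sum_comp (Equiv.subRight (1 : Fin (N + 2))) G
  have : ∀ i, ∑ c, (cst co (((i, c), 0) : Pl (Ux N) (q + 2)) (X (i, c)) (X (t0 (q := q) i c).1)
      + (cst co (((i, c), 1) : Pl (Ux N) (q + 2)) (X (i, c)) (X (t1 (q := q) i c).1)
      + cst co (((i, c), Fin.last _) : Pl (Ux N) (q + 2)) (X (i, c)) (X (t2 (q := q) i c).1)))
      = (- lev (co i) (lv X i) (lv X (i + 1)) - G i) + G (i - 1) := by
    intro i
    rw [sum_Vr]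
    simp only [cst, if_true, if_neg (fin10 (q := q)), if_neg e0, if_neg e1, t0, t1, t2, G,
      sub_add_cancel, lev, lv]
    ring
  rw [Finset.sum_congr rfl (fun i _ => this i), Finset.sum_add_distrib, hG,
    ← Finset.sum_add_distrib]
  simp only [sub_add_cancel, tot, Finset.sum_neg_distrib]

/-- Shift making all the costs nonnegative. -/
def shift (N q : ℕ) (co : Fin (N + 2) → Co) : ℤ :=
  ∑ z : (Pl (Ux N) (q + 2)) × Bool × Bool, |cst co z.1 z.2.1 z.2.2|

/-- Real costs. -/
noncomputable def rcost (co : Fin (N + 2) → Co) (τ : Pl (Ux N) (q + 2)) (x y : Bool) : ℝ :=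
  ((cst co τ x y + shift N q co : ℤ) : ℝ)

theorem rcost_nonneg (co : Fin (N + 2) → Co) (τ : Pl (Ux N) (q + 2)) (x y : Bool) :
    0 ≤ rcost co τ x y := by
  unfold rcost
  have h : |cst co τ x y| ≤ shift N q co :=
    Finset.single_le_sum (f := fun z : (Pl (Ux N) (q + 2)) × Bool × Bool => |cst co z.1 z.2.1 z.2.2|)
      (fun _ _ => abs_nonneg _) (Finset.mem_univ (τ, x, y))
  have := neg_abs_le (cst co τ x y)
  exact_mod_cast (by linarith : 0 ≤ cst co τ x y + shift N q co)

theorem energy_eq (co : Fin (N + 2) → Co) (X : Ux N → Bool) :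
    energy (nxE N q) (rcost co) X
      = ((- tot co X + (Fintype.card (Pl (Ux N) (q + 2))) * shift N q co : ℤ) : ℝ) := by
  unfold energy rcost
  rw [← Int.cast_sum, Finset.sum_add_distrib, cst_sum, Finset.sum_const, Finset.card_univ,
    nsmul_eq_mul]

theorem energy_lt (co : Fin (N + 2) → Co) (X : Ux N → Bool) (i : Fin (N + 2)) (c : Vr) :
    energy (nxE N q) (rcost co) (Function.update X (i, c) (!X (i, c)))
      < energy (nxE N q) (rcost co) X ↔ 0 < sg (X (i, c)) * fld co X i c := by
  rw [energy_eq, energy_eq, Int.cast_lt, ← tot_flip]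
  constructor <;> intro h <;> linarith

end Cost

set_option linter.unusedSectionVars false

/-! ### The dynamics of the counter -/

/-- Coefficients with `g`-part. -/
def genCo (g : ℤ) : Co where
  rp := g
  rt := 20 * g - 2
  pq := 20 * g - 6
  ps := -20 * g
  pt := -20 * g + 6
  qs := 20 * g - 8
  qt := 20 * g
  ta := 3
  rr' := 20 * g - 11
  qr' := -20 * g + 11
  sr' := 20 * g - 10
  pa' := 2
  ta' := -1
  aa' := 2
  hr := -40 * g + 12
  hp := -g - 1
  hq := -4
  hs := -20 * g + 9
  ht := -20 * g - 3
  ha := -3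

/-- The bottom level. -/
def botCo : Co where
  rp := 0
  rt := 7
  pq := 0
  ps := 0
  pt := 0
  qs := 0
  qt := 0
  ta := 5
  rr' := 0
  qr' := 0
  sr' := 0
  pa' := 0
  ta' := 0
  aa' := 0
  hr := -8
  hp := 0
  hq := 0
  hs := 0
  ht := -6
  ha := -3

/-- Bit of a state code. The bits are `r p q s t a`, from the lowest one. -/
def bitOf (n : ℕ) (c : Vr) : Bool :=
  match c with
  | Vr.r => n.testBit 0
  | Vr.p => n.testBit 1
  | Vr.q => n.testBit 2
  | Vr.s => n.testBit 3
  | Vr.t => n.testBit 4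
  | Vr.a => n.testBit 5

/-- State codes of the cycle of a level. -/
def cod (k : Fin 20) : ℕ :=
  match k.val with
  | 0 => 0
  | 1 => 1
  | 2 => 1
  | 3 => 1
  | 4 => 3
  | 5 => 7
  | 6 => 7
  | 7 => 7
  | 8 => 23
  | 9 => 21
  | 10 => 29
  | 11 => 29
  | 12 => 29
  | 13 => 61
  | 14 => 60
  | 15 => 44
  | 16 => 40
  | 17 => 32
  | 18 => 32
  | 19 => 32
  | _ => 0

/-- State of the level in the cycle. -/
def own (k : Fin 20) (c : Vr) : Bool := bitOf (cod k) c

/-- Expected value of the variable `r` of the child. -/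
def rr (k : Fin 20) : Bool := Nat.testBit 260156 k.val

/-- Expected value of the variable `a` of the child. -/
def ra (k : Fin 20) : Bool := Nat.testBit 520312 k.val

/-- State codes of the cycle of the bottom level. -/
def bcod (k : Fin 6) : ℕ :=
  match k.val with
  | 0 => 0
  | 1 => 1
  | 2 => 17
  | 3 => 49
  | 4 => 48
  | 5 => 32
  | _ => 0

/-- State of the bottom level in the cycle. -/
def bown (k : Fin 6) (c : Vr) : Bool := bitOf (bcod k) c

/-- Field at a middle level. -/
def midF (g : ℤ) (k₁ k₂ : Fin 20) (c : Vr) : ℤ :=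
  fo (genCo g) (own k₂) (rr k₂) (ra k₂) c + fc (genCo (2 * g)) (own k₁) c

/-- Field at the top level. -/
def topF (g : ℤ) (k₂ : Fin 20) (c : Vr) : ℤ := fo (genCo g) (own k₂) (rr k₂) (ra k₂) c

/-- Field at the bottom level. -/
def botF (k₁ : Fin 20) (k : Fin 6) (c : Vr) : ℤ :=
  fo botCo (bown k) false false c + fc (genCo 1) (own k₁) c

/-- Improving flip, as a property of slope and value at `1`. -/
abbrev impr (b : Bool) (a v : ℤ) : Prop := 0 ≤ sg b * a ∧ 0 < sg b * v

/-- Non-improving flip, as a property of slope and value at `1`. -/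
abbrev nimpr (b : Bool) (a v : ℤ) : Prop := sg b * a ≤ 0 ∧ sg b * v ≤ 0

/-- The rank of a level. -/
def crank (A : Vr → Bool) (r' : Bool) : ℤ :=
  if A Vr.r && !A Vr.a then
    (if !A Vr.p && !A Vr.q && !r' then 2 else if A Vr.s && r' then 0 else 1)
  else 0

/-- The rank of the bottom level. -/
def brank (A : Vr → Bool) : ℤ := if A Vr.r && !A Vr.a then 1 else 0

/-- New code of the parent. -/
def par (k : Fin 20) (c : Vr) : Fin 20 := if c = Vr.r ∨ c = Vr.a then k + 1 else k

/-- Flip of one variable in a level. -/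
abbrev vflip (A : Vr → Bool) (c : Vr) : Vr → Bool := Function.update A c (!A c)

theorem chk_mid : ∀ k₁ k₂ : Fin 20, rr k₁ = own k₂ Vr.r → ra k₁ = own k₂ Vr.a → ∀ c : Vr,
    nimpr (own k₂ c) (midF 1 k₁ k₂ c - midF 0 k₁ k₂ c) (midF 1 k₁ k₂ c) ∨
    ((∀ d, vflip (own k₂) c d = own (k₂ + 1) d) ∧ rr (k₂ + 1) = rr k₂ ∧ ra (k₂ + 1) = ra k₂ ∧
      (∀ d, own (par k₁ c) d = own k₁ d) ∧ rr (par k₁ c) = own (k₂ + 1) Vr.r ∧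
      ra (par k₁ c) = own (k₂ + 1) Vr.a ∧
      2 * crank (own k₁) (rr k₁) + crank (own k₂) (rr k₂) ≤
        2 * crank (own (par k₁ c)) (rr (par k₁ c)) + crank (own (k₂ + 1)) (rr (k₂ + 1))) := by
  decide +kernel

theorem chk_top : ∀ k₂ : Fin 20, own k₂ Vr.r = true → ∀ c : Vr, c ≠ Vr.r →
    nimpr (own k₂ c) (topF 1 k₂ c - topF 0 k₂ c) (topF 1 k₂ c) ∨
    ((∀ d, vflip (own k₂) c d = own (k₂ + 1) d) ∧ rr (k₂ + 1) = rr k₂ ∧ ra (k₂ + 1) = ra k₂ ∧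
      crank (own k₂) (rr k₂) ≤ crank (own (k₂ + 1)) (rr (k₂ + 1))) := by
  decide +kernel

theorem chk_bot : ∀ k₁ : Fin 20, ∀ k : Fin 6, rr k₁ = bown k Vr.r → ra k₁ = bown k Vr.a →
    ∀ c : Vr, sg (bown k c) * botF k₁ k c ≤ 0 ∨
    ((∀ d, vflip (bown k) c d = bown (k + 1) d) ∧
      (∀ d, own (par k₁ c) d = own k₁ d) ∧ rr (par k₁ c) = bown (k + 1) Vr.r ∧
      ra (par k₁ c) = bown (k + 1) Vr.a ∧
      crank (own k₁) (rr k₁) + brank (bown k) ≤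
        crank (own (par k₁ c)) (rr (par k₁ c)) + brank (bown (k + 1)) + 1) := by
  decide +kernel

/-- States waiting for the child. -/
abbrev waitc (k : Fin 20) : Prop := k = 1 ∨ k = 5 ∨ k = 10 ∨ k = 17

theorem ex_mid : ∀ k₁ k₂ : Fin 20, rr k₁ = own k₂ Vr.r → ra k₁ = own k₂ Vr.a →
    rr k₂ = ra k₂ → own k₂ Vr.r ≠ own k₂ Vr.a →
    waitc k₂ ∨ ∃ c : Vr, impr (own k₂ c) (midF 1 k₁ k₂ c - midF 0 k₁ k₂ c) (midF 1 k₁ k₂ c) := by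
  decide +kernel

theorem ex_top : ∀ k₂ : Fin 20, own k₂ Vr.r = true →
    rr k₂ = ra k₂ → own k₂ Vr.r ≠ own k₂ Vr.a →
    waitc k₂ ∨ ∃ c : Vr, c ≠ Vr.r ∧
      impr (own k₂ c) (topF 1 k₂ c - topF 0 k₂ c) (topF 1 k₂ c) := by
  decide +kernel

theorem ex_child : ∀ k₁ k₂ : Fin 20, rr k₁ = own k₂ Vr.r → ra k₁ = own k₂ Vr.a →
    waitc k₁ → own k₂ Vr.r = own k₂ Vr.a →
    impr (own k₂ Vr.r) (midF 1 k₁ k₂ Vr.r - midF 0 k₁ k₂ Vr.r) (midF 1 k₁ k₂ Vr.r) := by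
  decide +kernel

theorem ex_botchild : ∀ k₁ : Fin 20, ∀ k : Fin 6, rr k₁ = bown k Vr.r → ra k₁ = bown k Vr.a →
    waitc k₁ → bown k Vr.r = bown k Vr.a → 0 < sg (bown k Vr.r) * botF k₁ k Vr.r := by
  decide +kernel

theorem ex_bot : ∀ k₁ : Fin 20, ∀ k : Fin 6, rr k₁ = bown k Vr.r → ra k₁ = bown k Vr.a →
    bown k Vr.r ≠ bown k Vr.a → ∃ c, 0 < sg (bown k c) * botF k₁ k c := by
  decide +kernel

theorem midF_lin (g : ℤ) (k₁ k₂ : Fin 20) (c : Vr) :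
    midF g k₁ k₂ c = (g - 1) * (midF 1 k₁ k₂ c - midF 0 k₁ k₂ c) + midF 1 k₁ k₂ c := by
  cases c <;> simp only [midF, fo, fc, genCo] <;> ring

theorem topF_lin (g : ℤ) (k₂ : Fin 20) (c : Vr) :
    topF g k₂ c = (g - 1) * (topF 1 k₂ c - topF 0 k₂ c) + topF 1 k₂ c := by
  cases c <;> simp only [topF, fo, genCo] <;> ring

theorem impr_lin {b : Bool} {a v : ℤ} (h : impr b a v) (g : ℤ) (hg : 1 ≤ g) :
    0 < sg b * ((g - 1) * a + v) := by
  have := mul_nonneg (sub_nonneg.2 hg) h.1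
  have := h.2
  nlinarith

theorem nimpr_lin {b : Bool} {a v : ℤ} (h : nimpr b a v) (g : ℤ) (hg : 1 ≤ g) :
    sg b * ((g - 1) * a + v) ≤ 0 := by
  have := mul_nonneg (sub_nonneg.2 hg) (neg_nonneg.2 h.1)
  have := h.2
  nlinarith

set_option linter.unusedSectionVars false

section Counter
variable {N : ℕ}

/-- Scale of a level. -/
def gz (N : ℕ) (i : Fin (N + 2)) : ℤ := 2 ^ (N - i.val)

theorem gz_pos (i : Fin (N + 2)) : 1 ≤ gz N i := one_le_pow₀ (by norm_num)

/-- Coefficients of the levels. -/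
def coN (N : ℕ) (i : Fin (N + 2)) : Co :=
  if i = Fin.last (N + 1) then botCo
  else if i = 0 then { genCo (gz N i) with hr := 0 } else genCo (gz N i)

theorem pred_val (i : Fin (N + 2)) (h : i ≠ 0) : (i - 1).val = i.val - 1 := by
  exact Fin.val_sub_one_of_ne_zero h

theorem val_ne (i : Fin (N + 2)) (h : i ≠ 0) : i.val ≠ 0 := fun h' => h (Fin.ext h')

theorem pred_ne_last (i : Fin (N + 2)) (h : i ≠ 0) : i - 1 ≠ Fin.last (N + 1) := by
  intro h'
  have := congrArg Fin.val h'
  rw [pred_val i h] at this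
  have := val_ne i h
  have := i.isLt
  simp at *
  omega

theorem zero_ne_last : (0 : Fin (N + 2)) ≠ Fin.last (N + 1) := by
  intro h
  have := congrArg Fin.val h
  simp at this

theorem zero_pred : (0 : Fin (N + 2)) - 1 = Fin.last (N + 1) := by
  rw [sub_eq_iff_eq_add, Fin.last_add_one]

theorem gz_pred (i : Fin (N + 2)) (h : i ≠ 0) (h' : i ≠ Fin.last (N + 1)) :
    gz N (i - 1) = 2 * gz N i := by
  unfold gz
  rw [pred_val i h]
  have h1 := val_ne i h
  have h2 : i.val ≠ N + 1 := fun e => h' (Fin.ext e)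
  have h3 := i.isLt
  have : N - (i.val - 1) = (N - i.val) + 1 := by omega
  rw [this, pow_succ, mul_comm]

theorem gz_last : gz N (Fin.last (N + 1) - 1) = 1 := by
  unfold gz
  rw [pred_val _ zero_ne_last.symm]
  simp

theorem fc_co (i : Fin (N + 2)) (h : i ≠ Fin.last (N + 1)) (P : Vr → Bool) (c : Vr) :
    fc (coN N i) P c = fc (genCo (gz N i)) P c := by
  unfold coN
  rw [if_neg h]
  split_ifs
  · cases c <;> rfl
  · rfl

theorem fc_last (P : Vr → Bool) (c : Vr) : fc (coN N (Fin.last (N + 1))) P c = 0 := by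
  unfold coN
  rw [if_pos rfl]
  cases c <;> simp [fc, botCo]

theorem fo_mid (i : Fin (N + 2)) (h0 : i ≠ 0) (h : i ≠ Fin.last (N + 1)) :
    coN N i = genCo (gz N i) := by
  unfold coN
  rw [if_neg h, if_neg h0]

theorem fo_top (A : Vr → Bool) (r' a' : Bool) (c : Vr) (hc : c ≠ Vr.r) :
    fo (coN N 0) A r' a' c = fo (genCo (gz N 0)) A r' a' c := by
  unfold coN
  rw [if_neg zero_ne_last, if_pos rfl]
  cases c <;> first | exact absurd rfl hc | rfl

theorem bz_nonneg (b : Bool) : 0 ≤ bz b := by cases b <;> simp [bz]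

theorem fo_top_r (A : Vr → Bool) (r' a' : Bool) : 0 ≤ fo (coN N 0) A r' a' Vr.r := by
  unfold coN
  rw [if_neg zero_ne_last, if_pos rfl]
  have hg := gz_pos (0 : Fin (N + 2))
  have h1 := bz_nonneg (A Vr.p)
  have h2 := bz_nonneg (A Vr.t)
  have h3 := bz_nonneg r'
  simp only [fo, genCo]
  have e1 := mul_nonneg (show 0 ≤ gz N 0 by linarith) h1
  have e2 := mul_nonneg (show 0 ≤ 20 * gz N 0 - 2 by linarith) h2
  have e3 := mul_nonneg (show 0 ≤ 20 * gz N 0 - 11 by linarith) h3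
  linarith

theorem fo_bot (A : Vr → Bool) (r' a' : Bool) (c : Vr) :
    fo (coN N (Fin.last (N + 1))) A r' a' c = fo botCo A false false c := by
  unfold coN
  rw [if_pos rfl]
  cases c <;> simp [fo, botCo]

/-- A level is in the state `k` of the cycle. -/
def At (A B : Vr → Bool) (k : Fin 20) : Prop := A = own k ∧ B Vr.r = rr k ∧ B Vr.a = ra k

/-- Local invariant. -/
def OkL (i : Fin (N + 2)) (A B : Vr → Bool) : Prop :=
  (i ≠ Fin.last (N + 1) → ∃ k, At A B k) ∧
  (i = Fin.last (N + 1) → ∃ k, A = bown k) ∧ (i = 0 → A Vr.r = true)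

/-- Invariant of the dynamics. -/
def InvN (X : Ux N → Bool) : Prop := ∀ i, OkL i (lv X i) (lv X (i + 1))

/-- Rank contribution of a level. -/
def Tr (i : Fin (N + 2)) (A B : Vr → Bool) : ℤ :=
  if i = Fin.last (N + 1) then brank A else gz N i * crank A (B Vr.r)

/-- Integer rank. -/
def rkZ (X : Ux N → Bool) : ℤ := ∑ i, Tr i (lv X i) (lv X (i + 1))

theorem fld_mid (X : Ux N → Bool) (i : Fin (N + 2)) (h0 : i ≠ 0) (h : i ≠ Fin.last (N + 1))
    (k₁ k₂ : Fin 20) (h1 : lv X (i - 1) = own k₁) (h2 : At (lv X i) (lv X (i + 1)) k₂) (c : Vr) :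
    fld (coN N) X i c = midF (gz N i) k₁ k₂ c := by
  obtain ⟨h2, hr, ha⟩ := h2
  unfold fld midF
  rw [fc_co _ (pred_ne_last i h0), fo_mid i h0 h, h1, h2, gz_pred i h0 h]
  have hr : X (i + 1, Vr.r) = rr k₂ := hr
  have ha : X (i + 1, Vr.a) = ra k₂ := ha
  rw [hr, ha]

theorem fld_top (X : Ux N → Bool)
    (k₂ : Fin 20) (h2 : At (lv X 0) (lv X (0 + 1)) k₂) (c : Vr) (hc : c ≠ Vr.r) :
    fld (coN N) X 0 c = topF (gz N 0) k₂ c := by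
  obtain ⟨h2, hr, ha⟩ := h2
  unfold fld topF
  rw [zero_pred, fc_last, fo_top _ _ _ _ hc, h2]
  have hr : X (0 + 1, Vr.r) = rr k₂ := hr
  have ha : X (0 + 1, Vr.a) = ra k₂ := ha
  rw [hr, ha, add_zero]

theorem fld_bot (X : Ux N → Bool) (k₁ : Fin 20) (k : Fin 6)
    (h1 : lv X (Fin.last (N + 1) - 1) = own k₁)
    (h2 : lv X (Fin.last (N + 1)) = bown k) (c : Vr) :
    fld (coN N) X (Fin.last (N + 1)) c = botF k₁ k c := by
  unfold fld botF
  rw [fc_co _ (pred_ne_last _ zero_ne_last.symm), fo_bot, h1, h2, gz_last]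

theorem step_of_local (X : Ux N → Bool) (i : Fin (N + 2)) (c : Vr) (hX : InvN X)
    (h1 : OkL i (vflip (lv X i) c) (lv X (i + 1)))
    (h2 : OkL (i - 1) (lv X (i - 1)) (vflip (lv X i) c))
    (h3 : Tr i (lv X i) (lv X (i + 1)) + Tr (i - 1) (lv X (i - 1)) (lv X i)
      ≤ Tr i (vflip (lv X i) c) (lv X (i + 1)) + Tr (i - 1) (lv X (i - 1)) (vflip (lv X i) c) + 1) :
    InvN (Function.update X (i, c) (!X (i, c))) ∧
      rkZ X ≤ rkZ (Function.update X (i, c) (!X (i, c))) + 1 := by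
  have e : X (i, c) = lv X i c := rfl
  constructor
  · intro j
    rw [e]
    by_cases hj : j = i
    · subst hj
      rw [lv_upd, lv_upd_ne _ _ _ _ _ (fin_add_ne j)]
      exact h1
    by_cases hj2 : j + 1 = i
    · subst hj2
      rw [add_sub_cancel_right] at h2
      rw [lv_upd, lv_upd_ne _ _ _ _ _ (fin_add_ne j).symm]
      exact h2
    · rw [lv_upd_ne _ _ _ _ _ hj, lv_upd_ne _ _ _ _ _ hj2]
      exact hX j
  · have := flip_sum Tr X i c (!X (i, c))
    unfold rkZ
    rw [e] at *
    unfold vflip at h3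
    linarith

theorem par_at {k₁ k₂ : Fin 20} {c : Vr} {A P : Vr → Bool} (hP : P = own k₁)
    (hA : ∀ d, A d = own k₂ d)
    (h4 : ∀ d, own (par k₁ c) d = own k₁ d) (h5 : rr (par k₁ c) = own k₂ Vr.r)
    (h6 : ra (par k₁ c) = own k₂ Vr.a) : At P A (par k₁ c) := by
  refine ⟨?_, ?_, ?_⟩
  · rw [hP]; funext d; exact (h4 d).symm
  · rw [hA, h5]
  · rw [hA, h6]

theorem stepN (X : Ux N → Bool) (i : Fin (N + 2)) (c : Vr) (hX : InvN X)
    (himp : 0 < sg (X (i, c)) * fld (coN N) X i c) :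
    InvN (Function.update X (i, c) (!X (i, c))) ∧
      rkZ X ≤ rkZ (Function.update X (i, c) (!X (i, c))) + 1 := by
  have hv : X (i, c) = lv X i c := rfl
  rw [hv] at himp
  have hl := i.isLt
  by_cases h0 : i = 0
  · subst h0
    have hr0 : lv X 0 Vr.r = true := (hX 0).2.2 rfl
    obtain ⟨k, hk⟩ := (hX 0).1 zero_ne_last
    have hc : c ≠ Vr.r := by
      rintro rfl
      rw [hr0] at himp
      unfold fld at himp
      rw [zero_pred, fc_last] at himp
      have := fo_top_r (N := N) (lv X 0) (X (0 + 1, Vr.r)) (X (0 + 1, Vr.a))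
      simp only [sg, cond_true] at himp
      linarith
    rw [fld_top X k hk c hc] at himp
    obtain ⟨hk1, hk2, hk3⟩ := hk
    rw [hk1] at hr0 himp
    rcases chk_top k hr0 c hc with h | ⟨h1, h2, h3, h4⟩
    · have := nimpr_lin h (gz N 0) (gz_pos _)
      rw [← topF_lin] at this
      linarith
    · have e1 : vflip (lv X 0) c = own (k + 1) := by
        rw [hk1]; funext d; exact h1 d
      apply step_of_local _ _ _ hX
      · rw [e1]
        refine ⟨fun _ => ⟨k + 1, rfl, ?_, ?_⟩, fun h => absurd h zero_ne_last, fun _ => ?_⟩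
        · rw [hk2, h2]
        · rw [hk3, h3]
        · rw [← h1]
          simp only [vflip, Function.update, hc.symm, hr0]
          simp
      · rw [zero_pred]
        refine ⟨fun h => absurd rfl h, fun _ => (hX _).2.1 rfl, fun h => absurd h zero_ne_last.symm⟩
      · rw [zero_pred, e1]
        simp only [Tr, if_pos, if_neg (zero_ne_last (N := N))]
        rw [hk2, hk1]
        have := mul_le_mul_of_nonneg_left h4 (show 0 ≤ gz N 0 by linarith [gz_pos (0 : Fin (N + 2))])
        rw [h2] at this
        linarith
  obtain ⟨k₁, hk₁⟩ := (hX (i - 1)).1 (pred_ne_last i h0)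
  rw [sub_add_cancel] at hk₁
  obtain ⟨hp1, hp2, hp3⟩ := hk₁
  have hroot := (hX (i - 1)).2.2
  by_cases hb : i = Fin.last (N + 1)
  · subst hb
    obtain ⟨k, hk⟩ := (hX (Fin.last (N + 1))).2.1 rfl
    rw [fld_bot X k₁ k hp1 hk] at himp
    rw [hk] at himp hp2 hp3
    rcases chk_bot k₁ k hp2.symm hp3.symm c with h | ⟨h1, h4, h5, h6, h7⟩
    · linarith
    · have e1 : vflip (lv X (Fin.last (N + 1))) c = bown (k + 1) := by
        rw [hk]; funext d; exact h1 d
      apply step_of_local _ _ _ hX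
      · rw [e1]
        exact ⟨fun h => absurd rfl h, fun _ => ⟨k + 1, rfl⟩, fun h => absurd h h0⟩
      · rw [e1]
        refine ⟨fun _ => ⟨par k₁ c, ?_, h5.symm, h6.symm⟩,
          fun h => absurd h (pred_ne_last _ h0), hroot⟩
        rw [hp1]; funext d; exact (h4 d).symm
      · rw [e1]
        simp only [Tr, if_pos, if_neg (pred_ne_last _ h0), gz_last]
        rw [hk, hp1, ← h5, hp2]
        have e2 : own (par k₁ c) = own k₁ := funext h4
        rw [e2] at h7
        linarith
  · obtain ⟨k₂, hk⟩ := (hX i).1 hb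
    rw [fld_mid X i h0 hb k₁ k₂ hp1 hk] at himp
    obtain ⟨hk1, hk2, hk3⟩ := hk
    rw [hk1] at himp hp2 hp3
    rcases chk_mid k₁ k₂ hp2.symm hp3.symm c with h | ⟨h1, h2, h3, h4, h5, h6, h7⟩
    · have := nimpr_lin h (gz N i) (gz_pos _)
      rw [← midF_lin] at this
      linarith
    · have e1 : vflip (lv X i) c = own (k₂ + 1) := by
        rw [hk1]; funext d; exact h1 d
      apply step_of_local _ _ _ hX
      · rw [e1]
        refine ⟨fun _ => ⟨k₂ + 1, rfl, ?_, ?_⟩, fun h => absurd h hb, fun h => absurd h h0⟩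
        · rw [hk2, h2]
        · rw [hk3, h3]
      · rw [e1]
        refine ⟨fun _ => ⟨par k₁ c, ?_, h5.symm, h6.symm⟩,
          fun h => absurd h (pred_ne_last _ h0), hroot⟩
        rw [hp1]; funext d; exact (h4 d).symm
      · rw [e1]
        simp only [Tr, if_neg hb, if_neg (pred_ne_last _ h0), gz_pred i h0 hb]
        rw [hk1, hp1, ← h5, hp2, hk2]
        have e2 : own (par k₁ c) = own k₁ := funext h4
        rw [e2, h2] at h7
        have := mul_le_mul_of_nonneg_left h7 (show 0 ≤ gz N i by linarith [gz_pos i])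
        linarith

theorem eqN (X : Ux N → Bool) (hX : InvN X)
    (hno : ∀ i c, ¬ 0 < sg (X (i, c)) * fld (coN N) X i c) :
    ∀ i, lv X i Vr.r = lv X i Vr.a := by
  intro i
  induction i using Fin.reverseInduction with
  | last =>
    by_contra hne
    obtain ⟨k₁, hp1, hp2, hp3⟩ := (hX (Fin.last (N + 1) - 1)).1 (pred_ne_last _ zero_ne_last.symm)
    rw [sub_add_cancel] at hp2 hp3
    obtain ⟨k, hk⟩ := (hX (Fin.last (N + 1))).2.1 rfl
    rw [hk] at hp2 hp3 hne
    obtain ⟨c, hc⟩ := ex_bot k₁ k hp2.symm hp3.symm hne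
    apply hno (Fin.last (N + 1)) c
    rw [fld_bot X k₁ k hp1 hk]
    have hv : X (Fin.last (N + 1), c) = lv X (Fin.last (N + 1)) c := rfl
    rw [hv, hk]
    exact hc
  | cast i ih =>
    by_contra hne
    rw [← Fin.coeSucc_eq_succ] at ih
    have hil : i.castSucc ≠ Fin.last (N + 1) := Fin.castSucc_ne_last i
    have hi1 : i.castSucc + 1 ≠ 0 := by rw [Fin.coeSucc_eq_succ]; exact Fin.succ_ne_zero i
    generalize i.castSucc = j at *
    obtain ⟨k₂, hk⟩ := (hX j).1 hil
    have hk' := hk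
    obtain ⟨hk1, hk2, hk3⟩ := hk
    have hwait : ¬ waitc k₂ := by
      intro hw
      have hs : j + 1 - 1 = j := add_sub_cancel_right _ _
      by_cases hb : j + 1 = Fin.last (N + 1)
      · obtain ⟨k, hq⟩ := (hX (Fin.last (N + 1))).2.1 rfl
        rw [hb] at hs hk2 hk3 ih
        rw [hq] at hk2 hk3 ih
        have := ex_botchild k₂ k hk2.symm hk3.symm hw ih
        apply hno (Fin.last (N + 1)) Vr.r
        rw [fld_bot X k₂ k (by rw [hs]; exact hk1) hq]
        have hv : X (Fin.last (N + 1), Vr.r) = lv X (Fin.last (N + 1)) Vr.r := rfl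
        rw [hv, hq]
        exact this
      · obtain ⟨k₃, hq⟩ := (hX (j + 1)).1 hb
        have hq' := hq
        obtain ⟨hq1, hq2, hq3⟩ := hq
        rw [hq1] at hk2 hk3 ih
        have := ex_child k₂ k₃ hk2.symm hk3.symm hw ih
        apply hno (j + 1) Vr.r
        rw [fld_mid X (j + 1) hi1 hb k₂ k₃ (by rw [hs]; exact hk1) hq', midF_lin]
        have hv : X (j + 1, Vr.r) = lv X (j + 1) Vr.r := rfl
        rw [hv, hq1]
        exact impr_lin this _ (gz_pos _)
    rw [hk2, hk3] at ih
    rw [hk1] at hne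
    by_cases h0 : j = 0
    · subst h0
      have hr0 : lv X 0 Vr.r = true := (hX 0).2.2 rfl
      rw [hk1] at hr0
      rcases ex_top k₂ hr0 ih hne with h | ⟨c, hc, h⟩
      · exact hwait h
      · apply hno 0 c
        rw [fld_top X k₂ hk' c hc, topF_lin]
        have hv : X (0, c) = lv X 0 c := rfl
        rw [hv, hk1]
        exact impr_lin h _ (gz_pos _)
    · obtain ⟨k₁, hp1, hp2, hp3⟩ := (hX (j - 1)).1 (pred_ne_last _ h0)
      rw [sub_add_cancel, hk1] at hp2 hp3
      rcases ex_mid k₁ k₂ hp2.symm hp3.symm ih hne with h | ⟨c, h⟩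
      · exact hwait h
      · apply hno j c
        rw [fld_mid X j h0 hil k₁ k₂ hp1 hk', midF_lin]
        have hv : X (j, c) = lv X j c := rfl
        rw [hv, hk1]
        exact impr_lin h _ (gz_pos _)

theorem exN (X : Ux N → Bool) (hX : InvN X) (hr : 0 < rkZ X) :
    ∃ i c, 0 < sg (X (i, c)) * fld (coN N) X i c := by
  by_contra hno
  push Not at hno
  have h := eqN X hX (fun i c => not_lt.2 (hno i c))
  have : rkZ X = 0 := by
    unfold rkZ
    apply Finset.sum_eq_zero
    intro i _
    have hi := h i
    unfold Tr brank crank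
    rw [hi]
    cases lv X i Vr.a <;> simp
  omega

/-- Initial state. -/
def startN (N : ℕ) : Ux N → Bool := fun v => decide (v = (0, Vr.r))

theorem start_own : own 1 = fun c => decide (c = Vr.r) := by
  funext c
  revert c
  decide +kernel

theorem start_own0 : own 0 = fun _ => false := by
  funext c
  revert c
  decide +kernel

theorem start_bown : bown 0 = fun _ => false := by
  funext c
  revert c
  decide +kernel

theorem lv_start0 : lv (startN N) 0 = own 1 := by
  rw [start_own]
  funext c
  simp [lv, startN]

theorem lv_start (i : Fin (N + 2)) (h : i ≠ 0) : lv (startN N) i = fun _ => false := by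
  funext c
  simp [lv, startN, h]

theorem start_inv : InvN (startN N) := by
  intro i
  by_cases h : i = 0
  · subst h
    refine ⟨fun _ => ⟨1, lv_start0, ?_, ?_⟩, fun h => absurd h zero_ne_last, fun _ => ?_⟩
    · rw [lv_start _ (fin_add_ne 0)]; decide +kernel
    · rw [lv_start _ (fin_add_ne 0)]; decide +kernel
    · rw [lv_start0]; decide +kernel
  · refine ⟨fun hl => ⟨0, ?_, ?_, ?_⟩, fun _ => ⟨0, ?_⟩, fun h' => absurd h' h⟩
    · rw [lv_start _ h, start_own0]
    · have h1 : i + 1 ≠ 0 := by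
        intro e
        apply hl
        rw [← zero_pred, ← e, add_sub_cancel_right]
      rw [lv_start _ h1]; decide +kernel
    · have h1 : i + 1 ≠ 0 := by
        intro e
        apply hl
        rw [← zero_pred, ← e, add_sub_cancel_right]
      rw [lv_start _ h1]; decide +kernel
    · rw [lv_start _ h, start_bown]

theorem start_rank : rkZ (startN N) = 2 ^ (N + 1) := by
  unfold rkZ
  rw [Fintype.sum_eq_single 0]
  · unfold Tr
    rw [if_neg zero_ne_last, lv_start0, lv_start _ (fin_add_ne 0)]
    have : crank (own 1) false = 2 := by decide +kernel
    rw [this]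
    simp [gz, pow_succ]
  · intro i hi
    unfold Tr brank crank
    rw [lv_start _ hi]
    simp

theorem counter (N r k : ℕ) (hr : 3 ≤ r) (hk1 : 4 * r ≤ k) (hk2 : k < 6 * r) :
    ∃ (w : Sym2 (Fin (36 * r * (N + 2))) → ℝ) (τ₀ : Equiv.Perm (Fin (36 * r * (N + 2)))),
    (∀ e, 0 ≤ w e) ∧ IsTour τ₀ ∧
      ∀ l, MaximalImprovingSwapSeq w k τ₀ l → 2 ^ (N + 1) ≤ l.length := by
  obtain ⟨q, rfl⟩ : ∃ q, r = q + 2 + 1 := ⟨r - 3, by omega⟩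
  have hcV : Fintype.card Vr = 6 := rfl
  have hcard : 6 * Fintype.card (Pl (Ux N) (q + 2)) = 36 * (q + 2 + 1) * (N + 2) := by
    simp only [Fintype.card_prod, Fintype.card_fin, hcV]
    ring
  have := reduction (nxE N q) k hk1 hk2 nxE_reach
    (by
      have : 0 < 36 * (q + 2 + 1) * (N + 2) := by positivity
      omega)
    (rcost (coN N)) (rcost_nonneg (coN N)) InvN (fun X => (rkZ X).toNat) (startN N) start_inv
    (by
      rintro X ⟨i, c⟩ hX hlt
      rw [energy_lt] at hlt
      obtain ⟨h1, h2⟩ := stepN X i c hX hlt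
      refine ⟨h1, ?_⟩
      omega)
    (by
      intro X hX hpos
      obtain ⟨i, c, h⟩ := exN X hX (by omega)
      refine ⟨(i, c), ?_⟩
      rw [energy_lt]
      exact h)
  rw [hcard] at this
  obtain ⟨w, τ₀, h1, h2, h3⟩ := this
  refine ⟨w, τ₀, h1, h2, fun l hl => ?_⟩
  have := h3 l hl
  simp only [start_rank] at this
  have e : ((2 : ℤ) ^ (N + 1)).toNat = 2 ^ (N + 1) := by
    have : ((2 : ℤ) ^ (N + 1)) = ((2 ^ (N + 1) : ℕ) : ℤ) := by push_cast; rfl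
    rw [this, Int.toNat_natCast]
  rwa [e] at this

end Counter

theorem final (k : ℕ) (hk : 13 ≤ k) : TSPKOptAllExp k := by
  obtain ⟨r, hr⟩ : ∃ r, r = k / 4 := ⟨_, rfl⟩
  have hr3 : 3 ≤ r := by omega
  have hr1 : 4 * r ≤ k := by omega
  have hr2 : k < 6 * r := by omega
  have hrpos : (0 : ℝ) < 72 * r := by
    have : (0 : ℝ) < r := by exact_mod_cast (by omega : 0 < r)
    positivity
  refine ⟨(2 : ℝ) ^ ((1 : ℝ) / (72 * r)), Real.one_lt_rpow (by norm_num) (by positivity), ?_⟩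
  intro N
  refine ⟨36 * r * (N + 2), by nlinarith, ?_⟩
  obtain ⟨w, τ₀, h1, h2, h3⟩ := counter N r k hr3 hr1 hr2
  refine ⟨w, τ₀, h1, h2, fun l hl => ?_⟩
  have h4 := h3 l hl
  have h5 : (2 : ℝ) ^ (N + 1) ≤ l.length := by exact_mod_cast h4
  refine le_trans ?_ h5
  rw [← Real.rpow_mul_natCast (by norm_num), ← Real.rpow_natCast]
  apply Real.rpow_le_rpow_of_exponent_le (by norm_num)
  rw [div_mul_eq_mul_div, div_le_iff₀ hrpos]
  push_cast
  have : (0 : ℝ) ≤ r := by positivity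
  have : (0 : ℝ) ≤ N := by positivity
  nlinarith [mul_nonneg ‹(0 : ℝ) ≤ r› this]

/-- TSP/k-Opt has the all-exp property for every k ≥ 13. -/
theorem tsp_kopt_all_exp_of_thirteen_le (k : ℕ) (hk : 13 ≤ k) : TSPKOptAllExp k := by
  exact final k hk
end
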